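/- arXiv:math/0409349 — 2 statements merged into one kernel-verified Lean document; each statement's English description precedes it below -/
import Mathlib

section
/- Let S₀, S₁ and S₂ be three simply connected compact subsets of the plane ℝ² such that the intersection of any two of them is path connected and the intersection S₀ ∩ S₁ ∩ S₂ is nonempty. Then S₀ ∩ S₁ ∩ S₂ is path connected. -/
namespace Helly
open Set Filter Topology

/-- `f` has a continuous logarithm on `Y`. -/
def HasLog (f : ℂ → ℂ) (Y : Set ℂ) : Prop :=
  ∃ g : ℂ → ℂ, ContinuousOn g Y ∧ ∀ w ∈ Y, Complex.exp (g w) = f w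

lemma HasLog.mono {f : ℂ → ℂ} {Y Y' : Set ℂ} (h : HasLog f Y) (hY : Y' ⊆ Y) : HasLog f Y' := by
  obtain ⟨g, hg, he⟩ := h
  exact ⟨g, hg.mono hY, fun w hw => he w (hY hw)⟩

lemma exists_log {A : Type*} [TopologicalSpace A] [SimplyConnectedSpace A]
    [LocallyPathConnectedSpace A] (f : A → ℂ) (hf : Continuous f) (h0 : ∀ a, f a ≠ 0) :
    ∃ g : A → ℂ, Continuous g ∧ ∀ a, Complex.exp (g a) = f a := by
  obtain ⟨a₀⟩ : Nonempty A := inferInstance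
  obtain ⟨F, ⟨-, hF⟩, -⟩ := Complex.isCoveringMapOn_exp.existsUnique_continuousMap_lifts
    (⟨f, hf⟩ : C(A, ℂ)) (a₀ := a₀) (e₀ := Complex.log (f a₀)) (Complex.exp_log (h0 a₀))
    (fun a => by simpa using h0 a)
  exact ⟨F, F.continuous, fun a => congrFun hF a⟩

/-- Two logarithms on a preconnected set differ by a constant. -/
lemma log_unique {A : Type*} [TopologicalSpace A] {Y : Set A} (hY : IsPreconnected Y)
    {g g' : A → ℂ} (hg : ContinuousOn g Y) (hg' : ContinuousOn g' Y)
    (he : ∀ w ∈ Y, Complex.exp (g w) = Complex.exp (g' w)) {p q : A} (hp : p ∈ Y) (hq : q ∈ Y) :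
    g p - g' p = g q - g' q := by
  have key : ∀ w ∈ Y, ∃ n : ℤ, g w - g' w = n * (2 * Real.pi * Complex.I) := by
    intro w hw
    obtain ⟨n, hn⟩ := Complex.exp_eq_exp_iff_exists_int.1 (he w hw)
    exact ⟨n, by rw [hn]; ring⟩
  have hc : ContinuousOn (fun w => g w - g' w) Y := hg.sub hg'
  refine hY.induction₂ (fun a b => g a - g' a = g b - g' b) ?_
    (fun _ _ _ _ _ _ h1 h2 => h1.trans h2) (fun _ _ _ _ h => h.symm) hp hq
  intro a ha
  have h1 := (hc a ha).eventually (Metric.ball_mem_nhds (g a - g' a) (by norm_num : (0:ℝ) < 1))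
  filter_upwards [h1, self_mem_nhdsWithin] with b hb hbY
  obtain ⟨n, hn⟩ := key a ha
  obtain ⟨m, hm⟩ := key b hbY
  rw [hn, hm]
  rw [dist_eq_norm, hn, hm, ← sub_mul, norm_mul] at hb
  have h2 : ‖(2 * Real.pi * Complex.I : ℂ)‖ = 2 * Real.pi := by
    simp [abs_of_pos Real.pi_pos]
  rw [h2] at hb
  have h3 : ‖((m:ℂ) - n)‖ < 1 := by
    have := Real.pi_gt_three
    by_contra hcon
    push Not at hcon
    nlinarith
  have h4 : ‖((m - n : ℤ) : ℂ)‖ < 1 := by push_cast; exact h3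
  rw [Complex.norm_intCast] at h4
  have h5 : m - n = 0 := by
    have : |m - n| < 1 := by exact_mod_cast h4
    exact Int.abs_lt_one_iff.1 this
  have : m = n := by omega
  rw [this]

/-- Tietze extension in the form used here. -/
lemma tietze {Y : Set ℂ} (hY : IsClosed Y) {g : ℂ → ℂ} (hg : ContinuousOn g Y) :
    ∃ G : ℂ → ℂ, Continuous G ∧ EqOn G g Y := by
  obtain ⟨G, hG⟩ := ContinuousMap.exists_restrict_eq hY
    (⟨Y.domRestrict g, hg.domRestrict⟩ : C(Y, ℂ))
  exact ⟨G, G.continuous, fun w hw => DFunLike.congr_fun hG ⟨w, hw⟩⟩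

/-- gluing continuous functions on two closed sets -/
lemma glue {A B : Type*} [TopologicalSpace A] [TopologicalSpace B] {Y1 Y2 : Set A}
    (h1 : IsClosed Y1) (h2 : IsClosed Y2) {g1 g2 : A → B}
    (hg1 : ContinuousOn g1 Y1) (hg2 : ContinuousOn g2 Y2) (h : ∀ w ∈ Y1, w ∈ Y2 → g1 w = g2 w) :
    ∃ g : A → B, ContinuousOn g (Y1 ∪ Y2) ∧ EqOn g g1 Y1 ∧ EqOn g g2 Y2 := by
  classical
  have e1 : EqOn (Y1.piecewise g1 g2) g1 Y1 := fun w hw => by simp [Set.piecewise, hw]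
  have e2 : EqOn (Y1.piecewise g1 g2) g2 Y2 := fun w hw => by
    by_cases hw1 : w ∈ Y1
    · simp [Set.piecewise, hw1, h w hw1 hw]
    · simp [Set.piecewise, hw1]
  refine ⟨Y1.piecewise g1 g2, ?_, e1, e2⟩
  exact (hg1.congr e1).union_of_isClosed (hg2.congr e2) h1 h2

lemma HasLog.congr {f f' : ℂ → ℂ} {Y : Set ℂ} (h : HasLog f Y) (hff : EqOn f' f Y) :
    HasLog f' Y := by
  obtain ⟨g, hg, he⟩ := h
  exact ⟨g, hg, fun w hw => by rw [he w hw, hff hw]⟩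

lemma HasLog.mul {f f' : ℂ → ℂ} {Y : Set ℂ} (h : HasLog f Y) (h' : HasLog f' Y) :
    HasLog (fun w => f w * f' w) Y := by
  obtain ⟨g, hg, he⟩ := h
  obtain ⟨g', hg', he'⟩ := h'
  exact ⟨fun w => g w + g' w, hg.add hg', fun w hw => by rw [Complex.exp_add, he w hw, he' w hw]⟩

lemma HasLog.div {f f' : ℂ → ℂ} {Y : Set ℂ} (h : HasLog f Y) (h' : HasLog f' Y) :
    HasLog (fun w => f w / f' w) Y := by
  obtain ⟨g, hg, he⟩ := h
  obtain ⟨g', hg', he'⟩ := h'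
  exact ⟨fun w => g w - g' w, hg.sub hg', fun w hw => by rw [Complex.exp_sub, he w hw, he' w hw]⟩

lemma hasLog_of_slit {f : ℂ → ℂ} {Y : Set ℂ} (hf : ContinuousOn f Y)
    (h : ∀ w ∈ Y, f w ∈ Complex.slitPlane) : HasLog f Y :=
  ⟨fun w => Complex.log (f w), hf.clog h,
    fun w hw => Complex.exp_log (Complex.slitPlane_ne_zero (h w hw))⟩

lemma hasLog_const {c : ℂ} (hc : c ≠ 0) (Y : Set ℂ) : HasLog (fun _ => c) Y :=
  ⟨fun _ => Complex.log c, continuousOn_const, fun _ _ => Complex.exp_log hc⟩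

lemma hasLog_near_one {f : ℂ → ℂ} {Y : Set ℂ} (hf : ContinuousOn f Y)
    (h : ∀ w ∈ Y, ‖f w - 1‖ < 1) : HasLog f Y := by
  refine hasLog_of_slit hf fun w hw => ?_
  have := Complex.mem_slitPlane_of_norm_lt_one (h w hw)
  simpa using this

lemma hasLog_convex {Y : Set ℂ} (hc : Convex ℝ Y) (hcl : IsClosed Y) {z : ℂ} (hz : z ∉ Y) :
    HasLog (fun w => w - z) Y := by
  obtain ⟨f, u, h1, h2⟩ := RCLike.geometric_hahn_banach_point_closed (𝕜 := ℂ) hc hcl hz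
  set c : ℂ := f 1 with hcdef
  have hf : ∀ w, f w = w * c := by
    intro w
    have := f.map_smul w 1
    simpa using this
  by_cases hne : Y.Nonempty
  · have hc0 : c ≠ 0 := by
      intro h0
      obtain ⟨b, hb⟩ := hne
      have := h2 b hb
      simp only [hf, h0, mul_zero] at h1 this
      linarith
    have l1 : HasLog (fun w => (w - z) * c) Y := by
      refine hasLog_of_slit (by fun_prop) fun w hw => Or.inl ?_
      have := h2 w hw
      simp only [hf, RCLike.re_eq_complex_re] at h1 this
      rw [sub_mul, Complex.sub_re]
      linarith
    exact (l1.div (hasLog_const hc0 Y)).congr fun w _ => by field_simp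
  · rw [not_nonempty_iff_eq_empty] at hne
    subst hne
    exact ⟨0, by simp, by simp⟩

/-- Borsuk: if `V` is bounded, `w - z` has no logarithm on the frontier for `z ∈ V`. -/
lemma no_log_frontier {V : Set ℂ} (hb : Bornology.IsBounded V) {z : ℂ}
    (hz : z ∈ V) (h : HasLog (fun w => w - z) (frontier V)) : False := by
  classical
  obtain ⟨g, hg, he⟩ := h
  obtain ⟨G, hG, hGg⟩ := tietze isClosed_frontier hg
  set F : ℂ → ℂ := fun w => if w ∈ V then Complex.exp (G w) else w - z with hF
  have hFc : Continuous F := by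
    refine continuous_if ?_ (by fun_prop) (by fun_prop)
    intro w hw
    rw [hGg hw]
    exact he w hw
  have hF0 : ∀ w, F w ≠ 0 := by
    intro w
    by_cases hw : w ∈ V
    · simp [hF, hw, Complex.exp_ne_zero]
    · simp only [hF, hw, if_false]
      intro h0
      rw [sub_eq_zero.1 h0] at hw
      exact hw hz
  obtain ⟨L, hL, hLF⟩ := exists_log F hFc hF0
  obtain ⟨R, hR0, hR⟩ : ∃ R : ℝ, 0 < R ∧ V ⊆ Metric.ball z R := by
    obtain ⟨R, hR⟩ := hb.subset_ball z
    exact ⟨max R 1, by positivity, hR.trans (Metric.ball_subset_ball (le_max_left _ _))⟩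
  have hout : ∀ w, ‖w - z‖ = R → F w = w - z := by
    intro w hw
    have : w ∉ V := fun hw' => by
      have := hR hw'
      rw [Metric.mem_ball, dist_eq_norm, hw] at this
      exact lt_irrefl _ this
    simp [hF, this]
  set c : ℝ → ℂ := fun θ => z + R * Complex.exp (θ * Complex.I) with hc
  have hcc : Continuous c := by fun_prop
  have := log_unique (A := ℝ) isPreconnected_univ (g := fun θ => L (c θ))
    (g' := fun θ => Complex.log R + θ * Complex.I) (by fun_prop) (by fun_prop)
    (by
      intro θ _
      rw [hLF, hout _ (by simp [hc, Complex.norm_exp_ofReal_mul_I, abs_of_pos hR0]), Complex.exp_add,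
        Complex.exp_log (by exact_mod_cast hR0.ne')]
      simp [hc]) (mem_univ 0) (mem_univ (2 * Real.pi))
  have hcc0 : c (2 * Real.pi) = c 0 := by simp [hc, Complex.exp_two_pi_mul_I]
  simp only [hcc0] at this
  simp at this

/-- Borsuk, easy direction -/
lemma hasLog_of_unbounded {K V : Set ℂ} (hK : IsCompact K) (hV : IsPreconnected V)
    (hVK : Disjoint V K) (hub : ¬ Bornology.IsBounded V) {z : ℂ} (hz : z ∈ V) :
    HasLog (fun w => w - z) K := by
  obtain ⟨R, hR⟩ := hK.isBounded.subset_closedBall 0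
  obtain ⟨z₀, hz₀V, hz₀⟩ : ∃ z₀ ∈ V, z₀ ∉ Metric.closedBall (0:ℂ) R := by
    by_contra hcon
    push Not at hcon
    exact hub (Metric.isBounded_closedBall.subset hcon)
  have h0 : HasLog (fun w => w - z₀) K :=
    (hasLog_convex (convex_closedBall _ _) Metric.isClosed_closedBall hz₀).mono hR
  refine (hV.induction₂ (fun a b => HasLog (fun w => w - a) K ↔ HasLog (fun w => w - b) K) ?_
    (fun _ _ _ _ _ _ h1 h2 => h1.trans h2) (fun _ _ _ _ h => h.symm) hz₀V hz).1 h0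
  intro a ha
  have haK : a ∈ Kᶜ := fun h => hVK.le_bot ⟨ha, h⟩
  obtain ⟨r, hr0, hr⟩ := Metric.isOpen_iff.1 hK.isClosed.isOpen_compl a haK
  have step : ∀ b c : ℂ, (∀ w ∈ K, ‖b - c‖ < ‖w - b‖) → HasLog (fun w => w - b) K →
      HasLog (fun w => w - c) K := by
    intro b c hbc hb
    have hne : ∀ w ∈ K, w - b ≠ 0 := fun w hw h0 => by
      have := hbc w hw
      rw [h0, norm_zero] at this
      exact absurd this (not_lt.2 (norm_nonneg _))
    have : HasLog (fun w => (w - c) / (w - b)) K := by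
      refine hasLog_near_one ?_ ?_
      · exact ContinuousOn.div (by fun_prop) (by fun_prop) hne
      · intro w hw
        have h1 : (w - c) / (w - b) - 1 = (b - c) / (w - b) := by
          have := hne w hw
          field_simp
          ring
        rw [h1, norm_div, div_lt_one (norm_pos_iff.2 (hne w hw))]
        exact hbc w hw
    exact (this.mul hb).congr fun w hw => by
      have := hne w hw
      field_simp
  have hfar : ∀ w ∈ K, r ≤ ‖w - a‖ := by
    intro w hw
    by_contra hcon
    push Not at hcon
    exact hr (by rwa [Metric.mem_ball, dist_eq_norm]) hw
  filter_upwards [mem_nhdsWithin_of_mem_nhds (Metric.ball_mem_nhds a (half_pos hr0))] with b hb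
  rw [Metric.mem_ball, dist_eq_norm] at hb
  constructor
  · refine step a b fun w hw => ?_
    have := hfar w hw
    rw [norm_sub_rev]
    linarith
  · refine step b a fun w hw => ?_
    have := hfar w hw
    have : ‖w - a‖ ≤ ‖w - b‖ + ‖b - a‖ := by
      simpa using norm_add_le (w - b) (b - a)
    linarith

end Helly


namespace Helly
open Set Filter Topology

/-- uniformly locally connected -/
def ULC (Y : Set ℂ) : Prop :=
  ∀ ε > 0, ∃ δ > 0, ∀ p ∈ Y, ∀ q ∈ Y, dist p q < δ →
    ∃ Q ⊆ Y ∩ Metric.closedBall p ε, IsPreconnected Q ∧ p ∈ Q ∧ q ∈ Q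

/-- `Y` together with the bounded components of its complement. -/
def fill (Y : Set ℂ) : Set ℂ := {z | Bornology.IsBounded (connectedComponentIn Yᶜ z)}

lemma subset_fill (Y : Set ℂ) : Y ⊆ fill Y := by
  intro z hz
  have : connectedComponentIn Yᶜ z = ∅ := connectedComponentIn_eq_empty (by simpa using hz)
  simp [fill, this]

lemma compl_nonempty_of_bounded {V : Set ℂ} (hb : Bornology.IsBounded V)
    (hne : V.Nonempty) : (frontier V).Nonempty := by
  by_contra h
  rw [not_nonempty_iff_eq_empty] at h
  have h2 : IsClopen V := isClopen_iff_frontier_eq_empty.2 h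
  have h3 := h2.eq_univ hne
  rw [h3] at hb
  exact NormedSpace.unbounded_univ ℝ ℂ hb

lemma frontier_comp_subset {Y : Set ℂ} (hY : IsClosed Y) (z : ℂ) :
    frontier (connectedComponentIn Yᶜ z) ⊆ Y := by
  intro w hw
  by_contra hwY
  have hopen := hY.isOpen_compl.connectedComponentIn (x := z)
  have hopen' := hY.isOpen_compl.connectedComponentIn (x := w)
  have hw1 := hw.1
  have hmem : w ∈ connectedComponentIn Yᶜ w := mem_connectedComponentIn hwY
  obtain ⟨v, hv1, hv2⟩ := mem_closure_iff.1 hw1 _ hopen' hmem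
  have e1 := connectedComponentIn_eq hv1
  have e2 := connectedComponentIn_eq hv2
  rw [frontier, hopen.interior_eq] at hw
  apply hw.2
  rw [e2, ← e1]
  exact hmem

lemma isClosed_fill {Y : Set ℂ} (hY : IsClosed Y) : IsClosed (fill Y) := by
  rw [← isOpen_compl_iff, isOpen_iff_mem_nhds]
  intro z hz
  have hzY : z ∈ Yᶜ := fun h => hz (subset_fill Y h)
  have hopen := hY.isOpen_compl.connectedComponentIn (x := z)
  filter_upwards [hopen.mem_nhds (mem_connectedComponentIn hzY)] with w hw
  have := connectedComponentIn_eq hw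
  simp only [fill, mem_compl_iff, mem_ofPred_eq] at hz ⊢
  rwa [← this]

lemma fill_subset_convex {Y B : Set ℂ} (hY : IsClosed Y) (hB : Convex ℝ B) (hBc : IsClosed B)
    (h : Y ⊆ B) : fill Y ⊆ B := by
  intro z hz
  by_contra hzB
  have hzY : z ∈ Yᶜ := fun h' => hzB (h h')
  exact no_log_frontier hz (mem_connectedComponentIn hzY)
    ((hasLog_convex hB hBc hzB).mono ((frontier_comp_subset hY z).trans h))

lemma isCompact_fill {Y : Set ℂ} (hY : IsCompact Y) : IsCompact (fill Y) := by
  obtain ⟨R, hR⟩ := hY.isBounded.subset_closedBall 0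
  exact (isCompact_closedBall (0:ℂ) R).of_isClosed_subset (isClosed_fill hY.isClosed)
    (fill_subset_convex hY.isClosed (convex_closedBall _ _) Metric.isClosed_closedBall hR)

lemma fill_subset_of_log {Y S : Set ℂ} (hY : IsClosed Y)
    (h : ∀ z ∉ S, z ∉ Y → HasLog (fun w => w - z) Y) (hYS : Y ⊆ S) : fill Y ⊆ S := by
  intro z hz
  by_contra hzS
  have hzY : z ∉ Y := fun h' => hzS (hYS h')
  exact no_log_frontier hz (mem_connectedComponentIn hzY)
    ((h z hzS hzY).mono (frontier_comp_subset hY z))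

lemma hasLog_fill {Y : Set ℂ} (hY : IsCompact Y) {z : ℂ} (hz : z ∉ fill Y) :
    HasLog (fun w => w - z) (fill Y) := by
  have hzY : z ∈ Yᶜ := fun h => hz (subset_fill Y h)
  refine hasLog_of_unbounded (isCompact_fill hY) (V := connectedComponentIn Yᶜ z)
    isPreconnected_connectedComponentIn ?_ hz (mem_connectedComponentIn hzY)
  rw [Set.disjoint_left]
  intro w hw hwf
  have := connectedComponentIn_eq hw
  simp only [fill, mem_ofPred_eq] at hz hwf
  rw [this] at hz
  exact hz hwf

lemma isOpen_fill_diff {Y : Set ℂ} (hY : IsClosed Y) : IsOpen (fill Y \ Y) := by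
  rw [isOpen_iff_mem_nhds]
  intro z hz
  have hopen := hY.isOpen_compl.connectedComponentIn (x := z)
  filter_upwards [hopen.mem_nhds (mem_connectedComponentIn hz.2)] with w hw
  have h1 := connectedComponentIn_eq hw
  have h2 := connectedComponentIn_subset _ _ hw
  refine ⟨?_, h2⟩
  have := hz.1
  simp only [fill, mem_ofPred_eq] at this ⊢
  rwa [← h1]

/-- Walking from a point of the filling towards a point not joined to it inside the filling,
one meets the set first. -/
lemma exists_first_exit {Y : Set ℂ} (hY : IsClosed Y) {p q : ℂ} (hp : p ∈ fill Y) 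
    (h : ¬ segment ℝ p q ⊆ fill Y) : ∃ p' ∈ Y, p' ∈ segment ℝ p q ∧ segment ℝ p p' ⊆ fill Y := by
  set f : ℝ → ℂ := fun t => AffineMap.lineMap p q t with hf
  have hfc : Continuous f := AffineMap.lineMap_continuous
  set T : Set ℝ := {t | t ∈ Icc (0:ℝ) 1 ∧ f '' Icc 0 t ⊆ fill Y} with hT
  have h0 : (0:ℝ) ∈ T := by
    refine ⟨by simp, ?_⟩
    simpa [hf] using hp
  have hbdd : BddAbove T := ⟨1, fun t ht => ht.1.2⟩
  set s := sSup T with hs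
  have hs0 : 0 ≤ s := le_csSup hbdd h0
  have hs1 : s ≤ 1 := csSup_le ⟨0, h0⟩ fun t ht => ht.1.2
  have hcl : IsClosed (f ⁻¹' fill Y) := (isClosed_fill hY).preimage hfc
  have hlt : ∀ t, 0 ≤ t → t < s → f t ∈ fill Y := by
    intro t ht hts
    obtain ⟨t', ht', htt'⟩ := exists_lt_of_lt_csSup ⟨0, h0⟩ hts
    exact ht'.2 ⟨t, ⟨ht, htt'.le⟩, rfl⟩
  have hfs : f s ∈ fill Y := by
    rcases hs0.eq_or_lt with h1 | h1
    · rw [← h1]; exact h0.2 ⟨0, by simp, rfl⟩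
    · have : Ico 0 s ⊆ f ⁻¹' fill Y := fun t ht => hlt t ht.1 ht.2
      have h2 := closure_minimal this hcl
      rw [closure_Ico h1.ne] at h2
      exact h2 ⟨hs0, le_rfl⟩
  have hall : f '' Icc 0 s ⊆ fill Y := by
    rintro _ ⟨t, ht, rfl⟩
    rcases ht.2.eq_or_lt with h1 | h1
    · rw [h1]; exact hfs
    · exact hlt t ht.1 h1
  have hs1' : s < 1 := by
    refine lt_of_le_of_ne hs1 fun h1 => h ?_
    rw [segment_eq_image_lineMap, ← h1]
    exact hall
  have hsY : f s ∈ Y := by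
    by_contra hsY
    have hn : f ⁻¹' (fill Y \ Y) ∈ 𝓝 s :=
      ((isOpen_fill_diff hY).preimage hfc).mem_nhds ⟨hfs, hsY⟩
    obtain ⟨r, hr, hr'⟩ := Metric.mem_nhds_iff.1 hn
    have hlt1 : s < min (s + r / 2) 1 := lt_min (by linarith) hs1'
    have : min (s + r / 2) 1 ∈ T := by
      refine ⟨⟨hs0.trans hlt1.le, min_le_right _ _⟩, ?_⟩
      rintro _ ⟨t, ht, rfl⟩
      rcases le_or_gt t s with h1 | h1
      · exact hall ⟨t, ⟨ht.1, h1⟩, rfl⟩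
      · refine (hr' ?_).1
        rw [Metric.mem_ball, Real.dist_eq, abs_of_pos (by linarith)]
        have := ht.2.trans (min_le_left _ _)
        linarith
    exact absurd (le_csSup hbdd this) (not_le.2 hlt1)
  refine ⟨f s, hsY, ?_, ?_⟩
  · rw [segment_eq_image_lineMap]; exact ⟨s, ⟨hs0, hs1⟩, rfl⟩
  · rw [segment_eq_image_lineMap]
    rintro _ ⟨t, ht, rfl⟩
    have : AffineMap.lineMap p (f s) t = f (t * s) := by
      simp only [hf, AffineMap.lineMap_apply, vsub_eq_sub, vadd_eq_add,
        Complex.real_smul]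
      push_cast
      ring
    rw [this]
    exact hall ⟨t * s, ⟨mul_nonneg ht.1 hs0, mul_le_of_le_one_left hs0 ht.2⟩, rfl⟩

lemma dist_le_of_mem_segment {p q a b : ℂ} (ha : a ∈ segment ℝ p q) (hb : b ∈ segment ℝ p q) :
    dist a b ≤ dist p q := by
  rw [segment_eq_image_lineMap] at ha hb
  obtain ⟨s, hs, rfl⟩ := ha
  obtain ⟨t, ht, rfl⟩ := hb
  rw [dist_lineMap_lineMap]
  refine mul_le_of_le_one_left dist_nonneg ?_
  rw [Real.dist_eq, abs_le]
  constructor <;> linarith [hs.1, hs.2, ht.1, ht.2]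

lemma ULC.fill {Y : Set ℂ} (hY : IsClosed Y) (h : ULC Y) : ULC (fill Y) := by
  intro ε hε
  obtain ⟨δ, hδ, hd⟩ := h (ε / 2) (by positivity)
  refine ⟨min δ (ε / 2), by positivity, fun p hp q hq hpq => ?_⟩
  have hpq1 : dist p q < δ := hpq.trans_le (min_le_left _ _)
  have hpq2 : dist p q < ε / 2 := hpq.trans_le (min_le_right _ _)
  have hseg : segment ℝ p q ⊆ Metric.closedBall p (ε / 2) := fun w hw => by
    rw [Metric.mem_closedBall]
    exact (dist_le_of_mem_segment hw (left_mem_segment ℝ p q)).trans hpq2.le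
  by_cases hs : segment ℝ p q ⊆ Helly.fill Y
  · exact ⟨segment ℝ p q, subset_inter hs (hseg.trans (Metric.closedBall_subset_closedBall
      (by linarith))), (convex_segment p q).isPreconnected, left_mem_segment _ _ _,
      right_mem_segment _ _ _⟩
  · obtain ⟨p', hp'Y, hp's, hp'f⟩ := exists_first_exit hY hp hs
    obtain ⟨q', hq'Y, hq's, hq'f⟩ := exists_first_exit hY hq (q := p)
      (by rwa [segment_symm])
    rw [segment_symm] at hq's
    obtain ⟨Q, hQ, hQc, hQp, hQq⟩ := hd p' hp'Y q' hq'Y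
      ((dist_le_of_mem_segment hp's hq's).trans_lt hpq1)
    refine ⟨(segment ℝ p p' ∪ Q) ∪ segment ℝ q q', ?_, ?_, ?_, ?_⟩
    · rintro w ((hw | hw) | hw)
      · refine ⟨hp'f hw, ?_⟩
        have h1 := (convex_segment p q).segment_subset (left_mem_segment ℝ p q) hp's hw
        exact Metric.closedBall_subset_closedBall (by linarith) (hseg h1)
      · refine ⟨subset_fill _ (hQ hw).1, ?_⟩
        have h1 := (hQ hw).2
        have h2 := hseg hp's
        rw [Metric.mem_closedBall] at *
        linarith [dist_triangle w p' p]
      · refine ⟨hq'f hw, ?_⟩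
        have h1 := (convex_segment p q).segment_subset (right_mem_segment ℝ p q) hq's hw
        exact Metric.closedBall_subset_closedBall (by linarith) (hseg h1)
    · refine IsPreconnected.union q' (Or.inr hQq) (right_mem_segment _ _ _) ?_
        (convex_segment q q').isPreconnected
      exact IsPreconnected.union p' (right_mem_segment _ _ _) hQp
        (convex_segment p p').isPreconnected hQc
    · exact Or.inl (Or.inl (left_mem_segment _ _ _))
    · exact Or.inr (left_mem_segment _ _ _)

/-- continuous images of compact convex sets are uniformly locally connected -/
lemma ULC_image {E : Type*} [NormedAddCommGroup E] [NormedSpace ℝ E] {T : Set E}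
    (hT : IsCompact T) (hconv : Convex ℝ T) {f : E → ℂ} (hf : ContinuousOn f T) :
    ULC (f '' T) := by
  intro ε hε
  by_contra hcon
  push Not at hcon
  choose p hp q hq hpq hbad using fun n : ℕ => hcon (1 / ((n:ℝ) + 1)) (by positivity)
  choose s hs hsp using hp
  choose t ht htq using hq
  obtain ⟨a, haT, φ, hφ, hφa⟩ := hT.tendsto_subseq hs
  obtain ⟨b, hbT, ψ, hψ, hψb⟩ := hT.tendsto_subseq (fun n => ht (φ n))
  have hsa : Tendsto (fun n => s (φ (ψ n))) atTop (𝓝[T] a) :=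
    tendsto_nhdsWithin_iff.2 ⟨hφa.comp hψ.tendsto_atTop, Eventually.of_forall fun n => hs _⟩
  have htb : Tendsto (fun n => t (φ (ψ n))) atTop (𝓝[T] b) :=
    tendsto_nhdsWithin_iff.2 ⟨hψb, Eventually.of_forall fun n => ht _⟩
  have h1 : Tendsto (fun n => p (φ (ψ n))) atTop (𝓝 (f a)) := by
    simpa [Function.comp_def, hsp] using (hf a haT).tendsto.comp hsa
  have h2 : Tendsto (fun n => q (φ (ψ n))) atTop (𝓝 (f b)) := by
    simpa [Function.comp_def, htq] using (hf b hbT).tendsto.comp htb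
  have hfab : f a = f b := by
    have h3 : Tendsto (fun n => dist (p (φ (ψ n))) (q (φ (ψ n)))) atTop (𝓝 0) := by
      have h4 : Tendsto (fun n : ℕ => 1 / ((n:ℝ) + 1)) atTop (𝓝 0) :=
        tendsto_one_div_add_atTop_nhds_zero_nat
      have h5 := h4.comp (hφ.tendsto_atTop.comp hψ.tendsto_atTop)
      exact squeeze_zero (fun _ => dist_nonneg) (fun n => (hpq (φ (ψ n))).le) h5
    exact dist_eq_zero.1 (tendsto_nhds_unique (h1.dist h2) h3)
  have near : ∀ c ∈ T, ∃ r > 0, ∀ u ∈ T ∩ Metric.ball c r, dist (f u) (f c) < ε / 2 := by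
    intro c hc
    obtain ⟨r, hr, h⟩ := Metric.continuousWithinAt_iff.1 (hf c hc) (ε / 2) (by positivity)
    exact ⟨r, hr, fun u hu => h hu.1 hu.2⟩
  obtain ⟨r1, hr1, hn1⟩ := near a haT
  obtain ⟨r2, hr2, hn2⟩ := near b hbT
  have e1 := (tendsto_nhdsWithin_iff.1 hsa).1.eventually (Metric.ball_mem_nhds a hr1)
  have e2 := (tendsto_nhdsWithin_iff.1 htb).1.eventually (Metric.ball_mem_nhds b hr2)
  obtain ⟨n, hn1', hn2'⟩ := (e1.and e2).exists
  set N := φ (ψ n)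
  have c1 : IsPreconnected (f '' (T ∩ Metric.ball a r1)) :=
    (hconv.inter (convex_ball a r1)).isPreconnected.image f (hf.mono inter_subset_left)
  have c2 : IsPreconnected (f '' (T ∩ Metric.ball b r2)) :=
    (hconv.inter (convex_ball b r2)).isPreconnected.image f (hf.mono inter_subset_left)
  have hp1 : dist (p N) (f a) < ε / 2 := by
    rw [← hsp N]; exact hn1 _ ⟨hs N, hn1'⟩
  refine hbad N (f '' (T ∩ Metric.ball a r1) ∪ f '' (T ∩ Metric.ball b r2)) ?_ ?_ ?_ ?_
  · rintro _ (⟨u, hu, rfl⟩ | ⟨u, hu, rfl⟩)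
    · refine ⟨⟨u, hu.1, rfl⟩, ?_⟩
      have := hn1 u hu
      rw [Metric.mem_closedBall]
      linarith [dist_triangle_right (f u) (p N) (f a)]
    · refine ⟨⟨u, hu.1, rfl⟩, ?_⟩
      have := hn2 u hu
      rw [Metric.mem_closedBall]
      rw [← hfab] at this
      linarith [dist_triangle_right (f u) (p N) (f a)]
  · refine IsPreconnected.union (f a) ⟨a, ⟨haT, Metric.mem_ball_self hr1⟩, rfl⟩ ?_ c1 c2
    rw [hfab]
    exact ⟨b, ⟨hbT, Metric.mem_ball_self hr2⟩, rfl⟩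
  · exact Or.inl ⟨s N, ⟨hs N, hn1'⟩, hsp N⟩
  · exact Or.inr ⟨t N, ⟨ht N, hn2'⟩, htq N⟩

end Helly


namespace Helly
open Set Filter Topology

/-- a finite `δ`-chain in `Q` from `p` to `q`, written as an eventually constant sequence -/
def Chain (Q : Set ℂ) (δ : ℝ) (p q : ℂ) (d : ℕ → ℂ) (L : ℕ) : Prop :=
  d 0 = p ∧ (∀ i ≥ L, d i = q) ∧ (∀ i, d i ∈ Q) ∧ ∀ i, dist (d i) (d (i + 1)) < δ

lemma exists_chain {Q : Set ℂ} (hQ : IsPreconnected Q) {δ : ℝ} (hδ : 0 < δ) {p q : ℂ}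
    (hp : p ∈ Q) (hq : q ∈ Q) : ∃ d L, Chain Q δ p q d L := by
  have two : ∀ a ∈ Q, ∀ b ∈ Q, dist a b < δ → ∃ d L, Chain Q δ a b d L := by
    intro a ha b hb hab
    refine ⟨fun i => if i = 0 then a else b, 1, by simp, ?_, ?_, ?_⟩
    · intro i hi
      have : i ≠ 0 := by omega
      simp [this]
    · intro i
      by_cases h : i = 0 <;> simp [h, ha, hb]
    · intro i
      by_cases h : i = 0 <;> simp [h, hab, hδ]
  refine hQ.induction₂' (fun a b => ∃ d L, Chain Q δ a b d L) ?_ ?_ hp hq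
  · intro a ha
    filter_upwards [mem_nhdsWithin_of_mem_nhds (Metric.ball_mem_nhds a hδ),
      self_mem_nhdsWithin] with b hb hbQ
    rw [Metric.mem_ball] at hb
    exact ⟨two a ha b hbQ (by rwa [dist_comm]), two b hbQ a ha hb⟩
  · rintro a b c - - - ⟨d, L, h0, h1, h2, h3⟩ ⟨d', L', h0', h1', h2', h3'⟩
    refine ⟨fun i => if i ≤ L then d i else d' (i - L), L + L', by simp [h0], ?_, ?_, ?_⟩
    · intro i hi
      by_cases h : i ≤ L
      · have h4 : L' = 0 := by omega
        have h5 : i = L := by omega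
        have := h1' 0 (by omega)
        simp only [h, if_true]
        rw [h1 i (by omega), ← h0', this]
      · simp only [h, if_false]
        exact h1' _ (by omega)
    · intro i
      by_cases h : i ≤ L
      · simp [h, h2]
      · simp [h, h2']
    · intro i
      rcases lt_trichotomy i L with h | h | h
      · have h4 : i ≤ L := h.le
        have h5 : i + 1 ≤ L := h
        simp only [h4, h5, if_true]
        exact h3 i
      · subst h
        have h5 : ¬ (i + 1 ≤ i) := by omega
        have h6 : i + 1 - i = 0 + 1 := by omega
        simp only [le_refl, if_true, h5, if_false, h6]
        rw [h1 i le_rfl, ← h0']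
        exact h3' 0
      · have h4 : ¬ i ≤ L := by omega
        have h5 : ¬ i + 1 ≤ L := by omega
        have h6 : i + 1 - L = (i - L) + 1 := by omega
        simp only [h4, h5, if_false, h6]
        exact h3' _

/-- refinement of chains -/
lemma refine_chain {C : Set ℂ} {δ ε δ' : ℝ} (hδ' : 0 < δ')
    (h : ∀ p ∈ C, ∀ q ∈ C, dist p q < δ →
      ∃ Q ⊆ C ∩ Metric.closedBall p ε, IsPreconnected Q ∧ p ∈ Q ∧ q ∈ Q)
    {x y : ℂ} {c : ℕ → ℂ} {N : ℕ} (hc : Chain C δ x y c N) :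
    ∃ (m : ℕ) (c' : ℕ → ℂ), 0 < m ∧ Chain C δ' x y c' (N * m) ∧
      ∀ i, dist (c' i) (c (i / m)) ≤ ε := by
  obtain ⟨h0, h1, h2, h3⟩ := hc
  have : ∀ j, ∃ d L, Chain (C ∩ Metric.closedBall (c j) ε) δ' (c j) (c (j + 1)) d L := by
    intro j
    obtain ⟨Q, hQ, hQc, hp, hq⟩ := h _ (h2 j) _ (h2 (j + 1)) (h3 j)
    obtain ⟨d, L, g0, g1, g2, g3⟩ := exists_chain hQc hδ' hp hq
    exact ⟨d, L, g0, g1, fun i => hQ (g2 i), g3⟩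
  choose d L hd using this
  set m := (∑ j ∈ Finset.range N, L j) + 1 with hm
  have hmpos : 0 < m := by omega
  -- after index `N` use constant chains
  set d' : ℕ → ℕ → ℂ := fun j => if j < N then d j else fun _ => y with hd'
  have hLm : ∀ j < N, L j ≤ m := by
    intro j hj
    have := Finset.single_le_sum (f := L) (fun _ _ => Nat.zero_le _) (Finset.mem_range.2 hj)
    omega
  have hd0 : ∀ j, d' j 0 = c j := by
    intro j
    by_cases hj : j < N
    · simp only [hd', hj, if_true]; exact (hd j).1
    · simp only [hd', hj, if_false]; rw [h1 j (by omega)]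
  have hdm : ∀ j, d' j m = c (j + 1) := by
    intro j
    by_cases hj : j < N
    · simp only [hd', hj, if_true]; exact (hd j).2.1 m (hLm j hj)
    · simp only [hd', hj, if_false]; rw [h1 (j + 1) (by omega)]
  have hyC : y ∈ C := by rw [← h1 N le_rfl]; exact h2 N
  have hd3 : ∀ j i, dist (d' j i) (d' j (i + 1)) < δ' := by
    intro j i
    by_cases hj : j < N
    · simp only [hd', hj, if_true]; exact (hd j).2.2.2 i
    · simp [hd', hj, hδ']
  have hε : 0 ≤ ε := by
    have := ((hd 0).2.2.1 0).2
    rw [Metric.mem_closedBall] at this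
    exact dist_nonneg.trans this
  have hd2 : ∀ j i, d' j i ∈ C ∧ dist (d' j i) (c j) ≤ ε := by
    intro j i
    by_cases hj : j < N
    · simp only [hd', hj, if_true]; exact ((hd j).2.2.1 i)
    · simp only [hd', hj, if_false]
      rw [h1 j (by omega)]
      simp [hyC, hε]
  refine ⟨m, fun i => d' (i / m) (i % m), hmpos, ⟨?_, ?_, ?_, ?_⟩, ?_⟩
  · simp [hd0, h0]
  · intro i hi
    have : ¬ (i / m < N) := by
      rw [not_lt]; exact (Nat.le_div_iff_mul_le hmpos).2 hi
    simp [hd', this]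
  · intro i; exact (hd2 _ _).1
  · intro i
    by_cases hi : i % m + 1 < m
    · have e1 : (i + 1) / m = i / m := by
        conv_lhs => rw [← Nat.div_add_mod i m, add_assoc, Nat.mul_add_div hmpos,
          Nat.div_eq_of_lt hi, add_zero]
      have e2 : (i + 1) % m = i % m + 1 := by
        conv_lhs => rw [← Nat.div_add_mod i m, add_assoc, Nat.mul_add_mod, Nat.mod_eq_of_lt hi]
      simp only [e1, e2]
      exact hd3 _ _
    · have hi' : i % m + 1 = m := by
        have := Nat.mod_lt i hmpos
        omega
      have e0 : i + 1 = m * (i / m + 1) := by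
        conv_lhs => rw [← Nat.div_add_mod i m, add_assoc, hi']
        ring
      have e1 : (i + 1) / m = i / m + 1 := by
        rw [e0, Nat.mul_div_cancel_left _ hmpos]
      have e2 : (i + 1) % m = 0 := by rw [e0, Nat.mul_mod_right]
      simp only [e1, e2, hd0]
      rw [← hdm]
      conv => 
        lhs; rw [← hi']
      rw [hi'] 
      have := hd3 (i / m) (i % m)
      rwa [hi'] at this
  · intro i; exact (hd2 _ _).2

lemma floor_sub_le_one {a b : ℝ} (ha : 0 ≤ a) (hab : a ≤ b) (h : b - a < 1) :
    ⌊b⌋₊ = ⌊a⌋₊ ∨ ⌊b⌋₊ = ⌊a⌋₊ + 1 := by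
  have h1 : ⌊a⌋₊ ≤ ⌊b⌋₊ := Nat.floor_le_floor hab
  have h2 : ⌊b⌋₊ < ⌊a⌋₊ + 2 := by
    rw [Nat.floor_lt (ha.trans hab)]
    have := Nat.lt_floor_add_one a
    push_cast
    linarith
  omega

lemma joinedIn_of_ULC {C : Set ℂ} (hC : IsCompact C) (hconn : IsPreconnected C) (h : ULC C)
    {x y : ℂ} (hx : x ∈ C) (hy : y ∈ C) : JoinedIn C x y := by
  set e : ℕ → ℝ := fun k => (1 / 2 : ℝ) ^ k with he
  have hepos : ∀ k, 0 < e k := fun k => by positivity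
  choose δ₀ hδ₀ hU₀ using fun k => h (e k) (hepos k)
  set δ : ℕ → ℝ := fun k => min (δ₀ k) (e k) with hδdef
  have hδ : ∀ k, 0 < δ k := fun k => lt_min (hδ₀ k) (hepos k)
  have hU : ∀ k, ∀ p ∈ C, ∀ q ∈ C, dist p q < δ k →
      ∃ Q ⊆ C ∩ Metric.closedBall p (e k), IsPreconnected Q ∧ p ∈ Q ∧ q ∈ Q :=
    fun k p hp q hq hpq => hU₀ k p hp q hq (hpq.trans_le (min_le_left _ _))
  -- levels
  let X : ℕ → Type := fun k => {cN : (ℕ → ℂ) × ℕ // 0 < cN.2 ∧ Chain C (δ k) x y cN.1 cN.2}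
  have start : ∃ _ : X 0, True := by
    obtain ⟨d, L, hd⟩ := exists_chain hconn (hδ 0) hx hy
    refine ⟨⟨(d, L + 1), by simp, hd.1, fun i hi => hd.2.1 i ?_, hd.2.2.1, hd.2.2.2⟩, trivial⟩
    simp at hi; omega
  obtain ⟨s0, -⟩ := start
  have step : ∀ k (a : X k), ∃ (b : X (k + 1)) (m : ℕ), 0 < m ∧ b.1.2 = a.1.2 * m ∧
      ∀ i, dist (b.1.1 i) (a.1.1 (i / m)) ≤ e k := by
    rintro k ⟨⟨c, N⟩, hN, hc⟩
    obtain ⟨m, c', hm, hc', hd⟩ := refine_chain (hδ (k + 1)) (hU k) hc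
    exact ⟨⟨(c', N * m), Nat.mul_pos hN hm, hc'⟩, m, hm, rfl, hd⟩
  choose nxt m hm hN hdist using step
  let a : ∀ k, X k := fun k => Nat.rec s0 (fun k b => nxt k b) k
  have ha : ∀ k, a (k + 1) = nxt k (a k) := fun k => rfl
  set γ : ℕ → ℝ → ℂ := fun k t => (a k).1.1 ⌊t * (a k).1.2⌋₊ with hγ
  have hγC : ∀ k t, γ k t ∈ C := fun k t => (a k).2.2.2.2.1 _
  have hγd : ∀ k t, dist (γ k t) (γ (k + 1) t) ≤ e k := by
    intro k t
    have h1 := hdist k (a k) ⌊t * (a (k + 1)).1.2⌋₊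
    rw [← ha, ← Nat.floor_div_natCast] at h1
    have h2 : t * ((a (k + 1)).1.2 : ℝ) / (m k (a k) : ℝ) = t * (a k).1.2 := by
      rw [ha, hN]
      have : (m k (a k) : ℝ) ≠ 0 := by exact_mod_cast (hm k (a k)).ne'
      push_cast
      field_simp
    rw [h2] at h1
    rw [dist_comm]
    exact h1
  have hgeo : ∀ k, e k = 2 / 2 / 2 ^ k := by intro k; simp [he]
  have hγd' : ∀ t k, dist (γ k t) (γ (k + 1) t) ≤ 2 / 2 / 2 ^ k := fun t k => by
    rw [← hgeo]; exact hγd k t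
  have hlim : ∀ t, ∃ z, Tendsto (fun k => γ k t) atTop (𝓝 z) := fun t =>
    cauchySeq_tendsto_of_complete (cauchySeq_of_le_geometric_two (hγd' t))
  choose Γ hΓ using hlim
  have hΓd : ∀ k t, dist (γ k t) (Γ t) ≤ 2 * e k := by
    intro k t
    have := dist_le_of_le_geometric_two_of_tendsto (hγd' t) (hΓ t) k
    rw [hgeo]
    refine this.trans (le_of_eq ?_)
    ring
  have hΓC : ∀ t, Γ t ∈ C := fun t =>
    hC.isClosed.mem_of_tendsto (hΓ t) (Eventually.of_forall fun k => hγC k t)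
  have hΓ0 : Γ 0 = x := by
    refine tendsto_nhds_unique (hΓ 0) ?_
    have : ∀ k, γ k 0 = x := fun k => by
      simp only [hγ, zero_mul, Nat.floor_zero]; exact (a k).2.2.1
    simp [this]
  have hΓ1 : Γ 1 = y := by
    refine tendsto_nhds_unique (hΓ 1) ?_
    have : ∀ k, γ k 1 = y := fun k => by
      simp only [hγ, one_mul, Nat.floor_natCast]; exact (a k).2.2.2.1 _ le_rfl
    simp [this]
  have hcont : ∀ (k : ℕ) (s t : ℝ), 0 ≤ s → s ≤ t → (t - s) * (a k).1.2 < 1 → dist (Γ s) (Γ t) ≤ 5 * e k := by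
    intro k s t hs hst hlt
    have hNn : (0:ℝ) ≤ (a k).1.2 := Nat.cast_nonneg _
    have h1 : dist (γ k s) (γ k t) ≤ e k := by
      rcases floor_sub_le_one (a := s * (a k).1.2) (b := t * (a k).1.2) (by positivity)
        (by gcongr) (by linarith) with h | h
      · simp only [hγ, h, dist_self]; exact (hepos k).le
      · simp only [hγ, h]
        exact ((a k).2.2.2.2.2 _).le.trans (min_le_right _ _)
    have h2 := hΓd k s
    have h3 := hΓd k t
    have h4 := dist_triangle4 (Γ s) (γ k s) (γ k t) (Γ t)
    rw [dist_comm (Γ s) (γ k s)] at h4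
    linarith
  have hcontOn : ContinuousOn Γ (Icc 0 1) := by
    rw [Metric.continuousOn_iff]
    intro s hs ε hε
    obtain ⟨k, hk⟩ := exists_pow_lt_of_lt_one (show (0:ℝ) < ε / 5 by positivity)
      (show (1/2:ℝ) < 1 by norm_num)
    have hNp : (0:ℝ) < (a k).1.2 := by exact_mod_cast (a k).2.1
    refine ⟨1 / (a k).1.2, by positivity, fun t ht hts => ?_⟩
    have hk' : 5 * e k < ε := by simp only [he]; linarith
    rw [Real.dist_eq, lt_div_iff₀ hNp] at hts
    rcases le_total s t with hst | hst
    · rw [abs_of_nonneg (by linarith)] at hts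
      rw [dist_comm]
      exact (hcont k s t hs.1 hst hts).trans_lt hk'
    · rw [abs_of_nonpos (by linarith)] at hts
      exact (hcont k t s ht.1 hst (by linarith)).trans_lt hk'
  exact JoinedIn.ofLine hcontOn hΓ0 hΓ1 (by rintro _ ⟨t, -, rfl⟩; exact hΓC t)

end Helly


namespace Helly
open Set Filter Topology

lemma log_small {Y : Set ℂ} (hY : IsCompact Y) {φ : ℂ → ℂ} (hφ : ContinuousOn φ Y)
    (h0 : ∀ w ∈ Y, φ w ≠ 0) : ∃ δ > 0, ∀ Y' ⊆ Y, (∀ p ∈ Y', ∀ q ∈ Y', dist p q < δ) →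
      HasLog φ Y' := by
  rcases Y.eq_empty_or_nonempty with rfl | hne
  · refine ⟨1, one_pos, fun Y' h _ => ⟨fun _ => 0, continuousOn_const, fun w hw => (h hw).elim⟩⟩
  obtain ⟨p₀, hp₀, hmin⟩ := hY.exists_isMinOn hne hφ.norm
  have hm : 0 < ‖φ p₀‖ := norm_pos_iff.2 (h0 _ hp₀)
  obtain ⟨δ, hδ, hu⟩ := Metric.uniformContinuousOn_iff.1
    (hY.uniformContinuousOn_of_continuous hφ) _ hm
  refine ⟨δ, hδ, fun Y' hY' hd => ?_⟩
  rcases Y'.eq_empty_or_nonempty with rfl | ⟨p, hp⟩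
  · exact ⟨fun _ => 0, continuousOn_const, fun w hw => hw.elim⟩
  have hpY := hY' hp
  have h1 : HasLog (fun w => φ w / φ p) Y' := by
    refine hasLog_near_one ((hφ.mono hY').div_const _) fun w hw => ?_
    have h2 : φ w / φ p - 1 = (φ w - φ p) / φ p := by
      rw [sub_div, div_self (h0 p hpY)]
    rw [h2, norm_div, div_lt_one (norm_pos_iff.2 (h0 p hpY)), ← dist_eq_norm]
    exact (hu w (hY' hw) p hpY (hd w hw p hp)).trans_le (hmin hpY)
  refine (h1.mul (hasLog_const (h0 p hpY) Y')).congr fun w hw => ?_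
  simp only
  rw [div_mul_cancel₀ _ (h0 p hpY)]

lemma log_line {Y : Set ℂ} (hY : IsCompact Y) {t : ℂ → ℝ} (ht : Continuous t)
    (hd : ∀ p ∈ Y, ∀ q ∈ Y, dist p q ≤ |t p - t q|) {φ : ℂ → ℂ} (hφ : ContinuousOn φ Y)
    (h0 : ∀ w ∈ Y, φ w ≠ 0) : HasLog φ Y := by
  obtain ⟨δ, hδ, hs⟩ := log_small hY hφ h0
  obtain ⟨L, hL⟩ := (hY.image ht).isBounded.subset_closedBall 0
  have hL' : ∀ w ∈ Y, |t w| ≤ L := fun w hw => by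
    simpa [Real.norm_eq_abs] using hL (mem_image_of_mem t hw)
  set d := δ / 2 with hdd
  have hdp : 0 < d := by positivity
  have key : ∀ k : ℕ, HasLog φ (Y ∩ {w | t w ≤ -L - 1 + k * d}) := by
    intro k
    induction k with
    | zero =>
      refine ⟨fun _ => 0, continuousOn_const, fun w hw => ?_⟩
      have h1 := hL' w hw.1
      have h2 : t w ≤ _ := hw.2
      have := neg_abs_le (t w)
      exfalso
      simp only [Nat.cast_zero, zero_mul] at h2
      linarith
    | succ k ih =>
      set c := -L - 1 + k * d with hc
      have hc' : -L - 1 + ((k + 1 : ℕ) : ℝ) * d = c + d := by push_cast; rw [hc]; ring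
      rw [hc']
      obtain ⟨g1, hg1, he1⟩ := ih
      obtain ⟨g2, hg2, he2⟩ := hs (Y ∩ {w | c ≤ t w ∧ t w ≤ c + d}) inter_subset_left (by
        rintro p ⟨hp, hp1, hp2⟩ q ⟨hq, hq1, hq2⟩
        refine (hd p hp q hq).trans_lt ?_
        rw [abs_lt]; constructor <;> linarith)
      have hcl1 : IsClosed (Y ∩ {w | t w ≤ c}) :=
        hY.isClosed.inter (isClosed_le ht continuous_const)
      have hcl2 : IsClosed (Y ∩ {w | c ≤ t w ∧ t w ≤ c + d}) :=
        hY.isClosed.inter ((isClosed_le continuous_const ht).inter (isClosed_le ht continuous_const))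
      obtain ⟨e, hee, hg⟩ : ∃ e : ℂ, Complex.exp e = 1 ∧ ∀ w ∈ Y ∩ {w | t w ≤ c},
          w ∈ Y ∩ {w | c ≤ t w ∧ t w ≤ c + d} → g1 w = g2 w + e := by
        by_cases hex : ∃ p ∈ Y, t p = c
        · obtain ⟨p, hp, hpc⟩ := hex
          refine ⟨g1 p - g2 p, ?_, ?_⟩
          · rw [Complex.exp_sub, he1 p ⟨hp, hpc.le⟩, he2 p ⟨hp, hpc.ge, by linarith⟩,
              div_self (h0 p hp)]
          · rintro w ⟨hw, hw1⟩ ⟨-, hw2, -⟩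
            have : w = p := by
              have h1 := hd w hw p hp
              have h2 : t w = t p := by rw [hpc]; exact le_antisymm hw1 hw2
              rw [h2, sub_self, abs_zero] at h1
              exact dist_le_zero.1 h1
            rw [this]; ring
        · refine ⟨0, Complex.exp_zero, ?_⟩
          rintro w ⟨hw, hw1⟩ ⟨-, hw2, -⟩
          exact (hex ⟨w, hw, le_antisymm hw1 hw2⟩).elim
      obtain ⟨g, hgc, hgg1, hgg2⟩ := glue hcl1 hcl2 hg1 (hg2.add continuousOn_const) hg
      refine ⟨g, hgc.mono ?_, ?_⟩
      · rintro w ⟨hw, hw1⟩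
        rcases le_total (t w) c with h | h
        · exact Or.inl ⟨hw, h⟩
        · exact Or.inr ⟨hw, h, hw1⟩
      · rintro w ⟨hw, hw1⟩
        rcases le_total (t w) c with h | h
        · rw [hgg1 ⟨hw, h⟩, he1 w ⟨hw, h⟩]
        · rw [hgg2 ⟨hw, h, hw1⟩]
          simp only [Pi.add_apply]
          rw [Complex.exp_add, he2 w ⟨hw, h, hw1⟩, hee, mul_one]
  obtain ⟨k, hk⟩ := exists_nat_gt ((2 * L + 1) / d)
  rw [div_lt_iff₀ hdp] at hk
  refine (key k).mono fun w hw => ⟨hw, ?_⟩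
  have := (le_abs_self _).trans (hL' w hw)
  show t w ≤ _
  linarith

def Split (A B : Set ℂ) (u : ℂ → ℂ) (R : Set ℂ) : Prop :=
  ∃ a b : ℂ → ℂ, ContinuousOn a (A ∩ R) ∧ ContinuousOn b (B ∩ R) ∧ (∀ w ∈ A ∩ R, a w ≠ 0) ∧
    (∀ w ∈ B ∩ R, b w ≠ 0) ∧ ∀ w ∈ A, w ∈ B → w ∈ R → u w * b w = a w

lemma Split.mono {A B : Set ℂ} {u : ℂ → ℂ} {R R' : Set ℂ} (h : Split A B u R)
    (hR : ∀ w ∈ R', w ∈ A ∪ B → w ∈ R) : Split A B u R' := by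
  obtain ⟨a, b, ha, hb, ha0, hb0, h⟩ := h
  have h1 : A ∩ R' ⊆ A ∩ R := fun w hw => ⟨hw.1, hR w hw.2 (Or.inl hw.1)⟩
  have h2 : B ∩ R' ⊆ B ∩ R := fun w hw => ⟨hw.1, hR w hw.2 (Or.inr hw.1)⟩
  exact ⟨a, b, ha.mono h1, hb.mono h2, fun w hw => ha0 w (h1 hw), fun w hw => hb0 w (h2 hw),
    fun w hA hB hw => h w hA hB (hR w hw (Or.inl hA))⟩

lemma Split.glue {A B : Set ℂ} (hA : IsClosed A) (hB : IsClosed B) {u : ℂ → ℂ}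
    (hu : ∀ w ∈ A, w ∈ B → u w ≠ 0) {R1 R2 : Set ℂ} (hR1 : IsClosed R1) (hR2 : IsClosed R2)
    (hlog : ∀ φ : ℂ → ℂ, ContinuousOn φ ((A ∪ B) ∩ (R1 ∩ R2)) →
      (∀ w ∈ (A ∪ B) ∩ (R1 ∩ R2), φ w ≠ 0) → HasLog φ ((A ∪ B) ∩ (R1 ∩ R2)))
    (h1 : Split A B u R1) (h2 : Split A B u R2) : Split A B u (R1 ∪ R2) := by
  obtain ⟨a1, b1, ha1, hb1, ha10, hb10, h1⟩ := h1
  obtain ⟨a2, b2, ha2, hb2, ha20, hb20, h2⟩ := h2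
  have hR := hR1.inter hR2
  obtain ⟨φ, hφ, hφA, hφB⟩ := Helly.glue (hA.inter hR) (hB.inter hR)
    (g1 := fun w => a1 w / a2 w) (g2 := fun w => b1 w / b2 w)
    ((ha1.mono (by grind)).div (ha2.mono (by grind)) (fun w hw => ha20 w ⟨hw.1, hw.2.2⟩))
    ((hb1.mono (by grind)).div (hb2.mono (by grind)) (fun w hw => hb20 w ⟨hw.1, hw.2.2⟩))
    (by
      rintro w ⟨hwA, hw1, hw2⟩ ⟨hwB, -⟩
      rw [← h1 w hwA hwB hw1, ← h2 w hwA hwB hw2, mul_div_mul_left _ _ (hu w hwA hwB)])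
  rw [← union_inter_distrib_right] at hφ
  obtain ⟨g, hg, hge⟩ := hlog φ hφ (by
    rintro w ⟨hw | hw, hw1, hw2⟩
    · rw [hφA ⟨hw, hw1, hw2⟩]
      exact div_ne_zero (ha10 w ⟨hw, hw1⟩) (ha20 w ⟨hw, hw2⟩)
    · rw [hφB ⟨hw, hw1, hw2⟩]
      exact div_ne_zero (hb10 w ⟨hw, hw1⟩) (hb20 w ⟨hw, hw2⟩))
  obtain ⟨G, hG, hGg⟩ := tietze ((hA.union hB).inter hR) hg
  have hGe : ∀ w ∈ (A ∪ B) ∩ (R1 ∩ R2), Complex.exp (G w) = φ w := fun w hw => by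
    rw [hGg hw, hge w hw]
  have hGc : Continuous fun w => Complex.exp (G w) := Complex.continuous_exp.comp hG
  obtain ⟨a, ha, haa1, haa2⟩ := Helly.glue (hA.inter hR1) (hA.inter hR2) ha1
    (ha2.mul hGc.continuousOn) (by
      rintro w ⟨hwA, hw1⟩ ⟨-, hw2⟩
      simp only [Pi.mul_apply]
      rw [hGe w ⟨Or.inl hwA, hw1, hw2⟩, hφA ⟨hwA, hw1, hw2⟩]
      simp only
      rw [mul_div_cancel₀ _ (ha20 w ⟨hwA, hw2⟩)])
  obtain ⟨b, hb, hbb1, hbb2⟩ := Helly.glue (hB.inter hR1) (hB.inter hR2) hb1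
    (hb2.mul hGc.continuousOn) (by
      rintro w ⟨hwA, hw1⟩ ⟨-, hw2⟩
      simp only [Pi.mul_apply]
      rw [hGe w ⟨Or.inr hwA, hw1, hw2⟩, hφB ⟨hwA, hw1, hw2⟩]
      simp only
      rw [mul_div_cancel₀ _ (hb20 w ⟨hwA, hw2⟩)])
  refine ⟨a, b, by rwa [inter_union_distrib_left], by rwa [inter_union_distrib_left], ?_, ?_, ?_⟩
  · rintro w ⟨hw, hw1 | hw1⟩
    · rw [haa1 ⟨hw, hw1⟩]; exact ha10 w ⟨hw, hw1⟩
    · rw [haa2 ⟨hw, hw1⟩]; exact mul_ne_zero (ha20 w ⟨hw, hw1⟩) (Complex.exp_ne_zero _)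
  · rintro w ⟨hw, hw1 | hw1⟩
    · rw [hbb1 ⟨hw, hw1⟩]; exact hb10 w ⟨hw, hw1⟩
    · rw [hbb2 ⟨hw, hw1⟩]; exact mul_ne_zero (hb20 w ⟨hw, hw1⟩) (Complex.exp_ne_zero _)
  · rintro w hA hB (hw | hw)
    · rw [haa1 ⟨hA, hw⟩, hbb1 ⟨hB, hw⟩, h1 w hA hB hw]
    · rw [haa2 ⟨hA, hw⟩, hbb2 ⟨hB, hw⟩]
      simp only [Pi.mul_apply]
      rw [← h2 w hA hB hw, mul_assoc]

lemma split_small {A B : Set ℂ} (hA : IsClosed A) (hB : IsClosed B) {u : ℂ → ℂ} {R : Set ℂ}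
    (hR : IsClosed R) (h : HasLog u (A ∩ B ∩ R)) : Split A B u R := by
  obtain ⟨g, hg, he⟩ := h
  obtain ⟨G, hG, hGg⟩ := tietze ((hA.inter hB).inter hR) hg
  refine ⟨fun w => Complex.exp (G w), fun _ => 1, (Complex.continuous_exp.comp hG).continuousOn,
    continuousOn_const, fun w _ => Complex.exp_ne_zero _, fun _ _ => one_ne_zero, ?_⟩
  intro w hwA hwB hw
  simp only
  rw [hGg ⟨⟨hwA, hwB⟩, hw⟩, he w ⟨⟨hwA, hwB⟩, hw⟩, mul_one]

theorem split {A B : Set ℂ} (hA : IsCompact A) (hB : IsCompact B) {u : ℂ → ℂ}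
    (hu : ContinuousOn u (A ∩ B)) (hu0 : ∀ w ∈ A, w ∈ B → u w ≠ 0) : Split A B u univ := by
  obtain ⟨δ, hδ, hs⟩ := log_small (hA.inter hB) hu (fun w hw => hu0 w hw.1 hw.2)
  obtain ⟨L, hL⟩ := (hA.union hB).isBounded.subset_closedBall 0
  have hL' : ∀ w ∈ A ∪ B, ‖w‖ ≤ L := fun w hw => by simpa using hL hw
  set d := δ / 3 with hdd
  have hdp : 0 < d := by positivity
  have hAc := hA.isClosed
  have hBc := hB.isClosed
  obtain ⟨N, hN⟩ := exists_nat_gt ((2 * L + 1) / d)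
  rw [div_lt_iff₀ hdp] at hN
  have hre := Complex.continuous_re
  have him := Complex.continuous_im
  have hempty : ∀ R : Set ℂ, (∀ w ∈ R, w ∉ A ∪ B) → Split A B u R := by
    intro R hR
    exact ⟨fun _ => 1, fun _ => 1, continuousOn_const, continuousOn_const, fun _ _ => one_ne_zero,
      fun _ _ => one_ne_zero, fun w hw _ hwR => (hR w hwR (Or.inl hw)).elim⟩
  have strip : ∀ c : ℝ, ∀ k : ℕ,
      Split A B u {w | (c ≤ w.re ∧ w.re ≤ c + d) ∧ w.im ≤ -L - 1 + k * d} := by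
    intro c k
    induction k with
    | zero =>
      refine hempty _ fun w hw hwA => ?_
      have h1 := (Complex.abs_im_le_norm w).trans (hL' w hwA)
      have h2 := hw.2
      have := neg_abs_le w.im
      simp only [Nat.cast_zero, zero_mul] at h2
      linarith
    | succ k ih =>
      set e := -L - 1 + k * d with he
      have he' : -L - 1 + ((k + 1 : ℕ) : ℝ) * d = e + d := by push_cast; rw [he]; ring
      rw [he']
      have hst : IsClosed {w : ℂ | c ≤ w.re ∧ w.re ≤ c + d} :=
        (isClosed_le continuous_const hre).inter (isClosed_le hre continuous_const)
      have hcl1 : IsClosed {w : ℂ | (c ≤ w.re ∧ w.re ≤ c + d) ∧ w.im ≤ e} :=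
        hst.inter (isClosed_le him continuous_const)
      have hcl2 : IsClosed {w : ℂ | (c ≤ w.re ∧ w.re ≤ c + d) ∧ (e ≤ w.im ∧ w.im ≤ e + d)} :=
        hst.inter ((isClosed_le continuous_const him).inter (isClosed_le him continuous_const))
      refine (Split.glue hAc hBc hu0 hcl1 hcl2 ?_ ih (split_small hAc hBc hcl2 ?_)).mono ?_
      · intro φ hφ hφ0
        refine log_line ((hA.union hB).inter_right (hcl1.inter hcl2)) hre ?_ hφ hφ0
        rintro p ⟨-, ⟨-, hp1⟩, -, hp2, -⟩ q ⟨-, ⟨-, hq1⟩, -, hq2, -⟩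
        have : p.im - q.im = 0 := by linarith
        rw [dist_eq_norm]
        refine (Complex.norm_le_abs_re_add_abs_im _).trans ?_
        simp [this]
      · refine hs _ inter_subset_left ?_
        rintro p ⟨-, ⟨hp1, hp2⟩, hp3, hp4⟩ q ⟨-, ⟨hq1, hq2⟩, hq3, hq4⟩
        rw [dist_eq_norm]
        refine (Complex.norm_le_abs_re_add_abs_im _).trans_lt ?_
        simp only [Complex.sub_re, Complex.sub_im]
        have h1 : |p.re - q.re| ≤ d := by rw [abs_le]; constructor <;> linarith
        have h2 : |p.im - q.im| ≤ d := by rw [abs_le]; constructor <;> linarith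
        linarith
      · rintro w ⟨hw1, hw2⟩ -
        rcases le_total w.im e with h | h
        · exact Or.inl ⟨hw1, h⟩
        · exact Or.inr ⟨hw1, h, hw2⟩
  have strip' : ∀ c : ℝ, Split A B u {w | c ≤ w.re ∧ w.re ≤ c + d} := by
    intro c
    refine (strip c N).mono fun w hw hwA => ⟨hw, ?_⟩
    have := (le_abs_self _).trans ((Complex.abs_im_le_norm w).trans (hL' w hwA))
    linarith
  have key : ∀ k : ℕ, Split A B u {w | w.re ≤ -L - 1 + k * d} := by
    intro k
    induction k with
    | zero =>
      refine hempty _ fun w hw hwA => ?_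
      have h1 := (Complex.abs_re_le_norm w).trans (hL' w hwA)
      have h2 : w.re ≤ _ := hw
      have := neg_abs_le w.re
      simp only [Nat.cast_zero, zero_mul] at h2
      linarith
    | succ k ih =>
      set e := -L - 1 + k * d with he
      have he' : -L - 1 + ((k + 1 : ℕ) : ℝ) * d = e + d := by push_cast; rw [he]; ring
      rw [he']
      have hcl1 : IsClosed {w : ℂ | w.re ≤ e} := isClosed_le hre continuous_const
      have hcl2 : IsClosed {w : ℂ | e ≤ w.re ∧ w.re ≤ e + d} :=
        (isClosed_le continuous_const hre).inter (isClosed_le hre continuous_const)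
      refine (Split.glue hAc hBc hu0 hcl1 hcl2 ?_ ih (strip' e)).mono ?_
      · intro φ hφ hφ0
        refine log_line ((hA.union hB).inter_right (hcl1.inter hcl2)) him ?_ hφ hφ0
        rintro p ⟨-, hp1, hp2, -⟩ q ⟨-, hq1, hq2, -⟩
        have hp1' : p.re ≤ e := hp1
        have hq1' : q.re ≤ e := hq1
        have : p.re - q.re = 0 := by linarith
        rw [dist_eq_norm]
        refine (Complex.norm_le_abs_re_add_abs_im _).trans ?_
        simp [this]
      · rintro w hw -
        rcases le_total w.re e with h | h
        · exact Or.inl h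
        · exact Or.inr ⟨h, hw⟩
  refine (key N).mono fun w _ hwA => ?_
  have := (le_abs_self _).trans ((Complex.abs_re_le_norm w).trans (hL' w hwA))
  show w.re ≤ _
  linarith

end Helly


namespace Helly
open Set Filter Topology

lemma HasLog.glue_pt {f : ℂ → ℂ} {Y1 Y2 : Set ℂ} (h1 : IsClosed Y1) (h2 : IsClosed Y2)
    (hl1 : HasLog f Y1) (hl2 : HasLog f Y2) (p : ℂ) (hp1 : p ∈ Y1) (hp2 : p ∈ Y2)
    (h : ∀ w ∈ Y1, w ∈ Y2 → w = p) : HasLog f (Y1 ∪ Y2) := by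
  obtain ⟨g1, hg1, he1⟩ := hl1
  obtain ⟨g2, hg2, he2⟩ := hl2
  obtain ⟨g, hg, hgg1, hgg2⟩ := glue h1 h2 hg1 (g2 := fun w => g2 w + (g1 p - g2 p))
    (hg2.add continuousOn_const) (by intro w hw hw'; rw [h w hw hw']; ring)
  have hee : Complex.exp (g1 p - g2 p) = 1 := by
    rw [Complex.exp_sub, he1 p hp1, ← he2 p hp2, div_self (Complex.exp_ne_zero _)]
  refine ⟨g, hg, ?_⟩
  rintro w (hw | hw)
  · rw [hgg1 hw, he1 w hw]
  · rw [hgg2 hw]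
    simp only
    rw [Complex.exp_add, hee, he2 w hw, mul_one]

lemma clopen_split {X : Set ℂ} (hX : IsCompact X) {p q : ℂ} (hp : p ∈ X) (hq : q ∈ X)
    (h : q ∉ connectedComponentIn X p) : ∃ M N : Set ℂ, IsCompact M ∧ IsCompact N ∧
      M ∪ N = X ∧ Disjoint M N ∧ p ∈ M ∧ q ∈ N := by
  have : CompactSpace X := isCompact_iff_compactSpace.1 hX
  rw [connectedComponentIn_eq_image hp, connectedComponent_eq_iInter_isClopen] at h
  have h' : (⟨q, hq⟩ : X) ∉ ⋂ s : { s : Set X // IsClopen s ∧ (⟨p, hp⟩ : X) ∈ s }, (s : Set X) :=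
    fun hh => h ⟨_, hh, rfl⟩
  rw [mem_iInter] at h'
  push Not at h'
  obtain ⟨⟨s, hs, hps⟩, hqs⟩ := h'
  refine ⟨Subtype.val '' s, Subtype.val '' sᶜ, hs.isClosed.isCompact.image continuous_subtype_val,
    hs.compl.isClosed.isCompact.image continuous_subtype_val, ?_, ?_, ⟨_, hps, rfl⟩, ⟨_, hqs, rfl⟩⟩
  · rw [← image_union, union_compl_self, image_univ, Subtype.range_val]
  · exact (disjoint_image_iff Subtype.val_injective).2 disjoint_compl_right

lemma bridge {M N : Set ℂ} (hM : IsClosed M) (hN : IsClosed N) {p q : ℂ}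
    (hp : p ∈ M) (hq : q ∈ N) : ∃ p' ∈ M, ∃ q' ∈ N, p' ∈ segment ℝ p q ∧ q' ∈ segment ℝ p q ∧
      ∀ w ∈ segment ℝ p' q', w ∈ M ∪ N → w = p' ∨ w = q' := by
  set f : ℝ → ℂ := fun t => AffineMap.lineMap p q t with hf
  have hfc : Continuous f := AffineMap.lineMap_continuous
  have hA : IsCompact (Icc (0:ℝ) 1 ∩ f ⁻¹' N) := isCompact_Icc.inter_right (hN.preimage hfc)
  obtain ⟨t1, ⟨ht1, ht1N⟩, hmin⟩ := hA.exists_isLeast ⟨1, by simp, by simpa [hf] using hq⟩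
  have hB : IsCompact (Icc (0:ℝ) t1 ∩ f ⁻¹' M) := isCompact_Icc.inter_right (hM.preimage hfc)
  obtain ⟨t0, ⟨ht0, ht0M⟩, hmax⟩ := hB.exists_isGreatest ⟨0, by simpa using ht1.1, by simpa [hf] using hp⟩
  have hseg : ∀ t ∈ Icc (0:ℝ) 1, f t ∈ segment ℝ p q := fun t ht => by
    rw [segment_eq_image_lineMap]; exact ⟨t, ht, rfl⟩
  refine ⟨f t0, ht0M, f t1, ht1N, hseg _ ⟨ht0.1, ht0.2.trans ht1.2⟩, hseg _ ht1, ?_⟩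
  intro w hw hwMN
  have hw' : w ∈ f '' Icc t0 t1 := by
    rw [← segment_eq_Icc ht0.2]
    have := image_segment ℝ (AffineMap.lineMap p q : ℝ →ᵃ[ℝ] ℂ) t0 t1
    show w ∈ (AffineMap.lineMap p q : ℝ →ᵃ[ℝ] ℂ) '' _
    rw [this]; exact hw
  obtain ⟨t, ht, rfl⟩ := hw'
  rcases hwMN with h | h
  · left
    rw [le_antisymm (hmax ⟨⟨ht0.1.trans ht.1, ht.2⟩, h⟩) ht.1]
  · right
    rw [le_antisymm ht.2 (hmin ⟨⟨ht0.1.trans ht.1, ht.2.trans ht1.2⟩, h⟩)]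

lemma log_calc {η : ℝ} (hη : 0 < η) :
    Complex.log ((-(1/2:ℝ) : ℝ) - η * Complex.I) - Complex.log ((-(1/2:ℝ) : ℝ) + η * Complex.I) =
    -(Complex.log ((1/2:ℝ) - η * Complex.I) - Complex.log ((1/2:ℝ) + η * Complex.I))
      - 2 * Real.pi * Complex.I := by
  set a : ℂ := (1/2:ℝ) - η * Complex.I with ha
  set b : ℂ := (1/2:ℝ) + η * Complex.I with hb
  have h1 : (((-(1/2:ℝ) : ℝ) : ℂ) - η * Complex.I) = -b := by rw [hb]; push_cast; ring
  have h2 : (((-(1/2:ℝ) : ℝ) : ℂ) + η * Complex.I) = -a := by rw [ha]; push_cast; ring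
  have hai : a.im < 0 := by simp [ha, hη]
  have hbi : 0 < b.im := by simp [hb, hη]
  rw [h1, h2]
  simp only [Complex.log, Complex.arg_neg_eq_arg_sub_pi_of_im_pos hbi,
    Complex.arg_neg_eq_arg_add_pi_of_im_neg hai, norm_neg]
  push_cast
  ring

lemma log_calc2 {η : ℝ} (hη : 0 < η) :
    Complex.log ((1/2:ℝ) - η * Complex.I) - Complex.log ((1/2:ℝ) + η * Complex.I) =
    Complex.log (((1/2:ℝ) - η * Complex.I) / ((1/2:ℝ) + η * Complex.I)) := by
  set a : ℂ := (1/2:ℝ) - η * Complex.I with ha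
  set b : ℂ := (1/2:ℝ) + η * Complex.I with hb
  have ha0 : a ≠ 0 := fun h => by have := congrArg Complex.im h; simp [ha] at this; linarith
  have hb0 : b ≠ 0 := fun h => by have := congrArg Complex.im h; simp [hb] at this; linarith
  have har : |a.arg| < Real.pi / 2 := by
    rw [Complex.abs_arg_lt_pi_div_two_iff]; left; simp [ha]
  have hbr : |b.arg| < Real.pi / 2 := by
    rw [Complex.abs_arg_lt_pi_div_two_iff]; left; simp [hb]
  rw [abs_lt] at har hbr
  have : a / b = Complex.exp (Complex.log a - Complex.log b) := by
    rw [Complex.exp_sub, Complex.exp_log ha0, Complex.exp_log hb0]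
  rw [this, Complex.log_exp]
  · simp only [Complex.sub_im, Complex.log_im]; linarith
  · simp only [Complex.sub_im, Complex.log_im]; linarith

/-- closing up a connected compact set by a bridge separates the two sides of the bridge -/
lemma no_log_loop {C : Set ℂ} (hC : IsCompact C) (hCp : IsPreconnected C) {p q : ℂ} (hp : p ∈ C)
    (hq : q ∈ C) (hpq : p ≠ q) (h : ∀ w ∈ segment ℝ p q, w ∈ C → w = p ∨ w = q) :
    ∃ z, z ∉ C ∪ segment ℝ p q ∧ ¬ HasLog (fun w => w - z) (C ∪ segment ℝ p q) := by
  set v := q - p with hv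
  have hv0 : v ≠ 0 := sub_ne_zero.2 hpq.symm
  have hvn : 0 < ‖v‖ := norm_pos_iff.2 hv0
  set m := p + (1/2 : ℝ) * v with hm
  have hseg : ∀ s : ℝ, -(1/2) ≤ s → s ≤ 1/2 → m + s * v ∈ segment ℝ p q := by
    intro s hs1 hs2
    rw [segment_eq_image_lineMap]
    refine ⟨s + 1/2, ⟨by linarith, by linarith⟩, ?_⟩
    simp only [AffineMap.lineMap_apply, vsub_eq_sub, vadd_eq_add, Complex.real_smul, hm, hv]
    push_cast; ring
  have hseg' : ∀ w ∈ segment ℝ p q, ∃ s : ℝ, w = m + s * v := by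
    intro w hw
    rw [segment_eq_image_lineMap] at hw
    obtain ⟨t, -, rfl⟩ := hw
    refine ⟨t - 1/2, ?_⟩
    simp only [AffineMap.lineMap_apply, vsub_eq_sub, vadd_eq_add, Complex.real_smul, hm, hv]
    push_cast; ring
  have hwp : m + ((-(1/2) : ℝ) : ℂ) * v = p := by rw [hm]; push_cast; ring
  have hwq : m + ((1/2 : ℝ) : ℂ) * v = q := by rw [hm, hv]; push_cast; ring
  have hmC : m ∉ C := by
    intro hmC
    have := hseg 0 (by norm_num) (by norm_num)
    simp only [Complex.ofReal_zero, zero_mul, add_zero] at this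
    rcases h m this hmC with h1 | h1
    · rw [hm] at h1
      have : ((1/2:ℝ):ℂ) * v = 0 := by linear_combination h1
      simp [hv0] at this
    · rw [← hwq] at h1
      have : ((1/2:ℝ):ℂ) * v = 0 := by linear_combination -h1
      simp [hv0] at this
  set r := Metric.infDist m C with hr
  have hr0 : 0 < r := (hC.isClosed.notMem_iff_infDist_pos ⟨p, hp⟩).1 hmC
  have hrC : ∀ w ∈ C, r ≤ ‖w - m‖ := fun w hw => by
    rw [← dist_eq_norm, dist_comm]; exact Metric.infDist_le_dist_of_mem hw
  set η : ℝ := r / (4 * ‖v‖) with hη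
  have hη0 : 0 < η := by positivity
  have hηv : η * ‖v‖ = r / 4 := by rw [hη]; field_simp
  set e : ℂ := η * Complex.I * v with he
  have hen : ‖e‖ = r / 4 := by
    rw [he, norm_mul, norm_mul, Complex.norm_I, mul_one, Complex.norm_real, Real.norm_eq_abs,
      abs_of_pos hη0, hηv]
  have hzC : ∀ e' : ℂ, ‖e'‖ = r / 4 → m + e' ∉ C := fun e' he' hh => by
    have := hrC _ hh
    rw [add_sub_cancel_left, he'] at this
    linarith
  have hzs : ∀ η' : ℝ, η' ≠ 0 → m + η' * Complex.I * v ∉ segment ℝ p q := by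
    intro η' hη' hh
    obtain ⟨s, hs⟩ := hseg' _ hh
    have h1 : (η' * Complex.I : ℂ) = s := mul_right_cancel₀ hv0 (by linear_combination hs)
    have h2 := congrArg Complex.im h1
    simp at h2
    exact hη' h2
  have hz1 : m + e ∉ C ∪ segment ℝ p q := by
    rintro (hh | hh)
    · exact hzC _ hen hh
    · exact hzs η hη0.ne' hh
  have hz2 : m - e ∉ C ∪ segment ℝ p q := by
    rintro (hh | hh)
    · exact hzC (-e) (by rw [norm_neg, hen]) (by rwa [← sub_eq_add_neg])
    · refine hzs (-η) (by simpa using hη0.ne') ?_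
      convert hh using 1
      rw [he]; push_cast; ring
  by_contra hcon
  push Not at hcon
  obtain ⟨g, hg, hge⟩ := (hcon _ hz1).div (hcon _ hz2)
  have hnz : ∀ w ∈ C, w - (m - e) ≠ 0 := fun w hw h0 => hz2 (Or.inl (by
    rwa [← sub_eq_zero.1 h0]))
  -- on `C`
  have hrc : ∀ w ∈ C, ‖(w - (m + e)) / (w - (m - e)) - 1‖ < 1 := by
    intro w hw
    have h1 : (w - (m + e)) / (w - (m - e)) - 1 = (-2 * e) / (w - (m - e)) := by
      rw [eq_div_iff (hnz w hw), sub_mul, div_mul_cancel₀ _ (hnz w hw)]; ring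
    rw [h1, norm_div, div_lt_one (norm_pos_iff.2 (hnz w hw)), norm_mul, norm_neg, hen]
    have h2 := hrC w hw
    have h3 : ‖w - m‖ ≤ ‖w - (m - e)‖ + ‖e‖ := by
      rw [show w - m = (w - (m - e)) - e by ring]
      exact norm_sub_le _ _
    rw [hen] at h3
    simp
    linarith
  have hsl : ∀ w ∈ C, (w - (m + e)) / (w - (m - e)) ∈ Complex.slitPlane := fun w hw => by
    have := Complex.mem_slitPlane_of_norm_lt_one (hrc w hw)
    simpa using this
  have e1 := log_unique hCp (hg.mono subset_union_left)
    (g' := fun w => Complex.log ((w - (m + e)) / (w - (m - e))))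
    (ContinuousOn.clog (((continuousOn_id.sub continuousOn_const)).div
      (continuousOn_id.sub continuousOn_const) hnz) hsl)
    (fun w hw => by rw [hge w (Or.inl hw), Complex.exp_log (Complex.slitPlane_ne_zero (hsl w hw))])
    hp hq
  -- on the segment
  have hs1 : ∀ s : ℝ, (s : ℂ) - η * Complex.I ∈ Complex.slitPlane := fun s => by
    right; simp [hη0.ne']
  have hs2 : ∀ s : ℝ, (s : ℂ) + η * Complex.I ∈ Complex.slitPlane := fun s => by
    right; simp [hη0.ne']
  have hrat : ∀ s : ℝ, (m + s * v - (m + e)) / (m + s * v - (m - e)) =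
      (s - η * Complex.I) / (s + η * Complex.I) := fun s => by
    rw [← mul_div_mul_right ((s : ℂ) - η * Complex.I) _ hv0]
    congr 1 <;> rw [he] <;> ring
  have e2 := log_unique (A := ℝ) (Y := Icc (-(1/2)) (1/2)) isPreconnected_Icc
    (g := fun s => g (m + s * v))
    (g' := fun s => Complex.log (s - η * Complex.I) - Complex.log (s + η * Complex.I))
    (hg.comp (by fun_prop) (fun s hs => Or.inr (hseg s hs.1 hs.2)))
    ((ContinuousOn.clog (by fun_prop) fun s _ => hs1 s).sub
      (ContinuousOn.clog (by fun_prop) fun s _ => hs2 s))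
    (fun s hs => by
      rw [hge _ (Or.inr (hseg s hs.1 hs.2))]
      simp only
      rw [hrat, Complex.exp_sub,
        Complex.exp_log (Complex.slitPlane_ne_zero (hs1 s)),
        Complex.exp_log (Complex.slitPlane_ne_zero (hs2 s))])
    (p := -(1/2)) (q := 1/2) (by norm_num) (by norm_num)
  simp only [hwp, hwq] at e2
  rw [log_calc hη0, log_calc2 hη0] at e2
  have hrp := hrat (-(1/2))
  have hrq := hrat (1/2)
  rw [hwp] at hrp
  rw [hwq] at hrq
  have hinv : (((-(1/2) : ℝ) : ℂ) - η * Complex.I) / (((-(1/2) : ℝ) : ℂ) + η * Complex.I) =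
      ((((1/2 : ℝ) : ℂ) - η * Complex.I) / (((1/2 : ℝ) : ℂ) + η * Complex.I))⁻¹ := by
    rw [inv_div, ← neg_div_neg_eq]
    congr 1 <;> push_cast <;> ring
  have harg := (Complex.mem_slitPlane_iff_arg.1 (hsl q hq)).1
  rw [hrp, hinv, ← hrq, Complex.log_inv _ harg] at e1
  rw [← hrq] at e2
  have hfin : 2 * (Real.pi : ℂ) * Complex.I = 0 := by linear_combination e2 - e1
  exact Complex.two_pi_I_ne_zero hfin

end Helly


namespace Helly
open Set Filter Topology

lemma exists_notMem {ι : Type*} {K : ι → Set ℂ} (hKc : ∀ i, IsCompact (K i)) {C : Set ℂ}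
    (hmax : ∀ P, IsPreconnected P → (∀ i, P ⊆ K i) → (P ∩ C).Nonempty → P ⊆ C)
    {V : Set ℂ} (hV : IsPreconnected V) (hne : V.Nonempty) (hVC : Disjoint V C)
    (hm : (closure V ∩ C).Nonempty) : ∃ v ∈ V, ∃ i, v ∉ K i := by
  by_contra hcon
  push Not at hcon
  obtain ⟨v, hv⟩ := hne
  have := hmax (closure V) hV.closure
    (fun i => closure_minimal (fun v hv => hcon v hv i) (hKc i).isClosed) hm
  exact Set.disjoint_left.1 hVC hv (this (subset_closure hv))

lemma fill_comp {ι : Type*} {K : ι → Set ℂ} (hKc : ∀ i, IsCompact (K i))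
    (hKlog : ∀ i, ∀ z ∉ K i, HasLog (fun w => w - z) (K i)) {C : Set ℂ} (hC : IsCompact C)
    (hCK : ∀ i, C ⊆ K i)
    (hmax : ∀ P, IsPreconnected P → (∀ i, P ⊆ K i) → (P ∩ C).Nonempty → P ⊆ C) :
    fill C ⊆ C := by
  intro z hz
  by_contra hzC
  have hzV : z ∈ connectedComponentIn Cᶜ z := mem_connectedComponentIn hzC
  have hz' : Bornology.IsBounded (connectedComponentIn Cᶜ z) := hz
  have hfr := frontier_comp_subset hC.isClosed z
  obtain ⟨f, hf⟩ := compl_nonempty_of_bounded hz' ⟨z, hzV⟩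
  obtain ⟨v, hv, i, hvi⟩ := exists_notMem hKc hmax isPreconnected_connectedComponentIn
    ⟨z, hzV⟩ (Set.disjoint_left.2 fun w hw => connectedComponentIn_subset _ _ hw)
    ⟨f, frontier_subset_closure hf, hfr hf⟩
  exact no_log_frontier hz' hv ((hKlog i v hvi).mono (hfr.trans (hCK i)))

lemma fill_bridge {ι : Type*} {K : ι → Set ℂ} (hKc : ∀ i, IsCompact (K i))
    (hKlog : ∀ i, ∀ z ∉ K i, HasLog (fun w => w - z) (K i)) {C : Set ℂ} (hC : IsCompact C)
    (hCK : ∀ i, C ⊆ K i)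
    (hmax : ∀ P, IsPreconnected P → (∀ i, P ⊆ K i) → (P ∩ C).Nonempty → P ⊆ C)
    {B : Set ℂ} (hB : Convex ℝ B) (hBc : IsClosed B) {p q : ℂ}
    (hp : p ∈ B) (hq : q ∈ B)
    (hκ : ∀ w ∈ segment ℝ p q, w ∈ C → w = p ∨ w = q)
    (hQ : ∀ i, ∃ Q ⊆ K i ∩ B, IsPreconnected Q ∧ p ∈ Q ∧ q ∈ Q) :
    fill (C ∪ segment ℝ p q) ⊆ C ∪ B := by
  intro z hz
  by_contra hzE
  have hκB : segment ℝ p q ⊆ B := hB.segment_subset hp hq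
  have hκc : IsCompact (segment ℝ p q) := by
    rw [segment_eq_image_lineMap]; exact isCompact_Icc.image AffineMap.lineMap_continuous
  have hz' : Bornology.IsBounded (connectedComponentIn (C ∪ segment ℝ p q)ᶜ z) := hz
  have hsub : connectedComponentIn (C ∪ B)ᶜ z ⊆ connectedComponentIn (C ∪ segment ℝ p q)ᶜ z :=
    connectedComponentIn_mono z (compl_subset_compl.2 (union_subset_union_right _ hκB))
  have hb := hz'.subset hsub
  have hzV : z ∈ connectedComponentIn (C ∪ B)ᶜ z := mem_connectedComponentIn hzE
  have hfr := frontier_comp_subset (hC.isClosed.union hBc) z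
  have hVE := connectedComponentIn_subset (C ∪ B)ᶜ z
  have hfC : ∃ f ∈ frontier (connectedComponentIn (C ∪ B)ᶜ z), f ∈ C := by
    by_contra hcon
    push Not at hcon
    refine no_log_frontier hb hzV
      ((hasLog_convex hB hBc (fun h => hzE (Or.inr h))).mono fun w hw => ?_)
    exact (hfr hw).resolve_left (hcon w hw)
  obtain ⟨f, hf, hfC⟩ := hfC
  obtain ⟨v, hv, i, hvi⟩ := exists_notMem hKc hmax isPreconnected_connectedComponentIn
    ⟨z, hzV⟩ (Set.disjoint_left.2 fun w hw hwC => hVE hw (Or.inl hwC))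
    ⟨f, frontier_subset_closure hf, hfC⟩
  have hvB : v ∉ B := fun h => hVE hv (Or.inr h)
  obtain ⟨l, hl, hle⟩ := hKlog i v hvi
  obtain ⟨m, hm, hme⟩ := hasLog_convex hB hBc hvB
  obtain ⟨Q, hQs, hQp, hpQ, hqQ⟩ := hQ i
  have hu := log_unique hQp (hl.mono fun w hw => (hQs hw).1) (hm.mono fun w hw => (hQs hw).2)
    (fun w hw => by rw [hle w (hQs hw).1, hme w (hQs hw).2]) hpQ hqQ
  obtain ⟨g, hg, hg1, hg2⟩ := glue hC.isClosed hκc.isClosed (hl.mono (hCK i))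
    (g2 := fun w => m w + (l p - m p)) ((hm.mono hκB).add continuousOn_const) (by
      intro w hwC hwκ
      rcases hκ w hwκ hwC with rfl | rfl
      · ring
      · rw [hu]; ring)
  have hee : Complex.exp (l p - m p) = 1 := by
    rw [Complex.exp_sub, hle p (hQs hpQ).1, ← hme p hp, div_self (Complex.exp_ne_zero _)]
  refine no_log_frontier hz' (hsub hv) (HasLog.mono ⟨g, hg, ?_⟩
    (frontier_comp_subset (hC.isClosed.union hκc.isClosed) z))
  rintro w (hw | hw)
  · rw [hg1 hw, hle w (hCK i hw)]
  · rw [hg2 hw]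
    simp only
    rw [Complex.exp_add, hee, mul_one, hme w (hκB hw)]

theorem ULC_comp {K : Fin 3 → Set ℂ} (hKc : ∀ i, IsCompact (K i))
    (hKlog : ∀ i, ∀ z ∉ K i, HasLog (fun w => w - z) (K i)) (hKu : ∀ i, ULC (K i))
    {C : Set ℂ} (hC : IsCompact C) (hCp : IsPreconnected C)
    (hCK : ∀ i, C ⊆ K i)
    (hmax : ∀ P, IsPreconnected P → (∀ i, P ⊆ K i) → (P ∩ C).Nonempty → P ⊆ C) :
    ULC C := by
  intro ε hε
  have hδ : ∃ δ > 0, δ ≤ ε / 4 ∧ ∀ i, ∀ p ∈ K i, ∀ q ∈ K i, dist p q < δ →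
      ∃ Q ⊆ K i ∩ Metric.closedBall p (ε / 4), IsPreconnected Q ∧ p ∈ Q ∧ q ∈ Q := by
    choose δ hδ h using fun i => hKu i (ε / 4) (by positivity)
    refine ⟨min (min (δ 0) (δ 1)) (min (δ 2) (ε / 4)), ?_, ?_, ?_⟩
    · have := hδ 0; have := hδ 1; have := hδ 2; positivity
    · exact (min_le_right _ _).trans (min_le_right _ _)
    · intro i p hp q hq hpq
      refine h i p hp q hq (hpq.trans_le ?_)
      fin_cases i
      · exact (min_le_left _ _).trans (min_le_left _ _)
      · exact (min_le_left _ _).trans (min_le_right _ _)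
      · exact (min_le_right _ _).trans (min_le_left _ _)
  obtain ⟨δ, hδ, hδε, hδQ⟩ := hδ
  refine ⟨δ, hδ, fun p hp q hq hpq => ?_⟩
  by_cases hconn : q ∈ connectedComponentIn (C ∩ Metric.closedBall p ε) p
  · exact ⟨_, connectedComponentIn_subset _ _, isPreconnected_connectedComponentIn,
      mem_connectedComponentIn ⟨hp, Metric.mem_closedBall_self hε.le⟩, hconn⟩
  exfalso
  obtain ⟨M, N, hM, hN, hMN, hdis, hpM, hqN⟩ := clopen_split
    (hC.inter_right Metric.isClosed_closedBall) ⟨hp, Metric.mem_closedBall_self hε.le⟩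
    ⟨hq, by rw [Metric.mem_closedBall, dist_comm]; linarith⟩ hconn
  have hMC : M ⊆ C := fun w hw => (hMN.subset (Or.inl hw)).1
  have hNC : N ⊆ C := fun w hw => (hMN.subset (Or.inr hw)).1
  obtain ⟨p', hp', q', hq', hp's, hq's, hbr⟩ := bridge hM.isClosed hN.isClosed hpM hqN
  have hne : p' ≠ q' := fun h => Set.disjoint_left.1 hdis hp' (h ▸ hq')
  have hdseg : ∀ w ∈ segment ℝ p q, dist w p < δ := fun w hw =>
    (dist_le_of_mem_segment hw (left_mem_segment ℝ p q)).trans_lt hpq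
  have hsub : segment ℝ p' q' ⊆ segment ℝ p q := (convex_segment p q).segment_subset hp's hq's
  have hdpq : dist p' q' < δ := (dist_le_of_mem_segment hp's hq's).trans_lt hpq
  have hκ : ∀ w ∈ segment ℝ p' q', w ∈ C → w = p' ∨ w = q' := by
    intro w hw hwC
    refine hbr w hw (hMN.superset ⟨hwC, ?_⟩)
    have := hdseg w (hsub hw)
    rw [Metric.mem_closedBall]; linarith
  have hκc : IsCompact (segment ℝ p' q') := by
    rw [segment_eq_image_lineMap]; exact isCompact_Icc.image AffineMap.lineMap_continuous
  have hfill : fill (C ∪ segment ℝ p' q') ⊆ C ∪ Metric.closedBall p (ε / 2) := by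
    refine fill_bridge hKc hKlog hC hCK hmax (convex_closedBall _ _) Metric.isClosed_closedBall
      ?_ ?_ hκ ?_
    · have := hdseg p' hp's
      rw [Metric.mem_closedBall]; linarith
    · have := hdseg q' hq's
      rw [Metric.mem_closedBall]; linarith
    · intro i
      obtain ⟨Q, hQ, hQ'⟩ := hδQ i p' (hCK i (hMC hp')) q' (hCK i (hNC hq')) hdpq
      refine ⟨Q, fun w hw => ⟨(hQ hw).1, ?_⟩, hQ'⟩
      have h1 := hdseg p' hp's
      have h2 := Metric.mem_closedBall.1 (hQ hw).2
      have h3 := dist_triangle w p' p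
      rw [Metric.mem_closedBall]; linarith
  obtain ⟨z, hzD, hznl⟩ := no_log_loop hC hCp (hMC hp') (hNC hq') hne hκ
  have hDc : IsCompact (C ∪ segment ℝ p' q') := hC.union hκc
  have hzfill : z ∈ fill (C ∪ segment ℝ p' q') := by
    by_contra h
    exact hznl ((hasLog_fill hDc h).mono (subset_fill _))
  have hzV := mem_connectedComponentIn (F := (C ∪ segment ℝ p' q')ᶜ) hzD
  have hVb : Bornology.IsBounded (connectedComponentIn (C ∪ segment ℝ p' q')ᶜ z) := hzfill
  have hVB : connectedComponentIn (C ∪ segment ℝ p' q')ᶜ z ⊆ Metric.closedBall p (ε / 2) := by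
    intro w hw
    have h1 : w ∈ fill (C ∪ segment ℝ p' q') := by
      show Bornology.IsBounded (connectedComponentIn (C ∪ segment ℝ p' q')ᶜ w)
      rw [← connectedComponentIn_eq hw]; exact hVb
    exact (hfill h1).resolve_left fun hwC => connectedComponentIn_subset _ _ hw (Or.inl hwC)
  have hfrB : frontier (connectedComponentIn (C ∪ segment ℝ p' q')ᶜ z) ⊆
      Metric.closedBall p (ε / 2) :=
    frontier_subset_closure.trans (closure_minimal hVB Metric.isClosed_closedBall)
  have hfrD := frontier_comp_subset hDc.isClosed z
  have hzC : z ∉ C := fun h => hzD (Or.inl h)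
  have hlogC : HasLog (fun w => w - z) C := (hasLog_fill hC
    (fun h => hzC (fill_comp hKc hKlog hC hCK hmax h))).mono (subset_fill _)
  have hlogκ : HasLog (fun w => w - z) (segment ℝ p' q') :=
    hasLog_convex (convex_segment p' q') hκc.isClosed (fun h => hzD (Or.inr h))
  have hl1 : HasLog (fun w => w - z) (M ∪ segment ℝ p' q') := by
    refine HasLog.glue_pt hM.isClosed hκc.isClosed (hlogC.mono hMC) hlogκ p' hp'
      (left_mem_segment ℝ _ _) fun w hw hw' => ?_
    rcases hκ w hw' (hMC hw) with h | h
    · exact h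
    · exact (Set.disjoint_left.1 hdis hw (h ▸ hq')).elim
  have hl2 : HasLog (fun w => w - z) ((M ∪ segment ℝ p' q') ∪ N) := by
    refine HasLog.glue_pt (hM.union hκc).isClosed hN.isClosed hl1 (hlogC.mono hNC) q'
      (Or.inr (right_mem_segment ℝ _ _)) hq' fun w hw hw' => ?_
    rcases hw with hw | hw
    · exact (Set.disjoint_left.1 hdis hw hw').elim
    · rcases hκ w hw (hNC hw') with h | h
      · exact (Set.disjoint_left.1 hdis hp' (h ▸ hw')).elim
      · exact h
  refine no_log_frontier hVb hzV (hl2.mono fun w hw => ?_)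
  rcases hfrD hw with h | h
  · have h1 : w ∈ M ∪ N := hMN.superset ⟨h, by
      have := Metric.mem_closedBall.1 (hfrB hw)
      rw [Metric.mem_closedBall]; linarith⟩
    rcases h1 with h1 | h1
    · exact Or.inl (Or.inl h1)
    · exact Or.inr h1
  · exact Or.inl (Or.inr h)

end Helly


namespace Helly
open Set Filter Topology

def sq : Set (ℝ × ℝ) := Icc 0 1 ×ˢ Icc 0 1

structure Hom (S : Set ℂ) (γ δ : ℝ → ℂ) (H : ℝ × ℝ → ℂ) : Prop where
  cont : Continuous H
  mem : ∀ x, H x ∈ S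
  memsq : ∀ x, H x ∈ H '' sq
  zero : ∀ t ∈ Icc (0:ℝ) 1, H (0, t) = γ t
  one : ∀ t ∈ Icc (0:ℝ) 1, H (1, t) = δ t
  left : ∀ s, H (s, 0) = γ 0
  right : ∀ s, H (s, 1) = γ 1

lemma exists_hom {S : Set ℂ} (hS : SimplyConnectedSpace S) {γ δ : ℝ → ℂ} (hγ : Continuous γ)
    (hδ : Continuous δ) (hγS : ∀ t, γ t ∈ S) (hδS : ∀ t, δ t ∈ S) (h0 : γ 0 = δ 0)
    (h1 : γ 1 = δ 1) : ∃ H, Hom S γ δ H := by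
  let P : Path (⟨γ 0, hγS 0⟩ : S) ⟨γ 1, hγS 1⟩ :=
    { toFun := fun t => ⟨γ t, hγS t⟩
      continuous_toFun := by fun_prop
      source' := by simp
      target' := by simp }
  let Q : Path (⟨γ 0, hγS 0⟩ : S) ⟨γ 1, hγS 1⟩ :=
    { toFun := fun t => ⟨δ t, hδS t⟩
      continuous_toFun := by fun_prop
      source' := by simp [h0]
      target' := by simp [h1] }
  obtain ⟨F⟩ := SimplyConnectedSpace.paths_homotopic P Q
  have hz : projIcc (0:ℝ) 1 zero_le_one 0 = 0 := projIcc_left _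
  have ho : projIcc (0:ℝ) 1 zero_le_one 1 = 1 := projIcc_right _
  refine ⟨fun x => (F (projIcc 0 1 zero_le_one x.1, projIcc 0 1 zero_le_one x.2) : ℂ), ?_, ?_, ?_,
    ?_, ?_, ?_, ?_⟩
  · exact continuous_subtype_val.comp (F.continuous.comp
      ((continuous_projIcc.comp continuous_fst).prodMk (continuous_projIcc.comp continuous_snd)))
  · intro x; exact Subtype.property _
  · intro x
    refine ⟨((projIcc 0 1 zero_le_one x.1 : ℝ), (projIcc 0 1 zero_le_one x.2 : ℝ)),
      ⟨Subtype.property _, Subtype.property _⟩, ?_⟩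
    simp only [projIcc_val]
  · intro t ht
    simp only [hz, projIcc_of_mem zero_le_one ht]
    rw [F.apply_zero]; rfl
  · intro t ht
    simp only [ho, projIcc_of_mem zero_le_one ht]
    rw [F.apply_one]; rfl
  · intro s
    simp only [hz]
    rw [F.source]
  · intro s
    simp only [ho]
    rw [F.target]

/-- `f` has logarithmic increment `c` along `[0, 1]` -/
def Inc (f : ℝ → ℂ) (c : ℂ) : Prop :=
  ∃ g : ℝ → ℂ, Continuous g ∧ (∀ t ∈ Icc (0:ℝ) 1, Complex.exp (g t) = f t) ∧ g 1 - g 0 = c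

lemma Inc.unique {f : ℝ → ℂ} {c d : ℂ} (h : Inc f c) (h' : Inc f d) : c = d := by
  obtain ⟨g, hg, he, rfl⟩ := h
  obtain ⟨g', hg', he', rfl⟩ := h'
  have := log_unique (isPreconnected_Icc (a := (0:ℝ)) (b := 1)) hg.continuousOn hg'.continuousOn
    (fun t ht => by rw [he t ht, he' t ht]) (p := 0) (q := 1) (by simp) (by simp)
  linear_combination -this

lemma Inc.mul {f f' f'' : ℝ → ℂ} {c d : ℂ} (h : Inc f c) (h' : Inc f' d)
    (hf : ∀ t ∈ Icc (0:ℝ) 1, f'' t = f t * f' t) : Inc f'' (c + d) := by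
  obtain ⟨g, hg, he, rfl⟩ := h
  obtain ⟨g', hg', he', rfl⟩ := h'
  refine ⟨fun t => g t + g' t, hg.add hg', fun t ht => ?_, by ring⟩
  rw [Complex.exp_add, he t ht, he' t ht, hf t ht]

lemma Hom.inc {S A : Set ℂ} {γ δ : ℝ → ℂ} {H : ℝ × ℝ → ℂ} (hH : Hom S γ δ H)
    (hA : ∀ x, H x ∈ A) {u : ℂ → ℂ} (hu : ContinuousOn u A) (h0 : ∀ w ∈ A, u w ≠ 0) :
    ∃ c, Inc (fun t => u (γ t)) c ∧ Inc (fun t => u (δ t)) c := by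
  obtain ⟨G, hG, hGe⟩ := exists_log (fun x => u (H x)) (hu.comp_continuous hH.cont hA)
    (fun x => h0 _ (hA x))
  have key : ∀ e : ℝ, (∀ s, H (s, e) = H (0, e)) → G (1, e) = G (0, e) := by
    intro e he
    have := log_unique (A := ℝ) (Y := univ) isPreconnected_univ (g := fun s => G (s, e))
      (g' := fun _ => G (0, e)) (by fun_prop) (by fun_prop)
      (fun s _ => by simp only [hGe]; rw [he s]) (p := 0) (q := 1) trivial trivial
    linear_combination -this
  have k0 := key 0 fun s => by rw [hH.left, hH.left]
  have k1 := key 1 fun s => by rw [hH.right, hH.right]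
  refine ⟨G (0, 1) - G (0, 0), ⟨fun t => G (0, t), by fun_prop, fun t ht => ?_, rfl⟩,
    ⟨fun t => G (1, t), by fun_prop, fun t ht => ?_, by simp only [k0, k1]⟩⟩
  · rw [hGe, hH.zero t ht]
  · rw [hGe, hH.one t ht]

lemma isCompact_sq : IsCompact sq := isCompact_Icc.prod isCompact_Icc

lemma Hom.log {S : Set ℂ} (hS : SimplyConnectedSpace S) {γ δ : ℝ → ℂ} {H : ℝ × ℝ → ℂ}
    (hH : Hom S γ δ H) {z : ℂ} (hz : z ∉ S) : HasLog (fun w => w - z) (H '' sq) := by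
  have hnz : ∀ w ∈ S, w - z ≠ 0 := fun w hw h => hz (by rwa [← sub_eq_zero.1 h])
  obtain ⟨l, hl, hle⟩ := exists_log (fun x => H x - z) (hH.cont.sub continuous_const)
    (fun x => hnz _ (hH.mem x))
  have key : ∀ a b, H a = H b → l a = l b := by
    intro a b hab
    have hline : Continuous fun t : ℝ => (AffineMap.lineMap a b t : ℝ × ℝ) :=
      AffineMap.lineMap_continuous
    obtain ⟨F, hF⟩ := exists_hom hS (γ := fun t => H (AffineMap.lineMap a b t))
      (δ := fun _ => H a) (hH.cont.comp hline) continuous_const (fun t => hH.mem _)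
      (fun t => hH.mem _) (by simp) (by simp [hab])
    obtain ⟨c, hc1, hc2⟩ := hF.inc hF.mem (u := fun w => w - z) (by fun_prop) hnz
    have h1 : Inc (fun _ : ℝ => H a - z) 0 :=
      ⟨fun _ => l a, continuous_const, fun t _ => hle a, by simp⟩
    have h2 : Inc (fun t : ℝ => H (AffineMap.lineMap a b t) - z) (l b - l a) :=
      ⟨fun t => l (AffineMap.lineMap a b t), hl.comp hline, fun t _ => hle _, by simp⟩
    have := (hc1.unique h2).symm.trans (hc2.unique h1)
    exact (sub_eq_zero.1 this).symm
  choose! r hr1 hr2 using fun w (hw : w ∈ H '' sq) => hw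
  refine ⟨fun w => l (r w), ?_, fun w hw => by rw [hle, hr2 w hw]⟩
  rw [continuousOn_iff_isClosed]
  intro t ht
  refine ⟨H '' (sq ∩ l ⁻¹' t), ((isCompact_sq.inter_right (ht.preimage hl)).image
    hH.cont).isClosed, ?_⟩
  ext w
  constructor
  · rintro ⟨hw, hws⟩
    exact ⟨⟨r w, ⟨hr1 w hws, hw⟩, hr2 w hws⟩, hws⟩
  · rintro ⟨⟨a, ⟨ha, hat⟩, rfl⟩, hws⟩
    refine ⟨?_, hws⟩
    show l (r (H a)) ∈ t
    rw [key _ a (hr2 _ hws)]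
    exact hat

lemma Hom.pack {S : Set ℂ} (hS : SimplyConnectedSpace S) {γ δ : ℝ → ℂ} {H : ℝ × ℝ → ℂ}
    (hH : Hom S γ δ H) : ∃ K : Set ℂ, IsCompact K ∧ ULC K ∧
      (∀ z ∉ K, HasLog (fun w => w - z) K) ∧ K ⊆ S ∧ ∀ x, H x ∈ K := by
  have hc := isCompact_sq.image hH.cont
  refine ⟨fill (H '' sq), isCompact_fill hc, ULC.fill hc.isClosed
    (ULC_image isCompact_sq ((convex_Icc _ _).prod (convex_Icc _ _)) hH.cont.continuousOn),
    fun z hz => hasLog_fill hc hz,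
    fill_subset_of_log hc.isClosed (fun z hz _ => hH.log hS hz) ?_,
    fun x => subset_fill _ (hH.memsq x)⟩
  rintro _ ⟨x, -, rfl⟩
  exact hH.mem x

lemma exists_path {S : Set ℂ} (hS : IsPathConnected S) {x y : ℂ} (hx : x ∈ S) (hy : y ∈ S) :
    ∃ γ : ℝ → ℂ, Continuous γ ∧ γ 0 = x ∧ γ 1 = y ∧ ∀ t, γ t ∈ S := by
  have h := hS.joinedIn x hx y hy
  refine ⟨h.somePath.extend, h.somePath.continuous_extend, h.somePath.extend_zero,
    h.somePath.extend_one, fun t => ?_⟩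
  have : h.somePath.extend t ∈ range h.somePath.extend := ⟨t, rfl⟩
  rw [Path.extend_range] at this
  obtain ⟨s, hs⟩ := this
  rw [← hs]
  exact h.somePath_mem s

lemma same_component {K0 K1 K2 : Set ℂ} (h0 : IsCompact K0) (h1 : IsCompact K1)
    (h2 : IsCompact K2) {S0 S1 S2 : Set ℂ} {a b c : ℝ → ℂ} {H0 H1 H2 : ℝ × ℝ → ℂ}
    (hH0 : Hom S0 a b H0) (hH1 : Hom S1 a c H1) (hH2 : Hom S2 b c H2)
    (hK0 : ∀ x, H0 x ∈ K0) (hK1 : ∀ x, H1 x ∈ K1) (hK2 : ∀ x, H2 x ∈ K2)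
    (ha : Continuous a) {x y : ℂ} (ha0 : a 0 = x) (ha1 : a 1 = y)
    (hx : x ∈ K0 ∩ K1 ∩ K2) (hy : y ∈ K0 ∩ K1 ∩ K2) :
    y ∈ connectedComponentIn (K0 ∩ K1 ∩ K2) x := by
  by_contra hcon
  obtain ⟨M, N, hM, hN, hMN, hdis, hxM, hyN⟩ := clopen_split ((h0.inter h1).inter h2) hx hy hcon
  obtain ⟨h, hh0, hh1, -⟩ := exists_continuous_zero_one_of_isClosed hM.isClosed hN.isClosed hdis
  set e : ℂ → ℂ := fun w => Complex.exp (2 * Real.pi * Complex.I * (h w : ℝ)) with he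
  have hec : Continuous e := by
    have := h.continuous
    fun_prop
  have aK0 : ∀ t ∈ Icc (0:ℝ) 1, a t ∈ K0 := fun t ht => hH0.zero t ht ▸ hK0 _
  have bK0 : ∀ t ∈ Icc (0:ℝ) 1, b t ∈ K0 := fun t ht => hH0.one t ht ▸ hK0 _
  have aK1 : ∀ t ∈ Icc (0:ℝ) 1, a t ∈ K1 := fun t ht => hH1.zero t ht ▸ hK1 _
  have bK2 : ∀ t ∈ Icc (0:ℝ) 1, b t ∈ K2 := fun t ht => hH2.zero t ht ▸ hK2 _
  obtain ⟨u, hu, hu1, hu2⟩ := glue (h0.inter h1).isClosed (h0.inter h2).isClosed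
    (g1 := e) (g2 := fun _ => (1:ℂ)) hec.continuousOn continuousOn_const (by
      rintro w ⟨hw0, hw1⟩ ⟨-, hw2⟩
      have : w ∈ M ∪ N := hMN.superset ⟨⟨hw0, hw1⟩, hw2⟩
      rcases this with h' | h'
      · simp [he, hh0 h']
      · simp [he, hh1 h', Complex.exp_two_pi_mul_I])
  rw [← inter_union_distrib_left] at hu
  obtain ⟨α, β, hα, hβ, hα0, hβ0, hs⟩ := split h0 (h1.union h2) hu (by
    rintro w hw0 (hw | hw)
    · rw [hu1 ⟨hw0, hw⟩]; exact Complex.exp_ne_zero _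
    · rw [hu2 ⟨hw0, hw⟩]; exact one_ne_zero)
  simp only [inter_univ] at hα hβ hα0 hβ0
  obtain ⟨c0, hc0a, hc0b⟩ := hH0.inc hK0 hα hα0
  obtain ⟨c1, hc1a, hc1c⟩ := hH1.inc hK1 (hβ.mono subset_union_left) (fun w hw => hβ0 w (Or.inl hw))
  obtain ⟨c2, hc2b, hc2c⟩ := hH2.inc hK2 (hβ.mono subset_union_right)
    (fun w hw => hβ0 w (Or.inr hw))
  have e12 := hc1c.unique hc2c
  have hua : Inc (fun t => u (a t)) (2 * Real.pi * Complex.I) := by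
    refine ⟨fun t => 2 * Real.pi * Complex.I * (h (a t) : ℝ), ?_, ?_, ?_⟩
    · have := h.continuous
      fun_prop
    · intro t ht
      exact (hu1 ⟨aK0 t ht, aK1 t ht⟩).symm
    · simp [ha0, ha1, hh0 hxM, hh1 hyN]
  have hub : Inc (fun t => u (b t)) 0 := by
    refine ⟨fun _ => 0, continuous_const, ?_, by simp⟩
    intro t ht
    exact Complex.exp_zero.trans (hu2 ⟨bK0 t ht, bK2 t ht⟩).symm
  have i1 := (hua.mul hc1a (f'' := fun t => α (a t)) fun t ht =>
    (hs _ (aK0 t ht) (Or.inl (aK1 t ht)) trivial).symm).unique hc0a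
  have i2 := (hub.mul hc2b (f'' := fun t => α (b t)) fun t ht =>
    (hs _ (bK0 t ht) (Or.inr (bK2 t ht)) trivial).symm).unique hc0b
  exact Complex.two_pi_I_ne_zero (by linear_combination i1 - i2 - e12)

theorem main_complex {S0 S1 S2 : Set ℂ} (h0 : SimplyConnectedSpace S0)
    (h1 : SimplyConnectedSpace S1) (h2 : SimplyConnectedSpace S2)
    (h01 : IsPathConnected (S0 ∩ S1)) (h02 : IsPathConnected (S0 ∩ S2))
    (h12 : IsPathConnected (S1 ∩ S2)) {x y : ℂ} (hx : x ∈ S0 ∩ S1 ∩ S2)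
    (hy : y ∈ S0 ∩ S1 ∩ S2) : JoinedIn (S0 ∩ S1 ∩ S2) x y := by
  obtain ⟨⟨hx0, hx1⟩, hx2⟩ := hx
  obtain ⟨⟨hy0, hy1⟩, hy2⟩ := hy
  obtain ⟨a, ha, ha0, ha1, haS⟩ := exists_path h01 ⟨hx0, hx1⟩ ⟨hy0, hy1⟩
  obtain ⟨b, hb, hb0, hb1, hbS⟩ := exists_path h02 ⟨hx0, hx2⟩ ⟨hy0, hy2⟩
  obtain ⟨c, hc, hc0, hc1, hcS⟩ := exists_path h12 ⟨hx1, hx2⟩ ⟨hy1, hy2⟩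
  obtain ⟨H0, hH0⟩ := exists_hom h0 ha hb (fun t => (haS t).1) (fun t => (hbS t).1)
    (ha0.trans hb0.symm) (ha1.trans hb1.symm)
  obtain ⟨H1, hH1⟩ := exists_hom h1 ha hc (fun t => (haS t).2) (fun t => (hcS t).1)
    (ha0.trans hc0.symm) (ha1.trans hc1.symm)
  obtain ⟨H2, hH2⟩ := exists_hom h2 hb hc (fun t => (hbS t).2) (fun t => (hcS t).2)
    (hb0.trans hc0.symm) (hb1.trans hc1.symm)
  obtain ⟨K0, hK0c, hK0u, hK0l, hK0S, hK0⟩ := hH0.pack h0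
  obtain ⟨K1, hK1c, hK1u, hK1l, hK1S, hK1⟩ := hH1.pack h1
  obtain ⟨K2, hK2c, hK2u, hK2l, hK2S, hK2⟩ := hH2.pack h2
  have hxK : x ∈ K0 ∩ K1 ∩ K2 := by
    refine ⟨⟨?_, ?_⟩, ?_⟩
    · rw [← ha0, ← hH0.left 0]; exact hK0 _
    · rw [← ha0, ← hH1.left 0]; exact hK1 _
    · rw [← hb0, ← hH2.left 0]; exact hK2 _
  have hyK : y ∈ K0 ∩ K1 ∩ K2 := by
    refine ⟨⟨?_, ?_⟩, ?_⟩
    · rw [← ha1, ← hH0.right 0]; exact hK0 _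
    · rw [← ha1, ← hH1.right 0]; exact hK1 _
    · rw [← hb1, ← hH2.right 0]; exact hK2 _
  have hcomp := same_component hK0c hK1c hK2c hH0 hH1 hH2 hK0 hK1 hK2 ha ha0 ha1 hxK hyK
  have hZ : IsCompact (K0 ∩ K1 ∩ K2) := (hK0c.inter hK1c).inter hK2c
  have hsub := connectedComponentIn_subset (K0 ∩ K1 ∩ K2) x
  have hxC := mem_connectedComponentIn hxK
  have hpre := isPreconnected_connectedComponentIn (x := x) (F := K0 ∩ K1 ∩ K2)
  have hCcl : IsClosed (connectedComponentIn (K0 ∩ K1 ∩ K2) x) := by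
    rw [← closure_subset_iff_isClosed]
    exact hpre.closure.subset_connectedComponentIn (subset_closure hxC)
      (closure_minimal hsub hZ.isClosed)
  have hCc := hZ.of_isClosed_subset hCcl hsub
  have hK : ∀ P : Fin 3 → Set ℂ → Prop, P 0 K0 → P 1 K1 → P 2 K2 →
      ∀ i, P i ((![K0, K1, K2] : Fin 3 → Set ℂ) i) := by
    intro P p0 p1 p2 i
    fin_cases i
    · exact p0
    · exact p1
    · exact p2
  have hU : ULC (connectedComponentIn (K0 ∩ K1 ∩ K2) x) := by
    refine ULC_comp (K := ![K0, K1, K2]) (hK (fun _ K => IsCompact K) hK0c hK1c hK2c)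
      (hK (fun _ K => ∀ z ∉ K, HasLog (fun w => w - z) K) hK0l hK1l hK2l)
      (hK (fun _ K => ULC K) hK0u hK1u hK2u) hCc hpre
      (hK (fun _ K => connectedComponentIn (K0 ∩ K1 ∩ K2) x ⊆ K) (fun w hw => (hsub hw).1.1)
        (fun w hw => (hsub hw).1.2) (fun w hw => (hsub hw).2)) ?_
    rintro P hP hPK ⟨w, hwP, hwC⟩
    rw [connectedComponentIn_eq hwC]
    exact hP.subset_connectedComponentIn hwP
      fun v hv => ⟨⟨hPK 0 hv, hPK 1 hv⟩, hPK 2 hv⟩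
  refine (joinedIn_of_ULC hCc hpre hU hxC hcomp).mono fun w hw => ?_
  exact ⟨⟨hK0S (hsub hw).1.1, hK1S (hsub hw).1.2⟩, hK2S (hsub hw).2⟩

end Helly

/-- If `S₀, S₁, S₂` are simply connected compact subsets of the plane `ℝ²` such that
the intersection of any two of them is path connected and `S₀ ∩ S₁ ∩ S₂ ≠ ∅`,
then `S₀ ∩ S₁ ∩ S₂` is path connected. -/
theorem intersection_three_simply_connected_pathConnected
    (S₀ S₁ S₂ : Set (EuclideanSpace ℝ (Fin 2)))
    (hc₀ : IsCompact S₀) (hc₁ : IsCompact S₁) (hc₂ : IsCompact S₂)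
    (hs₀ : SimplyConnectedSpace S₀) (hs₁ : SimplyConnectedSpace S₁)
    (hs₂ : SimplyConnectedSpace S₂)
    (h01 : IsPathConnected (S₀ ∩ S₁)) (h02 : IsPathConnected (S₀ ∩ S₂))
    (h12 : IsPathConnected (S₁ ∩ S₂))
    (hne : (S₀ ∩ S₁ ∩ S₂).Nonempty) :
    IsPathConnected (S₀ ∩ S₁ ∩ S₂) := by
  let e : EuclideanSpace ℝ (Fin 2) ≃ₜ ℂ :=
    Complex.orthonormalBasisOneI.repr.symm.toHomeomorph
  have hi := e.injective
  have hsc : ∀ S : Set (EuclideanSpace ℝ (Fin 2)), SimplyConnectedSpace S →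
      SimplyConnectedSpace (e '' S) := fun S hS =>
    (e.image S).symm.toHomotopyEquiv.simplyConnectedSpace
  have hp : ∀ S T : Set (EuclideanSpace ℝ (Fin 2)), IsPathConnected (S ∩ T) →
      IsPathConnected (e '' S ∩ e '' T) := fun S T h => by
    rw [← Set.image_inter hi]
    exact h.image e.continuous
  obtain ⟨x, hx⟩ := hne
  refine ⟨x, hx, fun {y} hy => ?_⟩
  have hm : ∀ w ∈ S₀ ∩ S₁ ∩ S₂, e w ∈ e '' S₀ ∩ e '' S₁ ∩ e '' S₂ := fun w hw =>
    ⟨⟨⟨w, hw.1.1, rfl⟩, ⟨w, hw.1.2, rfl⟩⟩, ⟨w, hw.2, rfl⟩⟩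
  have hj := Helly.main_complex (hsc _ hs₀) (hsc _ hs₁) (hsc _ hs₂) (hp _ _ h01) (hp _ _ h02)
    (hp _ _ h12) (hm x hx) (hm y hy)
  rw [← Set.image_inter hi, ← Set.image_inter hi] at hj
  have hj' := hj.map_continuousOn (f := e.symm) e.symm.continuous.continuousOn
  simpa [Set.image_image] using hj'
end

section
/- Let {Sᵢ}_{i ∈ I} be an arbitrary nonempty family of simply connected subsets of the plane ℝ², and let x be a point of the intersection ⋂_{i ∈ I} Sᵢ. Then the fundamental group of ⋂_{i ∈ I} Sᵢ based at x is trivial; that is, every loop in ⋂_{i ∈ I} Sᵢ based at x is null-homotopic within ⋂_{i ∈ I} Sᵢ. -/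
open Set Metric Topology Filter
open scoped unitInterval

namespace PlanePi1

/-- The points that can be connected to infinity in the complement of `Y`. -/
def outer (Y : Set ℂ) : Set ℂ :=
  {z | ∃ S : Set ℂ, IsConnected S ∧ z ∈ S ∧ ¬ Bornology.IsBounded S ∧ Disjoint S Y}

/-- The set `Y` with its holes filled. -/
def hull (Y : Set ℂ) : Set ℂ := (outer Y)ᶜ

lemma isConnected_exterior (c : ℂ) (r : ℝ) (hr : 0 ≤ r) : IsConnected {z : ℂ | r < dist z c} := by
  rcases hr.eq_or_lt with rfl | hr
  · have : {z : ℂ | 0 < dist z c} = {c}ᶜ := by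
      ext z; simp [dist_pos]
    rw [this]
    exact isConnected_compl_singleton_of_one_lt_rank (by simp [Complex.rank_real_complex]) c
  · have h1 : IsConnected {w : ℂ | Real.log r < w.re} :=
      ⟨⟨(Real.log r + 1 : ℝ), by
        rw [mem_ofPred_eq, Complex.ofReal_re]; linarith⟩,
        (convex_halfSpace_re_gt _).isPreconnected⟩
    have h2 : {z : ℂ | r < dist z c} = (fun w => c + Complex.exp w) '' {w : ℂ | Real.log r < w.re} := by
      ext z
      constructor
      · intro hz
        have hz' : r < dist z c := hz
        have hne : z - c ≠ 0 := by
          intro h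
          rw [dist_eq_norm, h, norm_zero] at hz'
          linarith
        refine ⟨Complex.log (z - c), ?_, ?_⟩
        · rw [mem_ofPred_eq, Complex.log_re, ← dist_eq_norm]
          exact Real.log_lt_log hr hz'
        · simp [Complex.exp_log hne]
      · rintro ⟨w, hw, rfl⟩
        show r < _
        have hw' : Real.log r < w.re := hw
        rw [dist_eq_norm, add_sub_cancel_left, Complex.norm_exp]
        exact (Real.log_lt_iff_lt_exp hr).1 hw'
    rw [h2]
    exact h1.image _ (by fun_prop)

lemma unbounded_exterior (c : ℂ) (r : ℝ) : ¬ Bornology.IsBounded {z : ℂ | r < dist z c} := by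
  intro h
  obtain ⟨R, hR⟩ := h.subset_closedBall c
  have h3 : (c + ((|r| + |R| + 1 : ℝ) : ℂ)) ∈ {z : ℂ | r < dist z c} := by
    show r < _
    rw [dist_eq_norm, add_sub_cancel_left, Complex.norm_real, Real.norm_eq_abs, abs_of_nonneg (by positivity)]
    have := le_abs_self r
    have := abs_nonneg R
    linarith
  have h4 := hR h3
  rw [mem_closedBall, dist_eq_norm, add_sub_cancel_left, Complex.norm_real, Real.norm_eq_abs,
    abs_of_nonneg (by positivity)] at h4
  have := le_abs_self R
  have := abs_nonneg r
  linarith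

lemma exterior_subset_outer {Y : Set ℂ} {c : ℂ} {r : ℝ} (hr : 0 ≤ r) (h : Y ⊆ closedBall c r) :
    {z : ℂ | r < dist z c} ⊆ outer Y := fun z hz =>
  ⟨_, isConnected_exterior c r hr, hz, unbounded_exterior c r, by
    rw [Set.disjoint_left]
    intro w hw hwY
    exact absurd (mem_closedBall.1 (h hwY)) (not_le.2 hw)⟩

lemma hull_subset_closedBall {Y : Set ℂ} {c : ℂ} {r : ℝ} (hr : 0 ≤ r) (h : Y ⊆ closedBall c r) :
    hull Y ⊆ closedBall c r := by
  intro z hz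
  by_contra hcon
  exact hz (exterior_subset_outer hr h (by simpa using hcon))

lemma outer_disjoint {Y : Set ℂ} : Disjoint (outer Y) Y := by
  rw [Set.disjoint_left]
  rintro z ⟨S, _, hz, _, hd⟩ hzY
  exact Set.disjoint_left.1 hd hz hzY

lemma subset_hull {Y : Set ℂ} : Y ⊆ hull Y := fun z hz h =>
  Set.disjoint_left.1 outer_disjoint h hz

/-- absorbing property -/
lemma outer_absorb {Y A : Set ℂ} (hA : IsPreconnected A) (hd : Disjoint A Y) {z w : ℂ}
    (hz : z ∈ A) (hzo : z ∈ outer Y) (hw : w ∈ A) : w ∈ outer Y := by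
  obtain ⟨S, hS, hzS, hb, hSd⟩ := hzo
  refine ⟨S ∪ A, ⟨⟨z, Or.inl hzS⟩, hS.2.union z hzS hz hA⟩, Or.inr hw,
    fun h => hb (h.subset subset_union_left), ?_⟩
  exact Set.disjoint_union_left.2 ⟨hSd, hd⟩

lemma outer_isOpen {Y : Set ℂ} (hY : IsClosed Y) : IsOpen (outer Y) := by
  rw [Metric.isOpen_iff]
  intro z hz
  have hzY : z ∈ Yᶜ := fun h => Set.disjoint_left.1 outer_disjoint hz h
  obtain ⟨e, he, hb⟩ := Metric.isOpen_iff.1 hY.isOpen_compl z hzY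
  refine ⟨e, he, fun w hw => ?_⟩
  exact outer_absorb (convex_ball z e).isPreconnected
    (Set.disjoint_left.2 fun a ha => hb ha) (mem_ball_self he) hz hw

lemma hull_isClosed {Y : Set ℂ} (hY : IsClosed Y) : IsClosed (hull Y) :=
  (outer_isOpen hY).isClosed_compl

lemma outer_union_isClosed {Y : Set ℂ} (hY : IsClosed Y) : IsClosed (outer Y ∪ Y) := by
  rw [← isOpen_compl_iff, Metric.isOpen_iff]
  intro z hz
  rw [mem_compl_iff, mem_union, not_or] at hz
  obtain ⟨e, he, hb⟩ := Metric.isOpen_iff.1 hY.isOpen_compl z hz.2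
  refine ⟨e, he, fun w hw => ?_⟩
  rintro (h | h)
  · exact hz.1 (outer_absorb (convex_ball z e).isPreconnected
      (Set.disjoint_left.2 fun a ha => hb ha) hw h (mem_ball_self he))
  · exact hb hw h

lemma outer_isPreconnected {Y : Set ℂ} (hY : Bornology.IsBounded Y) : IsPreconnected (outer Y) := by
  obtain ⟨r, hr, hYr⟩ := hY.subset_closedBall_lt 0 (0 : ℂ)
  set E := {z : ℂ | r < dist z 0} with hE
  have hEc : IsConnected E := isConnected_exterior 0 r hr.le
  obtain ⟨e, he⟩ := hEc.1
  have hEo := exterior_subset_outer hr.le hYr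
  refine isPreconnected_of_forall e fun z hz => ?_
  obtain ⟨S, hS, hzS, hb, hSd⟩ := hz
  have hmeet : (S ∩ E).Nonempty := by
    by_contra hcon
    apply hb
    refine (isBounded_closedBall (x := (0 : ℂ)) (r := r)).subset fun w hw => ?_
    by_contra hw'
    exact hcon ⟨w, hw, by simpa [hE] using hw'⟩
  obtain ⟨w, hwS, hwE⟩ := hmeet
  refine ⟨S ∪ E, ?_, Or.inr he, Or.inl hzS, hS.2.union w hwS hwE hEc.2⟩
  rintro a (ha | ha)
  · exact ⟨S, hS, ha, hb, hSd⟩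
  · exact hEo ha

lemma hull_subset_hull {Y Y' : Set ℂ} (h : Y' ⊆ hull Y) (hY : Bornology.IsBounded Y) :
    hull Y' ⊆ hull Y := by
  intro z hz hzo
  apply hz
  obtain ⟨r, hr, hYr⟩ := hY.subset_closedBall_lt 0 (0 : ℂ)
  refine ⟨outer Y, ⟨⟨z, hzo⟩, outer_isPreconnected hY⟩, hzo, ?_, ?_⟩
  · intro hb
    exact unbounded_exterior 0 r (hb.subset (exterior_subset_outer hr.le hYr))
  · exact Set.disjoint_left.2 fun a ha hb => h hb ha

/-- If a segment from a point of the hull meets `Y`, then there is a first hit. -/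
lemma hull_hit {Y : Set ℂ} (hY : IsClosed Y) {x z : ℂ} (hx : x ∈ hull Y)
    (h : (segment ℝ x z ∩ Y).Nonempty) :
    ∃ y ∈ Y, y ∈ segment ℝ x z ∧ segment ℝ x y ⊆ hull Y := by
  let f : ℝ → ℂ := fun t => AffineMap.lineMap x z t
  have hf : Continuous f := AffineMap.lineMap_continuous
  let K : Set ℝ := Icc 0 1 ∩ f ⁻¹' Y
  have hKc : IsCompact K := isCompact_Icc.inter_right (hY.preimage hf)
  have hKn : K.Nonempty := by
    obtain ⟨y, hy, hyY⟩ := h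
    rw [segment_eq_image_lineMap] at hy
    obtain ⟨t, ht, rfl⟩ := hy
    exact ⟨t, ht, hyY⟩
  obtain ⟨t0, ht0, hmin⟩ := hKc.exists_isLeast hKn
  have key : ∀ t ∈ Icc (0 : ℝ) t0, f t ∈ hull Y := by
    intro t ht
    rcases ht.2.eq_or_lt with rfl | hlt
    · exact subset_hull ht0.2
    · intro hcon
      apply hx
      have hpre : IsPreconnected (f '' Icc 0 t) := isPreconnected_Icc.image _ hf.continuousOn
      have h0 : f 0 = x := by simp [f]
      rw [← h0]
      refine outer_absorb hpre ?_ (mem_image_of_mem f (right_mem_Icc.2 ht.1)) hcon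
        (mem_image_of_mem f (left_mem_Icc.2 ht.1))
      rw [Set.disjoint_left]
      rintro _ ⟨s, hs, rfl⟩ hsY
      have : t0 ≤ s := hmin ⟨⟨hs.1, hs.2.trans (hlt.le.trans ht0.1.2)⟩, hsY⟩
      linarith [hs.2]
  refine ⟨f t0, ht0.2, ?_, ?_⟩
  · rw [segment_eq_image_lineMap]
    exact ⟨t0, ht0.1, rfl⟩
  · intro w hw
    rw [segment_eq_image_lineMap] at hw
    obtain ⟨s, hs, rfl⟩ := hw
    have : AffineMap.lineMap x (f t0) s = f (s * t0) := by
      simp only [f, AffineMap.lineMap_apply, vsub_eq_sub, vadd_eq_add, smul_eq_mul, Complex.real_smul]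
      push_cast
      ring
    rw [this]
    apply key
    constructor
    · exact mul_nonneg hs.1 ht0.1.1
    · have := ht0.1.1
      nlinarith [hs.2]

lemma hull_segment {Y : Set ℂ} {x z : ℂ} (hx : x ∈ hull Y)
    (h : ¬ (segment ℝ x z ∩ Y).Nonempty) : segment ℝ x z ⊆ hull Y := by
  intro w hw hcon
  apply hx
  refine outer_absorb (convex_segment x z).isPreconnected ?_ hw hcon (left_mem_segment ℝ x z)
  rw [Set.disjoint_left]
  exact fun a ha haY => h ⟨a, ha, haY⟩

lemma joinedIn_segment {S : Set ℂ} {x y : ℂ} (h : segment ℝ x y ⊆ S) : JoinedIn S x y :=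
  (((convex_segment x y).isPathConnected ⟨x, left_mem_segment ℝ x y⟩).joinedIn x
    (left_mem_segment ℝ x y) y (right_mem_segment ℝ x y)).mono h

lemma hull_joined {Y : Set ℂ} (hY : IsCompact Y) {x : ℂ} (hx : x ∈ hull Y) :
    ∃ y ∈ Y, JoinedIn (hull Y) x y := by
  obtain ⟨r, hr, hYr⟩ := hY.isBounded.subset_closedBall_lt 0 (0 : ℂ)
  obtain ⟨R, hR, hxR⟩ : ∃ R : ℝ, r < R ∧ ‖x‖ < R := ⟨max r ‖x‖ + 1, by
    linarith [le_max_left r ‖x‖], by linarith [le_max_right r ‖x‖]⟩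
  let z : ℂ := (R : ℂ)
  have hz : z ∉ hull Y := fun h => by
    have := hull_subset_closedBall hr.le hYr h
    rw [mem_closedBall, dist_zero_right, Complex.norm_real, Real.norm_eq_abs] at this
    linarith [le_abs_self R]
  have hne : (segment ℝ x z ∩ Y).Nonempty := by
    by_contra hcon
    exact hz (hull_segment hx hcon (right_mem_segment ℝ x z))
  obtain ⟨y, hyY, _, hs⟩ := hull_hit hY.isClosed hx hne
  exact ⟨y, hyY, joinedIn_segment hs⟩

lemma hull_pathConnected {Y : Set ℂ} (hY : IsCompact Y) (hp : IsPathConnected Y) :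
    IsPathConnected (hull Y) := by
  obtain ⟨y0, hy0, hj⟩ := hp
  refine ⟨y0, subset_hull hy0, fun {x} hx => ?_⟩
  obtain ⟨y, hy, hxy⟩ := hull_joined hY hx
  exact ((hj hy).mono subset_hull).trans hxy.symm

/-- Uniform local path connectedness of a Peano continuum. -/
lemma ulc_curve (γ : C(I, ℂ)) (ε : ℝ) (hε : 0 < ε) : ∃ δ > 0, ∀ y ∈ range γ, ∀ y' ∈ range γ,
    dist y y' < δ → JoinedIn (range γ ∩ closedBall y ε) y y' := by
  by_contra hcon
  push Not at hcon
  have h1 : ∀ n : ℕ, ∃ s t : I, dist (γ s) (γ t) < 1 / ((n : ℝ) + 1) ∧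
      ¬ JoinedIn (range γ ∩ closedBall (γ s) ε) (γ s) (γ t) := by
    intro n
    obtain ⟨_, ⟨s, rfl⟩, _, ⟨t, rfl⟩, h, h'⟩ := hcon (1 / ((n : ℝ) + 1)) (by positivity)
    exact ⟨s, t, h, h'⟩
  choose s t hst hn using h1
  obtain ⟨⟨a, b⟩, -, φ, hφ, hlim⟩ := isCompact_univ.tendsto_subseq
    (x := fun n => (s n, t n)) (fun n => mem_univ _)
  have ha : Tendsto (s ∘ φ) atTop (𝓝 a) := (continuous_fst.tendsto _).comp hlim
  have hb : Tendsto (t ∘ φ) atTop (𝓝 b) := (continuous_snd.tendsto _).comp hlim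
  have hab : γ a = γ b := by
    have h2 : Tendsto (fun n => dist (γ (s (φ n))) (γ (t (φ n)))) atTop (𝓝 (dist (γ a) (γ b))) :=
      ((γ.continuous.tendsto a).comp ha).dist ((γ.continuous.tendsto b).comp hb)
    have h3 : Tendsto (fun n => dist (γ (s (φ n))) (γ (t (φ n)))) atTop (𝓝 0) := by
      refine squeeze_zero (fun _ => dist_nonneg) (fun n => (hst (φ n)).le) ?_
      exact tendsto_one_div_add_atTop_nhds_zero_nat.comp hφ.tendsto_atTop
    exact dist_eq_zero.1 (tendsto_nhds_unique h2 h3)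
  have key : ∀ c : I, ∀ᶠ u in 𝓝 c, JoinedIn (range γ ∩ ball (γ c) (ε / 2)) (γ u) (γ c) := by
    intro c
    let g : ℝ → ℂ := IccExtend zero_le_one γ
    have hg : Continuous g := γ.continuous.Icc_extend'
    have hgc : ∀ u : I, g u = γ u := fun u => by simp [g]
    have hop : g ⁻¹' ball (γ c) (ε / 2) ∈ 𝓝 (c : ℝ) := by
      apply hg.continuousAt.preimage_mem_nhds
      rw [hgc]
      exact ball_mem_nhds _ (by positivity)
    obtain ⟨e, he, hUs⟩ := Metric.mem_nhds_iff.1 hop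
    filter_upwards [ball_mem_nhds c he] with u hu
    have hUp : IsPathConnected (ball (c : ℝ) e) :=
      (convex_ball (c : ℝ) e).isPathConnected ⟨_, mem_ball_self he⟩
    have := (hUp.joinedIn u hu c (mem_ball_self he)).map hg
    rw [hgc, hgc] at this
    refine this.mono ?_
    rintro _ ⟨v, hv, rfl⟩
    refine ⟨?_, hUs hv⟩
    rw [← IccExtend_range zero_le_one γ]
    exact mem_range_self v
  have e1 := ha.eventually (key a)
  have e2 := hb.eventually (key b)
  obtain ⟨n, h1, h2⟩ := (e1.and e2).exists
  apply hn (φ n)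
  rw [← hab] at h2
  refine (h1.trans h2.symm).mono ?_
  rintro w ⟨hw, hwb⟩
  refine ⟨hw, ?_⟩
  have := h1.source_mem.2
  rw [mem_ball] at *
  rw [mem_closedBall]
  calc dist w (γ (s (φ n))) ≤ dist w (γ a) + dist (γ (s (φ n))) (γ a) := dist_triangle_right _ _ _
    _ ≤ ε := by simp only [Function.comp] at this; linarith

lemma ulc_hull (γ : C(I, ℂ)) (ε : ℝ) (hε : 0 < ε) : ∃ δ > 0, ∀ x ∈ hull (range γ),
    ∀ x' ∈ hull (range γ), dist x x' < δ → JoinedIn (hull (range γ) ∩ closedBall x ε) x x' := by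
  obtain ⟨δ, hδ, h⟩ := ulc_curve γ (ε / 2) (by positivity)
  have hYc : IsCompact (range γ) := isCompact_range γ.continuous
  refine ⟨min δ (ε / 2), by positivity, fun x hx x' hx' hd => ?_⟩
  have hseg : segment ℝ x x' ⊆ closedBall x (ε / 2) :=
    (convex_closedBall x (ε / 2)).segment_subset (mem_closedBall_self (by positivity))
      (by rw [mem_closedBall, dist_comm]; exact (hd.trans_le (min_le_right _ _)).le)
  have hbb : closedBall x (ε / 2) ⊆ closedBall x ε := closedBall_subset_closedBall (by linarith)
  by_cases hm : (segment ℝ x x' ∩ range γ).Nonempty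
  · obtain ⟨y, hyY, hys, hyh⟩ := hull_hit hYc.isClosed hx hm
    rw [segment_symm] at hm
    obtain ⟨y', hyY', hys', hyh'⟩ := hull_hit hYc.isClosed hx' hm
    rw [segment_symm] at hys'
    have hyy : dist y y' < δ := by
      have hle : dist y y' ≤ dist x x' := by
        have h1 := Metric.diam_le_of_forall_dist_le (s := segment ℝ x x') (C := dist x x') dist_nonneg ?_
        · refine (Metric.dist_le_diam_of_mem ?_ hys hys').trans h1
          exact (isBounded_closedBall (x := x) (r := ε / 2)).subset hseg
        · intro p hp q hq
          rw [← convexHull_pair] at hp hq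
          have := Metric.dist_le_diam_of_mem
            (isBounded_convexHull.2 (Set.toFinite ({x, x'} : Set ℂ)).isBounded) hp hq
          rwa [convexHull_diam, Metric.diam_pair] at this
      exact hle.trans_lt (hd.trans_le (min_le_left _ _))
    have j1 : JoinedIn (hull (range γ) ∩ closedBall x ε) x y := joinedIn_segment
      (subset_inter hyh (((convex_segment x x').segment_subset (left_mem_segment ℝ _ _) hys).trans
        (hseg.trans hbb)))
    have j2 : JoinedIn (hull (range γ) ∩ closedBall x ε) x' y' := joinedIn_segment
      (subset_inter hyh' (((convex_segment x x').segment_subset (right_mem_segment ℝ _ _) hys').trans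
        (hseg.trans hbb)))
    have j3 : JoinedIn (hull (range γ) ∩ closedBall x ε) y y' := by
      refine (h y hyY y' hyY' hyy).mono (inter_subset_inter subset_hull ?_)
      refine closedBall_subset_closedBall' ?_
      have := hseg hys
      rw [mem_closedBall] at this
      linarith
    exact j1.trans (j3.trans j2.symm)
  · exact joinedIn_segment (subset_inter (hull_segment hx hm) (hseg.trans hbb))

end PlanePi1
namespace PlanePi1

section log

variable {A : Type*} [TopologicalSpace A] [SimplyConnectedSpace A] [LocallyPathConnectedSpace A]

lemma exists_log (f : A → ℂ) (hf : Continuous f) (h0 : ∀ a, f a ≠ 0) :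
    ∃ L : A → ℂ, Continuous L ∧ ∀ a, Complex.exp (L a) = f a := by
  obtain ⟨a0⟩ : Nonempty A := inferInstance
  obtain ⟨F, ⟨_, hF⟩, _⟩ := Complex.isCoveringMapOn_exp.existsUnique_continuousMap_lifts
    (⟨f, hf⟩ : C(A, ℂ)) (a₀ := a0) (e₀ := Complex.log (f a0)) (Complex.exp_log (h0 a0))
    (fun a => h0 a)
  exact ⟨F, F.continuous, fun a => congrFun hF a⟩

lemma log_unique (L M : A → ℂ) (hL : Continuous L) (hM : Continuous M)
    (h : ∀ a, Complex.exp (L a) = Complex.exp (M a)) (a0 : A) (h0 : L a0 = M a0) (a : A) :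
    L a = M a := by
  have := (Complex.isCoveringMapOn_exp.existsUnique_continuousMap_lifts
    (⟨fun a => Complex.exp (M a), by fun_prop⟩ : C(A, ℂ)) (a₀ := a0) (e₀ := M a0) rfl
    (fun a => Complex.exp_ne_zero _)).unique (y₁ := ⟨L, hL⟩) (y₂ := ⟨M, hM⟩)
    ⟨h0, funext h⟩ ⟨rfl, rfl⟩
  exact congrArg (fun F : C(A, ℂ) => F a) this

lemma log_const (L : A → ℂ) (hL : Continuous L) (c : ℂ) (h : ∀ a, Complex.exp (L a) = c)
    (a b : A) : L a = L b :=
  log_unique L (fun _ => L b) hL continuous_const (fun a => by rw [h, h]) b rfl a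

end log

lemma log_closed {Z : Type*} [TopologicalSpace Z] [SimplyConnectedSpace Z] (j : Z → ℂ)
    (hj : Continuous j) (γ : C(I, Z)) (p : ℂ) (hp : p ∉ range j)
    (θ : ℝ → ℂ) (hθ : Continuous θ) (hθe : ∀ t : I, Complex.exp (θ t) = j (γ t) - p)
    (s t : I) (hst : γ s = γ t) : θ s = θ t := by
  have hcv : ∀ u : I, (1 - (u : ℝ)) * s + u * t ∈ I := fun u =>
    (convex_Icc (0 : ℝ) 1) s.2 t.2 (by linarith [u.2.2]) u.2.1 (by ring)
  let P : Path (γ s) (γ s) :=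
    { toFun := fun u => γ ⟨(1 - (u : ℝ)) * s + u * t, hcv u⟩
      continuous_toFun := by fun_prop
      source' := by simp
      target' := by simp [hst] }
  obtain ⟨H⟩ := SimplyConnectedSpace.paths_homotopic P (Path.refl (γ s))
  let pr : ℝ → I := projIcc 0 1 zero_le_one
  have hpr : Continuous pr := continuous_projIcc
  let K : ℝ × ℝ → ℂ := fun q => j (H (pr q.1, pr q.2)) - p
  have hK : Continuous K := by
    have : Continuous fun q : ℝ × ℝ => H (pr q.1, pr q.2) := H.continuous.comp (by fun_prop)
    fun_prop
  obtain ⟨L, hL, hLe⟩ := exists_log K hK (fun q h => hp ⟨_, sub_eq_zero.1 h⟩)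
  have pr0 : pr 0 = 0 := projIcc_left _
  have pr1 : pr 1 = 1 := projIcc_right _
  have e1 : L (0, 0) = L (1, 0) := log_const (fun v : ℝ => L (v, 0)) (by fun_prop) (j (γ s) - p)
    (fun v => by rw [hLe]; simp [K, pr0]) 0 1
  have e2 : L (0, 1) = L (1, 1) := log_const (fun v : ℝ => L (v, 1)) (by fun_prop) (j (γ s) - p)
    (fun v => by rw [hLe]; simp [K, pr1]) 0 1
  have e3 : L (1, 0) = L (1, 1) := log_const (fun v : ℝ => L (1, v)) (by fun_prop) (j (γ s) - p)
    (fun v => by rw [hLe]; simp [K, pr1]) 0 1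
  have e4 := log_unique (fun u : ℝ => θ ((1 - (pr u : ℝ)) * s + pr u * t))
    (fun u : ℝ => L (0, u) - L (0, 0) + θ s) (by fun_prop) (by fun_prop) (fun u => by
      have h1 := hθe ⟨(1 - (pr u : ℝ)) * s + pr u * t, hcv (pr u)⟩
      simp only at h1
      rw [h1, Complex.exp_add, Complex.exp_sub, hLe, hLe, hθe]
      have h2 : K (0, 0) = j (γ s) - p := by simp [K, pr0]
      have h3 : K (0, u) = j (γ ⟨(1 - (pr u : ℝ)) * s + pr u * t, hcv (pr u)⟩) - p := by
        simp [K, pr0, P]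
      have h4 : j (γ s) - p ≠ 0 := fun h => hp ⟨_, sub_eq_zero.1 h⟩
      rw [h2, h3]
      field_simp) 0 (by simp [pr0]) 1
  simp only [pr1] at e4
  rw [e2, ← e3, ← e1, sub_self, zero_add] at e4
  rw [← e4]
  simp

lemma hull_subset_range {Z : Type*} [TopologicalSpace Z] [SimplyConnectedSpace Z] (j : Z → ℂ)
    (hj : Continuous j) (hinj : Function.Injective j) (γ : C(I, Z)) :
    hull (range fun t => j (γ t)) ⊆ range j := by
  intro p hpY
  by_contra hp
  set c : I → ℂ := fun t => j (γ t) with hc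
  have hcc : Continuous c := by fun_prop
  set Y := range c with hY
  have hYc : IsCompact Y := isCompact_range hcc
  let pr : ℝ → I := projIcc 0 1 zero_le_one
  have hpr : Continuous pr := continuous_projIcc
  obtain ⟨θ, hθ, hθe⟩ := exists_log (fun t : ℝ => c (pr t) - p) (by fun_prop)
    (fun q h => hp ⟨_, sub_eq_zero.1 h⟩)
  have hθe' : ∀ t : I, Complex.exp (θ t) = j (γ t) - p := fun t => by
    rw [hθe]; simp [pr, hc]
  have hclosed : ∀ s t : I, c s = c t → θ s = θ t := fun s t h =>
    log_closed j hj γ p hp θ hθ hθe' s t (hinj h)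
  have hq : IsQuotientMap (rangeFactorization c) :=
    IsQuotientMap.of_surjective_continuous rangeFactorization_surjective
      (hcc.subtype_mk _)
  let θ' : C(I, ℂ) := ⟨fun t => θ t, by fun_prop⟩
  have hfac : ∀ s t : I, rangeFactorization c s = rangeFactorization c t → θ' s = θ' t :=
    fun s t h => hclosed s t (congrArg Subtype.val h)
  let f : C(Y, ℂ) := IsQuotientMap.lift (f := (⟨_, hq.continuous⟩ : C(I, Y))) hq θ' (fun s t h => hfac s t h)
  have hf : ∀ t : I, f ⟨c t, mem_range_self t⟩ = θ t := fun t =>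
    congrArg (fun F : C(I, ℂ) => F t) (IsQuotientMap.lift_comp (f := (⟨_, hq.continuous⟩ : C(I, Y))) hq θ' (fun s t h => hfac s t h))
  obtain ⟨F, hF⟩ := ContinuousMap.exists_restrict_eq hYc.isClosed f
  have hFY : ∀ y ∈ Y, Complex.exp (F y) = y - p := by
    rintro _ ⟨t, rfl⟩
    have : F (c t) = f ⟨c t, mem_range_self t⟩ := by rw [← hF]; rfl
    rw [this, hf, hθe']
  classical
  let g : ℂ → ℂ := fun z => if z ∈ hull Y then Complex.exp (F z) else z - p
  have g1 : ∀ z ∈ hull Y, g z = Complex.exp (F z) := fun z hz => if_pos hz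
  have g2 : ∀ z ∈ outer Y ∪ Y, g z = z - p := by
    rintro z (hz | hz)
    · exact if_neg fun h => h hz
    · rw [g1 z (subset_hull hz), hFY z hz]
  have hg : Continuous g := by
    rw [← continuousOn_univ]
    have : (univ : Set ℂ) = hull Y ∪ (outer Y ∪ Y) := by
      symm
      rw [eq_univ_iff_forall]
      intro z
      by_cases h : z ∈ outer Y
      · exact Or.inr (Or.inl h)
      · exact Or.inl h
    rw [this]
    refine ContinuousOn.union_of_isClosed ?_ ?_ (hull_isClosed hYc.isClosed)
      (outer_union_isClosed hYc.isClosed)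
    · exact (Complex.continuous_exp.comp F.continuous).continuousOn.congr g1
    · exact (continuous_id.sub continuous_const).continuousOn.congr g2
  have hg0 : ∀ z, g z ≠ 0 := by
    intro z
    by_cases hz : z ∈ hull Y
    · rw [g1 z hz]; exact Complex.exp_ne_zero _
    · rw [g2 z (Or.inl (not_not.1 hz))]
      intro h
      exact hz (by rwa [sub_eq_zero.1 h])
  obtain ⟨L, hL, hLe⟩ := exists_log g hg hg0
  obtain ⟨r, hr, hYr⟩ := hYc.isBounded.subset_closedBall_lt 0 p
  have hcirc : ∀ t : ℝ, g (p + (r + 1 : ℝ) * Complex.exp (t * Complex.I)) =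
      (r + 1 : ℝ) * Complex.exp (t * Complex.I) := by
    intro t
    rw [g2, add_sub_cancel_left]
    left
    apply exterior_subset_outer hr.le hYr
    rw [mem_ofPred_eq, dist_eq_norm, add_sub_cancel_left, norm_mul, Complex.norm_exp_ofReal_mul_I,
      Complex.norm_real, Real.norm_eq_abs, mul_one]
    exact lt_of_lt_of_le (by linarith) (le_abs_self _)
  have hu := log_unique (fun t : ℝ => L (p + (r + 1 : ℝ) * Complex.exp (t * Complex.I)))
    (fun t : ℝ => L (p + (r + 1 : ℝ) * Complex.exp ((0 : ℝ) * Complex.I)) + t * Complex.I)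
    (by fun_prop) (by fun_prop) (fun t => by
      rw [Complex.exp_add, hLe, hLe, hcirc, hcirc]; simp) 0 (by simp) (2 * Real.pi)
  have h2 : Complex.exp (((2 * Real.pi : ℝ) : ℂ) * Complex.I) =
      Complex.exp (((0 : ℝ) : ℂ) * Complex.I) := by
    push_cast
    rw [Complex.exp_two_pi_mul_I]; simp
  simp only [h2] at hu
  have h3 : ((2 * Real.pi : ℝ) : ℂ) * Complex.I = 0 := by
    simpa using hu.symm
  simp [Real.pi_ne_zero] at h3

end PlanePi1
namespace PlanePi1

/-- closed unit grid cell -/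
def cell (i j : ℤ) : Set (ℝ × ℝ) := Icc (i : ℝ) (i + 1) ×ˢ Icc (j : ℝ) (j + 1)

/-- grid lines -/
def skel : Set (ℝ × ℝ) := {z | (∃ n : ℤ, z.1 = n) ∨ ∃ n : ℤ, z.2 = n}

lemma cell_isClosed (i j : ℤ) : IsClosed (cell i j) := isClosed_Icc.prod isClosed_Icc

lemma mem_cell_floor (z : ℝ × ℝ) : z ∈ cell ⌊z.1⌋ ⌊z.2⌋ :=
  ⟨⟨Int.floor_le _, (Int.lt_floor_add_one _).le⟩, ⟨Int.floor_le _, (Int.lt_floor_add_one _).le⟩⟩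

lemma floor_cases {x : ℝ} {i : ℤ} (h : x ∈ Icc (i : ℝ) (i + 1)) : ⌊x⌋ = i ∨ x = ((i + 1 : ℤ) : ℝ) := by
  rcases h.2.eq_or_lt with h1 | h1
  · right; rw [h1]; push_cast; rfl
  · left; exact Int.floor_eq_iff.2 ⟨h.1, h1⟩

lemma int_cases {i n : ℤ} (h : (n : ℝ) ∈ Icc (i : ℝ) (i + 1)) : n = i ∨ n = i + 1 := by
  have h1 : i ≤ n := by exact_mod_cast h.1
  have h2 : n ≤ i + 1 := by exact_mod_cast h.2
  omega

lemma cell_locallyFinite : LocallyFinite (fun p : ℤ × ℤ => cell p.1 p.2) := by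
  intro z
  refine ⟨ball z 1, ball_mem_nhds z one_pos, ?_⟩
  refine ((Set.finite_Icc (⌊z.1⌋ - 2) (⌊z.1⌋ + 2)).prod
    (Set.finite_Icc (⌊z.2⌋ - 2) (⌊z.2⌋ + 2))).subset ?_
  rintro ⟨i, j⟩ ⟨w, hw, hwz⟩
  rw [mem_ball, Prod.dist_eq, max_lt_iff, Real.dist_eq, Real.dist_eq, abs_lt, abs_lt] at hwz
  obtain ⟨⟨h1, h2⟩, h3, h4⟩ := hw
  have a1 := Int.floor_le z.1
  have a2 := Int.lt_floor_add_one z.1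
  have a3 := Int.floor_le z.2
  have a4 := Int.lt_floor_add_one z.2
  simp only at h1 h2 h3 h4
  refine ⟨⟨?_, ?_⟩, ?_, ?_⟩
  · have : (⌊z.1⌋ : ℝ) - 2 < i + 1 := by linarith [hwz.1.1]
    have : ⌊z.1⌋ - 2 < i + 1 := by exact_mod_cast this
    show ⌊z.1⌋ - 2 ≤ i
    omega
  · have : (i : ℝ) < ⌊z.1⌋ + 2 := by linarith [hwz.1.2]
    have : i < ⌊z.1⌋ + 2 := by exact_mod_cast this
    show i ≤ ⌊z.1⌋ + 2
    omega
  · have : (⌊z.2⌋ : ℝ) - 2 < j + 1 := by linarith [hwz.2.1]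
    have : ⌊z.2⌋ - 2 < j + 1 := by exact_mod_cast this
    show ⌊z.2⌋ - 2 ≤ j
    omega
  · have : (j : ℝ) < ⌊z.2⌋ + 2 := by linarith [hwz.2.2]
    have : j < ⌊z.2⌋ + 2 := by exact_mod_cast this
    show j ≤ ⌊z.2⌋ + 2
    omega

/-- Gluing maps defined on the grid cells. -/
lemma glue (P : Set (ℝ × ℝ)) (E : ℝ × ℝ → ℂ) (R : ℝ × ℝ → ℂ → Prop)
    (h : ∀ i j, ∃ G : ℝ × ℝ → ℂ, ContinuousOn G (cell i j \ P) ∧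
      (∀ z ∈ cell i j, z ∈ skel → G z = E z) ∧ ∀ z ∈ cell i j \ P, R z (G z)) :
    ∃ F : ℝ × ℝ → ℂ, ContinuousOn F Pᶜ ∧ (∀ z ∈ skel, F z = E z) ∧ ∀ z ∈ Pᶜ, R z (F z) := by
  classical
  choose G hGc hGE hGR using h
  let F : ℝ × ℝ → ℂ := fun z => if z ∈ skel then E z else G ⌊z.1⌋ ⌊z.2⌋ z
  have hF : ∀ i j, ∀ z ∈ cell i j, F z = G i j z := by
    intro i j z hz
    by_cases hs : z ∈ skel
    · rw [hGE i j z hz hs]; exact if_pos hs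
    · have h1 : ⌊z.1⌋ = i := (floor_cases hz.1).resolve_right fun h => hs (Or.inl ⟨_, h⟩)
      have h2 : ⌊z.2⌋ = j := (floor_cases hz.2).resolve_right fun h => hs (Or.inr ⟨_, h⟩)
      simp only [F, if_neg hs, h1, h2]
  refine ⟨F, ?_, fun z hz => if_pos hz, fun z hz => ?_⟩
  · have hlf : LocallyFinite (fun p : ℤ × ℤ => cell p.1 p.2 \ P) :=
      cell_locallyFinite.subset fun p => diff_subset
    have hun : Pᶜ = ⋃ p : ℤ × ℤ, cell p.1 p.2 \ P := by
      ext z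
      simp only [mem_compl_iff, mem_iUnion, mem_diff]
      exact ⟨fun hz => ⟨(⌊z.1⌋, ⌊z.2⌋), mem_cell_floor z, hz⟩, fun ⟨_, _, hz⟩ => hz⟩
    intro z hz
    rw [ContinuousWithinAt, hun, hlf.nhdsWithin_iUnion, tendsto_iSup]
    rintro ⟨i, j⟩
    by_cases hzc : z ∈ cell i j
    · exact ((hGc i j).congr fun w hw => hF i j w hw.1) z ⟨hzc, hz⟩
    · have : 𝓝[cell i j \ P] z = ⊥ := by
        rw [← not_neBot, ← mem_closure_iff_nhdsWithin_neBot]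
        exact fun hh => hzc ((cell_isClosed i j).closure_subset (closure_mono diff_subset hh))
      simp only [this]
      exact tendsto_bot
  · have := mem_cell_floor z
    rw [hF _ _ z this]
    exact hGR _ _ z ⟨this, hz⟩

/-- Gluing maps defined on the grid edges. -/
lemma skel_glue (φ : ℤ → ℤ → ℂ) (h v : ℤ → ℤ → ℝ → ℂ)
    (hc : ∀ i j, ContinuousOn (h i j) (Icc (i : ℝ) (i + 1)))
    (vc : ∀ i j, ContinuousOn (v i j) (Icc (j : ℝ) (j + 1)))
    (h0 : ∀ i j, h i j i = φ i j) (h1 : ∀ i j, h i j (i + 1) = φ (i + 1) j)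
    (v0 : ∀ i j, v i j j = φ i j) (v1 : ∀ i j, v i j (j + 1) = φ i (j + 1)) :
    ∃ E : ℝ × ℝ → ℂ, ContinuousOn E skel ∧
      (∀ i j : ℤ, ∀ x ∈ Icc (i : ℝ) (i + 1), E (x, j) = h i j x) ∧
      (∀ i j : ℤ, ∀ y ∈ Icc (j : ℝ) (j + 1), E (i, y) = v i j y) := by
  classical
  let E : ℝ × ℝ → ℂ := fun z => if z.2 = ⌊z.2⌋ then h ⌊z.1⌋ ⌊z.2⌋ z.1 else v ⌊z.1⌋ ⌊z.2⌋ z.2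
  have Eh : ∀ i j : ℤ, ∀ x ∈ Icc (i : ℝ) (i + 1), E (x, j) = h i j x := by
    intro i j x hx
    simp only [E, Int.floor_intCast, if_true]
    rcases floor_cases hx with hh | hh
    · rw [hh]
    · rw [hh, Int.floor_intCast, h0]
      push_cast
      rw [h1]
  have Ev : ∀ i j : ℤ, ∀ y ∈ Icc (j : ℝ) (j + 1), E (i, y) = v i j y := by
    intro i j y hy
    by_cases hyi : y = ⌊y⌋
    · rw [hyi, Eh i _ i ⟨le_rfl, by linarith⟩, h0]
      rw [hyi] at hy
      rcases int_cases hy with hh | hh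
      · rw [hh, v0]
      · rw [hh]
        push_cast
        rw [v1]
    · have hyj : ⌊y⌋ = j := by
        refine (floor_cases hy).resolve_right fun hh => hyi ?_
        rw [hh, Int.floor_intCast]
      simp only [E, if_neg hyi, Int.floor_intCast, hyj]
  refine ⟨E, ?_, Eh, Ev⟩
  let e : ℤ × ℤ → Set (ℝ × ℝ) := fun p =>
    (Icc (p.1 : ℝ) (p.1 + 1) ×ˢ {(p.2 : ℝ)}) ∪ ({(p.1 : ℝ)} ×ˢ Icc (p.2 : ℝ) (p.2 + 1))
  have hun : skel = ⋃ p, e p := by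
    ext ⟨x, y⟩
    simp only [mem_iUnion]
    constructor
    · rintro (⟨n, hn⟩ | ⟨n, hn⟩)
      · exact ⟨(n, ⌊y⌋), Or.inr ⟨hn, (mem_cell_floor (x, y)).2⟩⟩
      · exact ⟨(⌊x⌋, n), Or.inl ⟨(mem_cell_floor (x, y)).1, hn⟩⟩
    · rintro ⟨p, h | h⟩
      · exact Or.inr ⟨_, h.2⟩
      · exact Or.inl ⟨_, h.1⟩
  rw [hun]
  refine LocallyFinite.continuousOn_iUnion (cell_locallyFinite.subset ?_) ?_ ?_
  · rintro ⟨i, j⟩ ⟨x, y⟩ (hz | hz)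
    · have : y = j := hz.2
      exact ⟨hz.1, by subst this; exact ⟨le_rfl, by simp⟩⟩
    · have : x = i := hz.1
      exact ⟨by subst this; exact ⟨le_rfl, by simp⟩, hz.2⟩
  · rintro ⟨i, j⟩
    exact (isClosed_Icc.prod isClosed_singleton).union (isClosed_singleton.prod isClosed_Icc)
  · rintro ⟨i, j⟩
    refine ContinuousOn.union_of_isClosed ?_ ?_ (isClosed_Icc.prod isClosed_singleton)
      (isClosed_singleton.prod isClosed_Icc)
    · refine ((hc i j).comp continuousOn_fst fun z hz => hz.1).congr ?_
      rintro ⟨x, y⟩ ⟨hx, hy⟩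
      have : y = j := hy
      subst this
      exact Eh i j x hx
    · refine ((vc i j).comp continuousOn_snd fun z hz => hz.2).congr ?_
      rintro ⟨x, y⟩ ⟨hx, hy⟩
      have : x = i := hx
      subst this
      exact Ev i j y hy

lemma joinedIn_interval {S : Set ℂ} {p q : ℂ} (h : JoinedIn S p q) (i : ℤ) :
    ∃ g : ℝ → ℂ, Continuous g ∧ g i = p ∧ g (i + 1) = q ∧ ∀ x, g x ∈ S := by
  obtain ⟨P, hP⟩ := h
  refine ⟨fun x => P.extend (x - i), ?_, ?_, ?_, ?_⟩
  · fun_prop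
  · simp
  · simp
  · intro x
    have : P.extend (x - i) ∈ range P.extend := mem_range_self _
    rw [Path.extend_range] at this
    obtain ⟨t, ht⟩ := this
    simp only [← ht]
    exact hP t

lemma edge_map {S T : Set ℂ} {p q : ℂ} (h : JoinedIn S p q) (i : ℤ) (g : ℝ → ℂ) (hg : Continuous g)
    (hp : g i ∈ T → p = g i) (hq : g (i + 1) ∈ T → q = g (i + 1)) :
    ∃ k : ℝ → ℂ, Continuous k ∧ k i = p ∧ k (i + 1) = q ∧
      (((∀ x ∈ Icc (i : ℝ) (i + 1), g x ∈ T) ∧ k = g) ∨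
       ((¬ ∀ x ∈ Icc (i : ℝ) (i + 1), g x ∈ T) ∧ ∀ x, k x ∈ S)) := by
  by_cases hT : ∀ x ∈ Icc (i : ℝ) (i + 1), g x ∈ T
  · refine ⟨g, hg, (hp (hT _ ⟨le_rfl, by linarith⟩)).symm, (hq (hT _ ⟨by linarith, le_rfl⟩)).symm,
      Or.inl ⟨hT, rfl⟩⟩
  · obtain ⟨k, hk, h0, h1, hS⟩ := joinedIn_interval h i
    exact ⟨k, hk, h0, h1, Or.inr ⟨hT, hS⟩⟩

/-- Building a map on the grid lines. -/
lemma skeleton (f : ℝ × ℝ → ℂ) (hf : Continuous f) (T : Set ℂ) (φ : ℤ → ℤ → ℂ)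
    (hφ : ∀ i j : ℤ, f (i, j) ∈ T → φ i j = f (i, j)) (Th Tv : ℤ → ℤ → Set ℂ)
    (hj : ∀ i j, JoinedIn (Th i j) (φ i j) (φ (i + 1) j))
    (vj : ∀ i j, JoinedIn (Tv i j) (φ i j) (φ i (j + 1))) :
    ∃ E : ℝ × ℝ → ℂ, ContinuousOn E skel ∧
      (∀ i j : ℤ, ((∀ x ∈ Icc (i : ℝ) (i + 1), f (x, j) ∈ T) ∧
          ∀ x ∈ Icc (i : ℝ) (i + 1), E (x, j) = f (x, j)) ∨
        ((¬ ∀ x ∈ Icc (i : ℝ) (i + 1), f (x, j) ∈ T) ∧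
          ∀ x ∈ Icc (i : ℝ) (i + 1), E (x, j) ∈ Th i j)) ∧
      (∀ i j : ℤ, ((∀ y ∈ Icc (j : ℝ) (j + 1), f (i, y) ∈ T) ∧
          ∀ y ∈ Icc (j : ℝ) (j + 1), E (i, y) = f (i, y)) ∨
        ((¬ ∀ y ∈ Icc (j : ℝ) (j + 1), f (i, y) ∈ T) ∧
          ∀ y ∈ Icc (j : ℝ) (j + 1), E (i, y) ∈ Tv i j)) := by
  have H : ∀ i j : ℤ, _ := fun i j => edge_map (T := T) (hj i j) i (fun x => f (x, j)) (by fun_prop)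
    (hφ i j) (by have := hφ (i + 1) j; push_cast at this; exact this)
  have V : ∀ i j : ℤ, _ := fun i j => edge_map (T := T) (vj i j) j (fun y => f (i, y)) (by fun_prop)
    (hφ i j) (by have := hφ i (j + 1); push_cast at this; exact this)
  choose h hc h0 h1 hh using H
  choose v vc v0 v1 hv using V
  obtain ⟨E, hE, Eh, Ev⟩ := skel_glue φ h v (fun i j => (hc i j).continuousOn)
    (fun i j => (vc i j).continuousOn) h0 h1 v0 v1
  refine ⟨E, hE, fun i j => ?_, fun i j => ?_⟩
  · rcases hh i j with ⟨a, b⟩ | ⟨a, b⟩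
    · exact Or.inl ⟨a, fun x hx => by rw [Eh i j x hx, b]⟩
    · exact Or.inr ⟨a, fun x hx => by rw [Eh i j x hx]; exact b x⟩
  · rcases hv i j with ⟨a, b⟩ | ⟨a, b⟩
    · exact Or.inl ⟨a, fun x hx => by rw [Ev i j x hx, b]⟩
    · exact Or.inr ⟨a, fun x hx => by rw [Ev i j x hx]; exact b x⟩

/-- A point of a cell on the grid lines is on one of the four sides of the cell. -/
lemma cell_skel {i j : ℤ} {z : ℝ × ℝ} (hz : z ∈ cell i j) (hs : z ∈ skel) :
    (∃ k : ℤ, (k = i ∨ k = i + 1) ∧ z = ((k : ℝ), z.2)) ∨ (∃ k : ℤ, (k = j ∨ k = j + 1) ∧ z = (z.1, (k : ℝ))) := by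
  rcases hs with ⟨n, hn⟩ | ⟨n, hn⟩
  · refine Or.inl ⟨n, int_cases ?_, Prod.ext hn rfl⟩
    rw [← hn]; exact hz.1
  · refine Or.inr ⟨n, int_cases ?_, Prod.ext rfl hn⟩
    rw [← hn]; exact hz.2

end PlanePi1
namespace PlanePi1

/-- radial projection to a sphere -/
noncomputable def rp {E : Type*} [NormedAddCommGroup E] [NormedSpace ℝ E] (c : E) (r : ℝ) (z : E) : E :=
  c + (r / ‖z - c‖) • (z - c)

lemma rp_continuousOn {E : Type*} [NormedAddCommGroup E] [NormedSpace ℝ E] (c : E) (r : ℝ) :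
    ContinuousOn (rp c r) {c}ᶜ := by
  unfold rp
  refine continuousOn_const.add (ContinuousOn.smul ?_ (by fun_prop))
  refine continuousOn_const.div (by fun_prop) fun z hz => ?_
  rw [norm_ne_zero_iff, sub_ne_zero]
  exact hz

lemma rp_mem {E : Type*} [NormedAddCommGroup E] [NormedSpace ℝ E] (c : E) {r : ℝ} (hr : 0 ≤ r)
    {z : E} (hz : z ≠ c) : rp c r z ∈ sphere c r := by
  have : ‖z - c‖ ≠ 0 := by rwa [norm_ne_zero_iff, sub_ne_zero]
  rw [mem_sphere, dist_eq_norm, rp, add_sub_cancel_left, norm_smul, Real.norm_eq_abs, abs_div,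
    abs_norm, abs_of_nonneg hr]
  field_simp

lemma rp_id {E : Type*} [NormedAddCommGroup E] [NormedSpace ℝ E] (c : E) {r : ℝ} (hr : 0 < r)
    {z : E} (hz : z ∈ sphere c r) : rp c r z = z := by
  rw [mem_sphere, dist_eq_norm] at hz
  rw [rp, hz, div_self hr.ne', one_smul, add_sub_cancel]

lemma thickening_pathConnected {X : Set ℂ} (hX : IsPathConnected X) {η : ℝ} (hη : 0 < η) :
    IsPathConnected (thickening η X) := by
  obtain ⟨x, hx, hj⟩ := hX
  refine ⟨x, self_subset_thickening hη X hx, fun {y} hy => ?_⟩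
  obtain ⟨z, hz, hd⟩ := mem_thickening_iff.1 hy
  refine ((hj hz).mono (self_subset_thickening hη X)).trans ?_
  have h1 : ball z η ⊆ thickening η X := ball_subset_thickening hz η
  exact (((convex_ball z η).isPathConnected ⟨z, mem_ball_self hη⟩).joinedIn z (mem_ball_self hη) y hd).mono h1

/-- centre of a cell -/
noncomputable def ctr (i j : ℤ) : ℝ × ℝ := ((i : ℝ) + 1 / 2, (j : ℝ) + 1 / 2)

lemma ctr_mem (i j : ℤ) : ctr i j ∈ cell i j := by
  constructor <;> simp only [ctr] <;> constructor <;> linarith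

lemma ctr_not_skel (i j : ℤ) : ctr i j ∉ skel := by
  rintro (⟨n, hn⟩ | ⟨n, hn⟩)
  · simp only [ctr] at hn
    have h1 : (2 * i + 1 : ℝ) = 2 * n := by linarith
    have h2 : 2 * i + 1 = 2 * n := by exact_mod_cast h1
    omega
  · simp only [ctr] at hn
    have h1 : (2 * j + 1 : ℝ) = 2 * n := by linarith
    have h2 : 2 * j + 1 = 2 * n := by exact_mod_cast h1
    omega

lemma mem_cell_iff {i j : ℤ} {z : ℝ × ℝ} : z ∈ cell i j ↔ z ∈ closedBall (ctr i j) (1 / 2) := by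
  rw [mem_closedBall, Prod.dist_eq, max_le_iff, Real.dist_eq, Real.dist_eq, abs_le, abs_le]
  simp only [cell, ctr, mem_prod, mem_Icc]
  constructor
  · rintro ⟨⟨a, b⟩, c, d⟩; refine ⟨⟨?_, ?_⟩, ?_, ?_⟩ <;> linarith
  · rintro ⟨⟨a, b⟩, c, d⟩; refine ⟨⟨?_, ?_⟩, ?_, ?_⟩ <;> linarith

lemma mem_sphere_ctr {i j : ℤ} {z : ℝ × ℝ} :
    z ∈ sphere (ctr i j) (1 / 2) ↔ z ∈ cell i j ∧ z ∈ skel := by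
  constructor
  · intro h
    refine ⟨mem_cell_iff.2 (sphere_subset_closedBall h), ?_⟩
    rw [mem_sphere, Prod.dist_eq] at h
    rcases max_choice (dist z.1 (ctr i j).1) (dist z.2 (ctr i j).2) with h1 | h1
    · rw [h1, Real.dist_eq] at h
      left
      simp only [ctr] at h
      rcases (abs_eq (by norm_num)).1 h with h2 | h2
      · exact ⟨i + 1, by push_cast; linarith⟩
      · exact ⟨i, by linarith⟩
    · rw [h1, Real.dist_eq] at h
      right
      simp only [ctr] at h
      rcases (abs_eq (by norm_num)).1 h with h2 | h2
      · exact ⟨j + 1, by push_cast; linarith⟩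
      · exact ⟨j, by linarith⟩
  · rintro ⟨hz, hs⟩
    have h1 := mem_cell_iff.1 hz
    rw [mem_closedBall] at h1
    rw [mem_sphere]
    refine le_antisymm h1 ?_
    rw [Prod.dist_eq, Real.dist_eq, Real.dist_eq]
    simp only [ctr]
    rcases cell_skel hz hs with ⟨k, hk, hh⟩ | ⟨k, hk, hh⟩
    · have : z.1 = k := by rw [hh]
      refine le_max_of_le_left ?_
      rw [this]
      rcases hk with rfl | rfl
      · rw [le_abs]; right; linarith
      · rw [le_abs]; left; push_cast; linarith
    · have : z.2 = k := by rw [hh]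
      refine le_max_of_le_right ?_
      rw [this]
      rcases hk with rfl | rfl
      · rw [le_abs]; right; linarith
      · rw [le_abs]; left; push_cast; linarith

/-- extension of the identity of `X` to the complement of `P` with values in `T` -/
def Ext (X T P : Set ℂ) : Prop :=
  ∃ f : ℂ → ℂ, ContinuousOn f Pᶜ ∧ (∀ z ∈ Pᶜ, f z ∈ T) ∧ ∀ z ∈ X, z ∈ Pᶜ → f z = z

lemma Ext.mono {X T P P' : Set ℂ} (h : Ext X T P) (hP : P ⊆ P') : Ext X T P' := by
  obtain ⟨f, h1, h2, h3⟩ := h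
  have := compl_subset_compl.2 hP
  exact ⟨f, h1.mono this, fun z hz => h2 z (this hz), fun z hz hz' => h3 z hz (this hz')⟩

lemma ext_initial {X T : Set ℂ} {η : ℝ} (hη : 0 < η) (hX : X.Nonempty) (hT : IsPathConnected T)
    (hXT : thickening η X ⊆ T) :
    ∃ P : Set ℂ, Disjoint P X ∧ P.Countable ∧ (∀ R, (P ∩ closedBall 0 R).Finite) ∧ Ext X T P := by
  classical
  obtain ⟨x0, hx0⟩ := hX
  have hx0T : x0 ∈ T := hXT (self_subset_thickening hη X hx0)
  set s : ℝ := η / 3 with hs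
  have hs0 : 0 < s := by positivity
  let τ : ℝ × ℝ → ℂ := fun z => ⟨s * z.1, s * z.2⟩
  let ρ : ℂ → ℝ × ℝ := fun w => (w.re / s, w.im / s)
  have τρ : ∀ w, τ (ρ w) = w := fun w => by
    apply Complex.ext <;> simp only [τ, ρ] <;> field_simp
  have hτ : Continuous τ := by
    have : τ = fun z => ((s * z.1 : ℝ) : ℂ) + ((s * z.2 : ℝ) : ℂ) * Complex.I := by
      funext z; apply Complex.ext <;> simp [τ]
    rw [this]; fun_prop
  have hρ : Continuous ρ := by fun_prop
  have hd : ∀ z w, dist (τ z) (τ w) ≤ 2 * s * dist z w := by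
    intro z w
    rw [dist_eq_norm]
    refine (Complex.norm_le_abs_re_add_abs_im _).trans ?_
    have e1 : (τ z - τ w).re = s * (z.1 - w.1) := by simp [τ]; ring
    have e2 : (τ z - τ w).im = s * (z.2 - w.2) := by simp [τ]; ring
    rw [e1, e2, abs_mul, abs_mul, abs_of_pos hs0, ← Real.dist_eq, ← Real.dist_eq, Prod.dist_eq]
    have := le_max_left (dist z.1 w.1) (dist z.2 w.2)
    have := le_max_right (dist z.1 w.1) (dist z.2 w.2)
    nlinarith
  have hgood : ∀ i j, ∀ z ∈ cell i j, τ z ∈ X → ∀ w ∈ cell i j, τ w ∈ T := by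
    intro i j z hz hzX w hw
    refine hXT (mem_thickening_iff.2 ⟨τ z, hzX, ?_⟩)
    have h1 := mem_cell_iff.1 hz
    have h2 := mem_cell_iff.1 hw
    rw [mem_closedBall] at h1 h2
    have h3 := hd w z
    have h4 := dist_triangle_right w z (ctr i j)
    nlinarith
  obtain ⟨E, hE, Eh, Ev⟩ := skeleton τ hτ T (fun i j => if τ (i, j) ∈ T then τ (i, j) else x0)
    (fun i j h => if_pos h) (fun _ _ => T) (fun _ _ => T)
    (fun i j => hT.joinedIn _ (by split_ifs <;> assumption) _ (by split_ifs <;> assumption))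
    (fun i j => hT.joinedIn _ (by split_ifs <;> assumption) _ (by split_ifs <;> assumption))
  have ET : ∀ z ∈ skel, E z ∈ T := by
    rintro ⟨x, y⟩ (⟨n, hn⟩ | ⟨n, hn⟩)
    · simp only at hn
      subst hn
      have hy := (mem_cell_floor ((n : ℝ), y)).2
      rcases Ev n ⌊y⌋ with ⟨a, b⟩ | ⟨a, b⟩
      · rw [b y hy]; exact a y hy
      · exact b y hy
    · simp only at hn
      subst hn
      have hy := (mem_cell_floor (x, (n : ℝ))).1
      rcases Eh ⌊x⌋ n with ⟨a, b⟩ | ⟨a, b⟩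
      · rw [b x hy]; exact a x hy
      · exact b x hy
  let P : Set ℂ := {w | ∃ i j, w = τ (ctr i j) ∧ ¬ ∀ z ∈ cell i j, τ z ∈ T}
  have hmain : ∃ F : ℝ × ℝ → ℂ, ContinuousOn F (τ ⁻¹' P)ᶜ ∧ (∀ z ∈ skel, F z = E z) ∧
      ∀ z ∈ (τ ⁻¹' P)ᶜ, F z ∈ T ∧ (τ z ∈ X → F z = τ z) := by
    refine glue (τ ⁻¹' P) E (fun z w => w ∈ T ∧ (τ z ∈ X → w = τ z)) fun i j => ?_
    by_cases hb : ∀ z ∈ cell i j, τ z ∈ T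
    · refine ⟨τ, hτ.continuousOn, fun z hz hzs => ?_, fun z hz => ⟨hb z hz.1, fun _ => rfl⟩⟩
      rcases cell_skel hz hzs with ⟨k, hk, hh⟩ | ⟨k, hk, hh⟩
      · rcases Ev k j with ⟨a, b⟩ | ⟨a, b⟩
        · rw [hh]; exact (b _ hz.2).symm
        · refine absurd (fun y hy => hb ((k : ℝ), y) ⟨?_, hy⟩) a
          have := hz.1
          rw [hh] at this
          exact this
      · rcases Eh i k with ⟨a, b⟩ | ⟨a, b⟩
        · rw [hh]; exact (b _ hz.1).symm
        · refine absurd (fun y hy => hb (y, (k : ℝ)) ⟨hy, ?_⟩) a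
          have := hz.2
          rw [hh] at this
          exact this
    · have hne : ∀ z ∈ cell i j \ τ ⁻¹' P, z ≠ ctr i j := by
        rintro z hz rfl
        exact hz.2 ⟨i, j, rfl, hb⟩
      have hsp : ∀ z, z ≠ ctr i j → rp (ctr i j) (1 / 2) z ∈ skel := fun z hz =>
        (mem_sphere_ctr.1 (rp_mem _ (by norm_num) hz)).2
      refine ⟨fun z => E (rp (ctr i j) (1 / 2) z), ?_, ?_, ?_⟩
      · exact hE.comp ((rp_continuousOn _ _).mono hne) fun z hz => hsp z (hne z hz)
      · intro z hz hzs
        simp only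
        rw [rp_id _ (by norm_num) (mem_sphere_ctr.2 ⟨hz, hzs⟩)]
      · intro z hz
        exact ⟨ET _ (hsp z (hne z hz)), fun h => absurd (hgood i j z hz.1 h) hb⟩
  obtain ⟨F, hFc, -, hF⟩ := hmain
  refine ⟨P, ?_, ?_, ?_, fun w => F (ρ w), ?_, ?_, ?_⟩
  · rw [Set.disjoint_left]
    rintro w ⟨i, j, rfl, hb⟩ hw
    exact hb (hgood i j _ (ctr_mem i j) hw)
  · refine (Set.countable_range fun p : ℤ × ℤ => τ (ctr p.1 p.2)).mono ?_
    rintro w ⟨i, j, rfl, -⟩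
    exact ⟨(i, j), rfl⟩
  · intro R
    obtain ⟨M, hM⟩ := exists_nat_gt (R / s)
    rw [div_lt_iff₀ hs0] at hM
    refine (((Set.finite_Icc (-(M : ℤ) - 1) (M + 1)).prod
      (Set.finite_Icc (-(M : ℤ) - 1) (M + 1))).image fun p : ℤ × ℤ => τ (ctr p.1 p.2)).subset ?_
    rintro w ⟨⟨i, j, rfl, -⟩, hw⟩
    rw [mem_closedBall, dist_zero_right] at hw
    have key : ∀ k : ℤ, |s * ((k : ℝ) + 1 / 2)| ≤ R → k ∈ Icc (-(M : ℤ) - 1) (M + 1) := by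
      intro k hk
      rw [abs_mul, abs_of_pos hs0] at hk
      have h1 : |(k : ℝ) + 1 / 2| < M := by
        by_contra! hc
        nlinarith
      rw [abs_lt] at h1
      constructor
      · have : (-(M : ℝ) - 1) ≤ k := by linarith
        exact_mod_cast this
      · have : (k : ℝ) ≤ M + 1 := by linarith
        exact_mod_cast this
    refine ⟨(i, j), ⟨key i ?_, key j ?_⟩, rfl⟩
    · exact (Complex.abs_re_le_norm _).trans hw
    · exact (Complex.abs_im_le_norm _).trans hw
  · refine hFc.comp hρ.continuousOn fun w hw => ?_
    simpa only [mem_compl_iff, mem_preimage, τρ] using hw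
  · intro w hw
    exact (hF (ρ w) (by simpa only [mem_compl_iff, mem_preimage, τρ] using hw)).1
  · intro w hwX hw
    have := (hF (ρ w) (by simpa only [mem_compl_iff, mem_preimage, τρ] using hw)).2
    rw [τρ] at this
    exact this hwX

lemma ext_move {X T P : Set ℂ} {p q : ℂ} {r : ℝ} (hr : 0 < r) (hX : Disjoint (closedBall q r) X)
    (hp : p ∈ ball q r) (hP : Disjoint (sphere q r) P) (h : Ext X T (insert p P)) :
    Ext X T (insert q P) := by
  classical
  obtain ⟨f, h1, h2, h3⟩ := h
  have hsp : ∀ z ∈ sphere q r, z ∈ (insert p P)ᶜ := by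
    rintro z hz (rfl | hzP)
    · exact (ne_of_lt (mem_ball.1 hp)) hz
    · exact Set.disjoint_left.1 hP hz hzP
  have hrp : ∀ z ∈ (insert q P)ᶜ, rp q r z ∈ (insert p P)ᶜ := fun z hz =>
    hsp _ (rp_mem _ hr.le fun h => hz (Or.inl h))
  have hout : ∀ z ∈ (insert q P)ᶜ, z ∉ ball q r → z ∈ (insert p P)ᶜ := by
    rintro z hz hzb (rfl | hzP)
    · exact hzb hp
    · exact hz (Or.inr hzP)
  refine ⟨(closedBall q r).piecewise (fun z => f (rp q r z)) f, ?_, ?_, ?_⟩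
  · refine ContinuousOn.piecewise ?_ ?_ ?_
    · rintro a ⟨-, ha⟩
      rw [frontier_closedBall _ hr.ne'] at ha
      rw [rp_id _ hr ha]
    · refine (h1.comp ((rp_continuousOn q r).mono ?_) hrp).mono inter_subset_left
      exact fun z hz h => hz (Or.inl h)
    · refine h1.mono ?_
      rintro z ⟨hz, hzc⟩
      refine hout z hz ?_
      have : closure (closedBall q r)ᶜ ⊆ (ball q r)ᶜ :=
        closure_minimal (compl_subset_compl.2 ball_subset_closedBall) isOpen_ball.isClosed_compl
      exact this hzc
  · intro z hz
    by_cases hzb : z ∈ closedBall q r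
    · rw [piecewise_eq_of_mem _ _ _ hzb]
      exact h2 _ (hrp z hz)
    · rw [piecewise_eq_of_notMem _ _ _ hzb]
      exact h2 _ (hout z hz fun h => hzb (ball_subset_closedBall h))
  · intro z hzX hz
    have hzb : z ∉ closedBall q r := fun h => Set.disjoint_left.1 hX h hzX
    rw [piecewise_eq_of_notMem _ _ _ hzb]
    exact h3 _ hzX (hout z hz fun h => hzb (ball_subset_closedBall h))

lemma ext_move' {X T P : Set ℂ} {p q : ℂ} {R : ℝ} (hX : Disjoint (ball q R) X)
    (hp : dist p q < R) (hP : P.Countable) (h : Ext X T (insert p P)) :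
    Ext X T (insert q P) := by
  have hc : ((fun z => dist z q) '' P).Countable := hP.image _
  obtain ⟨r, hr, hr1, hr2⟩ := (hc.dense_compl ℝ).exists_between hp
  refine ext_move (lt_of_le_of_lt dist_nonneg hr1) (hX.mono_left ?_) hr1 ?_ h
  · exact closedBall_subset_ball hr2
  · rw [Set.disjoint_left]
    exact fun z hz hzP => hr ⟨z, hzP, hz⟩

lemma ext_move_all {X T : Set ℂ} (hX : IsClosed X) (hc : IsPreconnected Xᶜ) {p q : ℂ}
    (hp : p ∈ Xᶜ) (hq : q ∈ Xᶜ) : ∀ P : Set ℂ, P.Countable → Ext X T (insert p P) →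
    Ext X T (insert q P) := by
  refine hc.induction₂' (fun p q => ∀ P : Set ℂ, P.Countable → Ext X T (insert p P) →
    Ext X T (insert q P)) ?_ ?_ hp hq
  · intro x hx
    obtain ⟨R, hR, hb⟩ := Metric.isOpen_iff.1 hX.isOpen_compl x hx
    filter_upwards [mem_nhdsWithin_of_mem_nhds (ball_mem_nhds x (half_pos hR))] with y hy
    rw [mem_ball] at hy
    have hd : Disjoint (ball x R) X := Set.disjoint_left.2 fun z hz => hb hz
    refine ⟨fun P hP h => ext_move' (R := R / 2) (hd.mono_left ?_) (by rwa [dist_comm]) hP h,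
      fun P hP h => ext_move' hd (by linarith) hP h⟩
    exact ball_subset_ball' (by linarith)
  · intro x y z _ _ _ h1 h2 P hP h
    exact h2 P hP (h1 P hP h)

lemma ext_move_finite {X T : Set ℂ} (hX : IsClosed X) (hc : IsPreconnected Xᶜ) {q : ℂ}
    (hq : q ∈ Xᶜ) (A : Set ℂ) (hA : A.Finite) (hAX : A ⊆ Xᶜ) :
    ∀ P : Set ℂ, P.Countable → Ext X T (A ∪ P) → Ext X T (insert q P) := by
  induction A, hA using Set.Finite.induction_on with
  | empty =>
    intro P _ h
    exact h.mono (by rw [empty_union]; exact subset_insert _ _)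
  | @insert a A ha hA ih =>
    intro P hP h
    rw [insert_union] at h
    have h1 := ext_move_all hX hc (hAX (mem_insert _ _)) hq _ (hA.countable.union hP) h
    rw [← union_insert] at h1
    have := ih (fun z hz => hAX (mem_insert_of_mem _ hz)) _ (hP.insert q) h1
    rwa [insert_eq_of_mem (mem_insert _ _)] at this

/-- A retraction-like map onto a neighbourhood of the hull. -/
lemma exists_retr {Y : Set ℂ} (hY : IsCompact Y) (hYp : IsPathConnected Y) {η : ℝ} (hη : 0 < η) :
    ∃ Φ : ℂ → ℂ, Continuous Φ ∧ (∀ z ∈ Y, Φ z = z) ∧ ∀ z, ∃ x ∈ hull Y, dist (Φ z) x < η := by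
  have hX := hull_isClosed hY.isClosed
  have hXp := hull_pathConnected hY hYp
  have hc : IsPreconnected (hull Y)ᶜ := by
    rw [hull, compl_compl]; exact outer_isPreconnected hY.isBounded
  obtain ⟨P, hPX, hPc, hPf, hE⟩ := ext_initial (T := thickening η (hull Y)) hη hXp.nonempty
    (thickening_pathConnected hXp hη) le_rfl
  obtain ⟨R0, hR0⟩ := hY.isBounded.subset_closedBall 0
  set R := max R0 1 with hR
  have hRp : 0 < R := lt_of_lt_of_le one_pos (le_max_right _ _)
  have hYR : Y ⊆ closedBall 0 R := hR0.trans (closedBall_subset_closedBall (le_max_left _ _))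
  have hXR : hull Y ⊆ closedBall 0 R := hull_subset_closedBall hRp.le hYR
  have hqR : ((R + 1 : ℝ) : ℂ) ∉ closedBall (0 : ℂ) R := by
    rw [mem_closedBall, dist_zero_right, Complex.norm_real, Real.norm_eq_abs, abs_of_pos (by linarith)]
    linarith
  have hE2 := ext_move_finite hX hc (q := ((R + 1 : ℝ) : ℂ)) (fun h => hqR (hXR h))
    (P ∩ closedBall 0 R) (hPf R) (fun z hz h => Set.disjoint_left.1 hPX hz.1 h)
    (P \ closedBall 0 R) (hPc.mono sdiff_subset) (by rwa [inter_union_sdiff])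
  obtain ⟨f, h1, h2, h3⟩ := hE2
  have hB : ∀ z ∈ closedBall (0 : ℂ) R, z ∈ (insert ((R + 1 : ℝ) : ℂ) (P \ closedBall 0 R))ᶜ := by
    rintro z hz (rfl | h)
    · exact hqR hz
    · exact h.2 hz
  have hmax : ∀ z : ℂ, 0 < max R ‖z‖ := fun z => lt_of_lt_of_le hRp (le_max_left _ _)
  have hcl : ∀ z : ℂ, (R / max R ‖z‖) • z ∈ closedBall (0 : ℂ) R := by
    intro z
    rw [mem_closedBall, dist_zero_right, norm_smul, Real.norm_eq_abs,
      abs_of_pos (div_pos hRp (hmax z)), div_mul_eq_mul_div, div_le_iff₀ (hmax z)]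
    exact mul_le_mul_of_nonneg_left (le_max_right _ _) hRp.le
  refine ⟨fun z => f ((R / max R ‖z‖) • z), ?_, ?_, ?_⟩
  · refine h1.comp_continuous ?_ fun z => hB _ (hcl z)
    have hc2 : Continuous fun z : ℂ => R / max R ‖z‖ :=
      continuous_const.div (by fun_prop) fun z => (hmax z).ne'
    exact hc2.smul continuous_id
  · intro z hz
    have hzR : ‖z‖ ≤ R := by simpa using hYR hz
    simp only
    rw [max_eq_left hzR, div_self hRp.ne', one_smul]
    exact h3 z (subset_hull hz) (hB z (hYR hz))
  · intro z
    exact mem_thickening_iff.1 (h2 _ (hB _ (hcl z)))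

end PlanePi1
namespace PlanePi1

/-- boundary of the square -/
def bd (p : I × I) : Prop := (p.1 = 0 ∨ p.1 = 1) ∨ (p.2 = 0 ∨ p.2 = 1)

lemma sphere_pathConnected (c : ℝ × ℝ) : IsPathConnected (sphere c (1 / 2)) := by
  refine isPathConnected_sphere ?_ c (by norm_num)
  rw [rank_prod', Module.rank_self]
  norm_num

/-- Filling a cell. -/
lemma fill_cell (i j : ℤ) (E : ℝ × ℝ → ℂ) (hE : ContinuousOn E skel) {η : ℝ} (hη : 0 < η)
    (W : Set ℂ) (hW : IsCompact W) (hW' : ∀ z ∈ cell i j, z ∈ skel → E z ∈ hull W)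
    (p : ℂ) {r : ℝ} (hr : 0 ≤ r) (hp : ∀ z ∈ cell i j, z ∈ skel → E z ∈ closedBall p r) :
    ∃ G : ℝ × ℝ → ℂ, Continuous G ∧ (∀ z ∈ cell i j, z ∈ skel → G z = E z) ∧
      ∀ z, ∃ x ∈ hull W, x ∈ closedBall p r ∧ dist (G z) x < η := by
  set D := sphere (ctr i j) (1 / 2) with hD
  have hDs : D ⊆ skel := fun z hz => (mem_sphere_ctr.1 hz).2
  have hEc : ContinuousOn E D := hE.mono hDs
  have hYc : IsCompact (E '' D) := (isCompact_sphere _ _).image_of_continuousOn hEc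
  have hYp : IsPathConnected (E '' D) := (sphere_pathConnected _).image' hEc
  obtain ⟨Φ, hΦ, hΦY, hΦX⟩ := exists_retr hYc hYp hη
  obtain ⟨g, hg⟩ := ContinuousMap.exists_restrict_eq (Metric.isClosed_sphere (x := ctr i j) (ε := 1 / 2))
    ⟨_, hEc.domRestrict⟩
  have hgE : ∀ z ∈ D, g z = E z := fun z hz => DFunLike.congr_fun hg ⟨z, hz⟩
  refine ⟨fun z => Φ (g z), by fun_prop, fun z hz hzs => ?_, fun z => ?_⟩
  · have hzD : z ∈ D := mem_sphere_ctr.2 ⟨hz, hzs⟩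
    simp only
    rw [hgE z hzD]
    exact hΦY _ (mem_image_of_mem _ hzD)
  · obtain ⟨x, hx, hd⟩ := hΦX (g z)
    refine ⟨x, hull_subset_hull ?_ hW.isBounded hx, hull_subset_closedBall hr ?_ hx, hd⟩
    · rintro _ ⟨w, hw, rfl⟩
      exact hW' w (mem_sphere_ctr.1 hw).1 (hDs hw)
    · rintro _ ⟨w, hw, rfl⟩
      exact hp w (mem_sphere_ctr.1 hw).1 (hDs hw)

lemma step (γ : C(I, ℂ)) {ε : ℝ} (hε : 0 < ε) : ∃ δ > 0, ∀ F : C(I × I, ℂ),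
    (∀ z, ∃ x ∈ hull (range γ), dist (F z) x < δ) → (∀ z, bd z → F z ∈ hull (range γ)) →
    ∀ η > 0, ∃ F' : C(I × I, ℂ), (∀ z, ∃ x ∈ hull (range γ), dist (F' z) x < η) ∧
      (∀ z, bd z → F' z = F z) ∧ ∀ z, dist (F' z) (F z) ≤ ε := by
  set X := hull (range γ) with hX
  have hcomp : IsCompact (range γ) := isCompact_range γ.continuous
  have h8 : 0 < ε / 8 := by positivity
  obtain ⟨δ1, hδ1, hulc⟩ := ulc_hull γ (ε / 8) h8
  refine ⟨min (δ1 / 3) (ε / 8), by positivity, fun F hF hFb η hη => ?_⟩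
  set δ := min (δ1 / 3) (ε / 8) with hδ
  have hδ0 : 0 < δ := by positivity
  have hd1 : 3 * δ ≤ δ1 := by linarith [min_le_left (δ1 / 3) (ε / 8)]
  have hd2 : δ ≤ ε / 8 := min_le_right _ _
  obtain ⟨δ2, hδ2, huc⟩ := Metric.uniformContinuous_iff.1
    (CompactSpace.uniformContinuous_of_continuous F.continuous) δ hδ0
  obtain ⟨N, hN⟩ := exists_nat_gt (1 / δ2)
  have hN0 : (0 : ℝ) < N := lt_trans (by positivity) hN
  have hN1 : 1 / (N : ℝ) < δ2 := by
    rw [div_lt_iff₀ hδ2] at hN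
    rw [div_lt_iff₀ hN0]; linarith
  let pr : ℝ → I := fun x => projIcc 0 1 zero_le_one (x / N)
  have hpr : Continuous pr := by
    refine continuous_projIcc.comp ?_
    fun_prop
  have hprd : ∀ x y, |x - y| ≤ 1 → dist (pr x) (pr y) < δ2 := by
    intro x y h
    refine lt_of_le_of_lt ?_ hN1
    rw [Subtype.dist_eq, Real.dist_eq]
    refine (abs_projIcc_sub_projIcc (zero_le_one' ℝ)).trans ?_
    rw [← sub_div, abs_div, abs_of_pos hN0]
    gcongr
  let f : ℝ × ℝ → ℂ := fun z => F (pr z.1, pr z.2)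
  have hf : Continuous f := by fun_prop
  have hfd : ∀ z w : ℝ × ℝ, |z.1 - w.1| ≤ 1 → |z.2 - w.2| ≤ 1 → dist (f z) (f w) < δ := by
    intro z w h1 h2
    refine huc ?_
    rw [Prod.dist_eq]
    exact max_lt (hprd _ _ h1) (hprd _ _ h2)
  have hφ : ∀ i j : ℤ, ∃ x ∈ X, dist (f (i, j)) x < δ ∧ (f (i, j) ∈ X → x = f (i, j)) := by
    intro i j
    by_cases h : f (i, j) ∈ X
    · exact ⟨_, h, by simpa using hδ0, fun _ => rfl⟩
    · obtain ⟨x, hx, hd⟩ := hF (pr i, pr j)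
      exact ⟨x, hx, hd, fun h' => absurd h' h⟩
  choose φ hφX hφd hφe using hφ
  have hvd : ∀ i j i' j' : ℤ, |(i : ℝ) - i'| ≤ 1 → |(j : ℝ) - j'| ≤ 1 → dist (φ i j) (φ i' j') < δ1 := by
    intro i j i' j' h1 h2
    have a1 := hfd (i, j) (i', j') h1 h2
    have a2 := hφd i j
    have a3 := hφd i' j'
    rw [dist_comm] at a2
    have a4 := dist_triangle4 (φ i j) (f (i, j)) (f (i', j')) (φ i' j')
    linarith
  obtain ⟨E, hE, Eh, Ev⟩ := skeleton f hf X φ hφe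
    (fun i j => X ∩ closedBall (φ i j) (ε / 8)) (fun i j => X ∩ closedBall (φ i j) (ε / 8))
    (fun i j => hulc _ (hφX _ _) _ (hφX _ _) (hvd _ _ _ _ (by push_cast; simp) (by simp)))
    (fun i j => hulc _ (hφX _ _) _ (hφX _ _) (hvd _ _ _ _ (by simp) (by push_cast; simp)))
  have key : ∀ i j, ∀ z ∈ cell i j, z ∈ skel → E z ∈ X ∧ dist (E z) (f (i, j)) ≤ 3 * (ε / 8) := by
    intro i j z hz hzs
    have gen : ∀ i' j' : ℤ, |(i' : ℝ) - i| ≤ 1 → |(j' : ℝ) - j| ≤ 1 → dist (E z) (φ i' j') ≤ ε / 8 →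
        dist (E z) (f (i, j)) ≤ 3 * (ε / 8) := by
      intro i' j' h1 h2 h3
      have a1 := hfd (i', j') (i, j) h1 h2
      have a2 := hφd i' j'
      rw [dist_comm] at a2
      have a4 := dist_triangle4 (E z) (φ i' j') (f (i', j')) (f (i, j))
      linarith
    have gen2 : dist (f z) (f (i, j)) < δ := by
      refine hfd z _ ?_ ?_
      · have := hz.1
        rw [abs_le]; constructor <;> simp only <;> linarith [this.1, this.2]
      · have := hz.2
        rw [abs_le]; constructor <;> simp only <;> linarith [this.1, this.2]
    rcases cell_skel hz hzs with ⟨k, hk, hh⟩ | ⟨k, hk, hh⟩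
    · rcases Ev k j with ⟨a, b⟩ | ⟨a, b⟩
      · have e1 : E z = f z := by rw [hh]; exact b _ hz.2
        rw [e1]
        refine ⟨?_, by linarith⟩
        rw [hh]; exact a _ hz.2
      · have := b _ hz.2
        rw [← hh] at this
        refine ⟨this.1, gen k j ?_ (by simp) this.2⟩
        rcases hk with rfl | rfl <;> simp
    · rcases Eh i k with ⟨a, b⟩ | ⟨a, b⟩
      · have e1 : E z = f z := by rw [hh]; exact b _ hz.1
        rw [e1]
        refine ⟨?_, by linarith⟩
        rw [hh]; exact a _ hz.1
      · have := b _ hz.1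
        rw [← hh] at this
        refine ⟨this.1, gen i k (by simp) ?_ this.2⟩
        rcases hk with rfl | rfl <;> simp
  have hG : ∃ G : ℝ × ℝ → ℂ, ContinuousOn G ∅ᶜ ∧ (∀ z ∈ skel, G z = E z) ∧
      ∀ z ∈ (∅ : Set (ℝ × ℝ))ᶜ, (∃ x ∈ X, dist (G z) x < η) ∧ dist (G z) (f z) ≤ ε := by
    refine glue ∅ E (fun z w => (∃ x ∈ X, dist w x < η) ∧ dist w (f z) ≤ ε) fun i j => ?_
    obtain ⟨G, h1, h2, h3⟩ := fill_cell i j E hE (η := min η (ε / 8)) (by positivity) (range γ) hcomp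
      (fun z hz hzs => (key i j z hz hzs).1) (f (i, j)) (r := 3 * (ε / 8)) (by positivity)
      (fun z hz hzs => (key i j z hz hzs).2)
    refine ⟨G, h1.continuousOn, h2, fun z hz => ?_⟩
    obtain ⟨x, hx, hxb, hxd⟩ := h3 z
    refine ⟨⟨x, hx, hxd.trans_le (min_le_left _ _)⟩, ?_⟩
    have gen2 : dist (f (i, j)) (f z) < δ := by
      refine hfd _ z ?_ ?_
      · have := hz.1.1
        rw [abs_le]; constructor <;> simp only <;> linarith [this.1, this.2]
      · have := hz.1.2
        rw [abs_le]; constructor <;> simp only <;> linarith [this.1, this.2]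
    have a1 := hxd.trans_le (min_le_right _ _)
    rw [mem_closedBall] at hxb
    have a4 := dist_triangle4 (G z) x (f (i, j)) (f z)
    linarith
  obtain ⟨G, hGc, hGE, hGR⟩ := hG
  rw [compl_empty, continuousOn_univ] at hGc
  have hpr1 : ∀ t : I, pr (N * t) = t := by
    intro t
    simp only [pr]
    rw [mul_div_cancel_left₀ _ hN0.ne', projIcc_val]
  have hfF : ∀ z : I × I, f (N * z.1, N * z.2) = F z := by
    intro z
    simp only [f, hpr1]
  have hpr2 : pr 0 = 0 := by simpa using hpr1 0
  have hpr3 : pr N = 1 := by simpa using hpr1 1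
  refine ⟨⟨fun z => G (N * z.1, N * z.2), by fun_prop⟩, ?_, ?_, ?_⟩
  · intro z; exact (hGR _ (notMem_empty _)).1
  · intro z hz
    rw [← hfF]
    simp only [ContinuousMap.coe_mk]
    rcases hz with h | h
    · obtain ⟨k, hk, hk'⟩ : ∃ k : ℤ, (N * (z.1 : ℝ)) = k ∧ (pr k = 0 ∨ pr k = 1) := by
        rcases h with h | h
        · exact ⟨0, by simp [h], Or.inl (by simpa using hpr2)⟩
        · exact ⟨N, by simp [h], Or.inr (by simpa using hpr3)⟩
      rw [hk, hGE _ (Or.inl ⟨k, rfl⟩)]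
      rcases Ev k ⌊N * (z.2 : ℝ)⌋ with ⟨a, b⟩ | ⟨a, b⟩
      · exact b _ (mem_cell_floor (0, N * (z.2 : ℝ))).2
      · exact absurd (fun y _ => hFb _ (Or.inl hk')) a
    · obtain ⟨k, hk, hk'⟩ : ∃ k : ℤ, (N * (z.2 : ℝ)) = k ∧ (pr k = 0 ∨ pr k = 1) := by
        rcases h with h | h
        · exact ⟨0, by simp [h], Or.inl (by simpa using hpr2)⟩
        · exact ⟨N, by simp [h], Or.inr (by simpa using hpr3)⟩
      rw [hk, hGE _ (Or.inr ⟨k, rfl⟩)]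
      rcases Eh ⌊N * (z.1 : ℝ)⌋ k with ⟨a, b⟩ | ⟨a, b⟩
      · exact b _ (mem_cell_floor (N * (z.1 : ℝ), 0)).1
      · exact absurd (fun y _ => hFb _ (Or.inr hk')) a
  · intro z
    rw [← hfF]
    exact (hGR _ (notMem_empty _)).2

end PlanePi1
namespace PlanePi1

lemma fill (γ : C(I, ℂ)) (F0 : C(I × I, ℂ)) (hF0 : ∀ z, bd z → F0 z ∈ range γ) :
    ∃ H : C(I × I, ℂ), (∀ z, H z ∈ hull (range γ)) ∧ ∀ z, bd z → H z = F0 z := by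
  set X := hull (range γ) with hX
  have hcomp : IsCompact (range γ) := isCompact_range γ.continuous
  have hI : PathConnectedSpace I := isPathConnected_iff_pathConnectedSpace.1
    ((convex_Icc (0 : ℝ) 1).isPathConnected ⟨0, by simp⟩)
  have hpc : IsPathConnected (range γ) := isPathConnected_range γ.continuous
  have hst := fun k : ℕ => step γ (ε := (1 / 2) ^ k) (by positivity)
  choose δ0 hδ0 hstep using hst
  let δ : ℕ → ℝ := fun k => min (δ0 k) ((1 / 2) ^ k)
  have hδ : ∀ k, 0 < δ k := fun k => lt_min (hδ0 k) (by positivity)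
  let A : ℕ → C(I × I, ℂ) → Prop := fun k F =>
    (∀ z, ∃ x ∈ X, dist (F z) x < δ k) ∧ ∀ z, bd z → F z = F0 z
  have h0 : ∃ F, A 0 F := by
    obtain ⟨Φ, h1, h2, h3⟩ := exists_retr hcomp hpc (hδ 0)
    exact ⟨⟨fun z => Φ (F0 z), by fun_prop⟩, fun z => h3 _, fun z hz => h2 _ (hF0 z hz)⟩
  have hs : ∀ k F, A k F → ∃ F', A (k + 1) F' ∧ ∀ z, dist (F' z) (F z) ≤ (1 / 2) ^ k := by
    intro k F hF
    obtain ⟨F', h1, h2, h3⟩ := hstep k F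
      (fun z => let ⟨x, hx, hd⟩ := hF.1 z; ⟨x, hx, hd.trans_le (min_le_left _ _)⟩)
      (fun z hz => by rw [hF.2 z hz]; exact subset_hull (hF0 z hz)) (δ (k + 1)) (hδ _)
    exact ⟨F', ⟨h1, fun z hz => (h2 z hz).trans (hF.2 z hz)⟩, h3⟩
  obtain ⟨F1, hF1⟩ := h0
  choose nx hnA hnd using hs
  let u : ∀ k, {F // A k F} := fun k =>
    Nat.rec ⟨F1, hF1⟩ (fun k F => ⟨nx k F.1 F.2, hnA k F.1 F.2⟩) k
  have hu : ∀ k, dist (u k).1 (u (k + 1)).1 ≤ 1 * (1 / 2) ^ k := by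
    intro k
    rw [one_mul, dist_comm]
    refine (ContinuousMap.dist_le (by positivity)).2 fun z => ?_
    exact hnd k (u k).1 (u k).2 z
  have hc : CauchySeq fun k => (u k).1 := cauchySeq_of_le_geometric (1 / 2) 1 (by norm_num) hu
  obtain ⟨H, hH⟩ := cauchySeq_tendsto_of_complete hc
  have hHz : ∀ z, Tendsto (fun k => (u k).1 z) atTop (𝓝 (H z)) := fun z =>
    ((ContinuousEvalConst.continuous_eval_const z).tendsto H).comp hH
  refine ⟨H, fun z => ?_, fun z hz => ?_⟩
  · have hXc : IsClosed X := hull_isClosed hcomp.isClosed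
    rw [← hXc.closure_eq, Metric.mem_closure_iff]
    intro ε hε
    have e1 := (Metric.tendsto_nhds.1 (hHz z)) (ε / 2) (half_pos hε)
    have e2 : ∀ᶠ k : ℕ in atTop, (1 / 2 : ℝ) ^ k < ε / 2 :=
      (tendsto_pow_atTop_nhds_zero_of_lt_one (by norm_num) (by norm_num)).eventually
        (gt_mem_nhds (half_pos hε))
    obtain ⟨k, hk1, hk2⟩ := (e1.and e2).exists
    obtain ⟨x, hx, hd⟩ := (u k).2.1 z
    refine ⟨x, hx, ?_⟩
    have a1 := hd.trans_le (min_le_right _ _)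
    have a2 := dist_triangle_left (H z) x ((u k).1 z)
    linarith
  · refine tendsto_nhds_unique (hHz z) ?_
    have : (fun k => (u k).1 z) = fun _ => F0 z := funext fun k => (u k).2.2 z hz
    rw [this]
    exact tendsto_const_nhds

lemma contract (γ : C(I, ℂ)) (hγ : γ 1 = γ 0) : ∃ H : C(I × I, ℂ),
    (∀ z, H z ∈ hull (range γ)) ∧ (∀ t, H (0, t) = γ t) ∧ (∀ t, H (1, t) = γ 0) ∧
    (∀ s, H (s, 0) = γ 0) ∧ ∀ s, H (s, 1) = γ 0 := by
  let F0 : C(I × I, ℂ) := ⟨fun z => γ z.2 + ((z.1 : ℝ) : ℂ) * (γ 0 - γ z.2), by fun_prop⟩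
  have e0 : ∀ t, F0 (0, t) = γ t := fun t => by simp [F0]
  have e1 : ∀ t, F0 (1, t) = γ 0 := fun t => by simp [F0]
  have e2 : ∀ s, F0 (s, 0) = γ 0 := fun s => by simp [F0]
  have e3 : ∀ s, F0 (s, 1) = γ 0 := fun s => by simp [F0, hγ]
  obtain ⟨H, h1, h2⟩ := fill γ F0 (by
    rintro ⟨s, t⟩ ((h | h) | (h | h)) <;> simp only at h <;> subst h
    · rw [e0]; exact mem_range_self _
    · rw [e1]; exact mem_range_self _
    · rw [e2]; exact mem_range_self _
    · rw [e3]; exact mem_range_self _)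
  refine ⟨H, h1, fun t => ?_, fun t => ?_, fun s => ?_, fun s => ?_⟩
  · rw [h2 _ (Or.inl (Or.inl rfl)), e0]
  · rw [h2 _ (Or.inl (Or.inr rfl)), e1]
  · rw [h2 _ (Or.inr (Or.inl rfl)), e2]
  · rw [h2 _ (Or.inr (Or.inr rfl)), e3]

end PlanePi1

theorem trivial_pi1_of_iInter_simply_connected
    {ι : Type*} [Nonempty ι] (S : ι → Set (EuclideanSpace ℝ (Fin 2)))
    (hs : ∀ i, SimplyConnectedSpace (S i))
    (x : EuclideanSpace ℝ (Fin 2)) (hx : x ∈ ⋂ i, S i) :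
    ∀ γ : Path (⟨x, hx⟩ : ↥(⋂ i, S i)) (⟨x, hx⟩ : ↥(⋂ i, S i)),
      γ.Homotopic (Path.refl (⟨x, hx⟩ : ↥(⋂ i, S i))) := by
  intro γ
  let e := Complex.orthonormalBasisOneI.repr.symm
  let g : C(unitInterval, ℂ) := ⟨fun t => e (γ t).1, by fun_prop⟩
  obtain ⟨H, h1, h2, h3, h4, h5⟩ := PlanePi1.contract g (by simp [g])
  have hsub : ∀ i, PlanePi1.hull (Set.range g) ⊆ e '' S i := by
    intro i
    have := hs i
    have hmem : ∀ t, (γ t).1 ∈ S i := fun t => Set.mem_iInter.1 (γ t).2 i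
    have h := PlanePi1.hull_subset_range (Z := S i) (fun z => e z.1) (by fun_prop)
      (fun a b hab => Subtype.ext (e.injective hab))
      ⟨fun t => ⟨(γ t).1, hmem t⟩, by fun_prop⟩
    refine h.trans ?_
    rintro _ ⟨z, rfl⟩
    exact ⟨z.1, z.2, rfl⟩
  have hK : ∀ z, e.symm (H z) ∈ ⋂ i, S i := by
    intro z
    refine Set.mem_iInter.2 fun i => ?_
    obtain ⟨w, hw, hwe⟩ := hsub i (h1 z)
    rw [← hwe, e.symm_apply_apply]
    exact hw
  have g0 : e.symm (g 0) = x := by simp [g]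
  refine ⟨{ toFun := fun z => ⟨e.symm (H z), hK z⟩
            continuous_toFun := by fun_prop
            map_zero_left := fun t => ?_
            map_one_left := fun t => ?_
            prop' := fun s t ht => ?_ }⟩
  · refine Subtype.ext ?_
    simp only [h2]
    simp [g]
  · refine Subtype.ext ?_
    simp only [h3, g0]
    rfl
  · rcases ht with rfl | ht
    · refine Subtype.ext ?_
      simp [h4, g0]
    · rw [Set.mem_singleton_iff] at ht
      subst ht
      refine Subtype.ext ?_
      simp [h5, g0]
end
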